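/- Assume the abc-conjecture. Let P ∈ ℤ[T] be a separable polynomial of even degree N ≥ 8 with no root in ℚ, and let a_N be its leading coefficient. Then there exists a constant C > 0, depending only on P, such that for every sufficiently large x, the number of squarefree integers d ∉ {0,1} with |d| ≤ x satisfying all of the following is at least C · x / log x: (i) for every prime p, either there exist t, y ∈ ℚ_p with y² = d·P(t), or d·a_N is a square in ℚ_p; (ii) either there exist t, y ∈ ℝ with y² = d·P(t), or d·a_N > 0; and (iii) there exist no t, y ∈ ℚ with y² = d·P(t), and d·a_N is not a square in ℚ. (That is, the twisted hyperelliptic curve y² = d·P(t) has points over every completion of ℚ but no ℚ-rational point, so it fails the Hasse principle.) -/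

import Mathlib

/-!
Let `d₀` be the signed squarefree part of the leading coefficient `a` of `P`, so that `d₀ a` is a
square. The twists that violate the Hasse principle are taken of the form `d = d₀ ℓ`, with `ℓ` a
large prime such that `ℓ ≡ 1` modulo a fixed highly divisible `Q` and `P` has a root modulo `ℓ`.

*Local points.* At the primes `p` with `8 p ∣ Q`, which comprise all primes of bad reduction and
all small primes, `ℓ` is a square in `ℚ_p`, hence so is `d a`, and the points at infinity are
rational. At `p = ℓ` the root of `P` lifts by Hensel's lemma to a point with `y = 0`. At any other
`p`, the polynomial `d P` takes a nonzero square value modulo `p` (an instance of the Hasse-Weil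
bound, proved by Stepanov's method), and the point lifts. Over `ℝ`, `d a > 0`. On the other hand
`d a` is `ℓ` times a square, so it is not a square in `ℚ`.

*Few twists have a rational point.* Let `F` be the binary form of degree `N` attached to `P`. The
abc-conjecture, applied through a polynomial Belyi map that sends the roots of `P` to `{0, 1}`,
gives `rad F(u, v) ≫ max(|u|, |v|) ^ (N - 5/2)` for coprime `u, v`. A rational point with
`t = u / v` makes `d F(u, v)` a square, whence `rad F(u, v) ^ 2 ≤ |d F(u, v)|` and the height of
`t` is `O(|d| ^ (1/3))` because `N ≥ 8`. As `t` determines `ℓ`, at most `O(x ^ (2/3))` of the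
twists with `|d| ≤ x` have a rational point.

*Many primes `ℓ`.* The conditions on `ℓ` hold for the large primes `ℓ` below a prime ideal of
degree one in the splitting field of `P` and of the `Q`-th cyclotomic polynomial. That there are
`≫ x / log x` of them follows from a Mertens estimate for degree-one primes, obtained by factoring
the product of the norms of the elements of a box of lattice points; this product plays the role
of a factorial.
-/

open Polynomial

/-- The radical of a natural number: the product of its distinct prime factors. -/
def radNat (m : ℕ) : ℕ := ∏ p ∈ m.primeFactors, p

/-- The abc-conjecture. -/
def ABCConjecture : Prop :=
  ∀ ε : ℝ, 0 < ε → ∃ K : ℝ, 0 < K ∧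
    ∀ a b c : ℕ, 0 < a → 0 < b → 0 < c → Nat.Coprime a b → a + b = c →
      (c : ℝ) ≤ K * (radNat (a * b * c) : ℝ) ^ ((1 : ℝ) + ε)

/-- `d` is a squarefree integer with `d ∉ {0,1}`. -/
def SqfInt (d : ℤ) : Prop :=
  d ≠ 0 ∧ d ≠ 1 ∧ ∀ p : ℕ, p.Prime → ¬ ((p : ℤ) ^ 2 ∣ d)

namespace HasseTwist

open UniqueFactorizationMonoid

/-! ### Polynomial Belyi maps -/

/-- A polynomial Belyi map for a set `S ⊆ ℂ`: a nonconstant rational polynomial that sends both its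
critical points and the points of `S` to `0` or `1`. -/
structure IsBelyi (f : ℚ[X]) (S : Set ℂ) : Prop where
  natDegree_pos : 0 < f.natDegree
  aeval_mem : ∀ z ∈ S ∪ (derivative f).rootSet ℂ, aeval z f ∈ ({0, 1} : Set ℂ)

theorem derivative_ne_zero_of_natDegree_pos {R : Type*} [Semiring R] [IsAddTorsionFree R]
    {f : R[X]} (hf : 0 < f.natDegree) : derivative f ≠ 0 :=
  fun h => hf.ne' (derivative_eq_zero.mp h)

theorem IsBelyi.comp {f g : ℚ[X]} {S : Set ℂ} (hg : 0 < g.natDegree)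
    (hf : IsBelyi f ((fun z => aeval z g) '' (S ∪ (derivative g).rootSet ℂ))) :
    IsBelyi (f.comp g) S where
  natDegree_pos := by rw [natDegree_comp]; exact Nat.mul_pos hf.natDegree_pos hg
  aeval_mem := by
    have hg' := derivative_ne_zero_of_natDegree_pos hg
    have hf' := derivative_ne_zero_of_natDegree_pos hf.natDegree_pos
    rintro z (hz | hz) <;> rw [aeval_comp]
    · exact hf.aeval_mem _ (.inl ⟨z, .inl hz, rfl⟩)
    · have hz := aeval_eq_zero_of_mem_rootSet hz
      rw [derivative_comp, map_mul, aeval_comp, mul_eq_zero] at hz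
      rcases hz with hz | hz
      · exact hf.aeval_mem _ (.inl ⟨z, .inr ((mem_rootSet_of_ne hg').mpr hz), rfl⟩)
      · exact hf.aeval_mem _ (.inr ((mem_rootSet_of_ne hf').mpr hz))

theorem isBelyi_C_mul_X_sub_C {S : Set ℂ} {a r : ℚ} (hr : r ≠ 0)
    (hS : ∀ s ∈ S, (r * (s - a) : ℂ) ∈ ({0, 1} : Set ℂ)) : IsBelyi (C r * (X - C a)) S where
  natDegree_pos := by rw [natDegree_C_mul hr, natDegree_X_sub_C]; exact one_pos
  aeval_mem := by
    rintro z (hz | hz)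
    · simpa using hS z hz
    · simp [rootSet] at hz

theorem exists_isBelyi_of_card_le_two {S : Finset ℚ} (hS : S.card ≤ 2) :
    ∃ f, IsBelyi f ((↑) '' (S : Set ℚ)) := by
  rcases S.eq_empty_or_nonempty with rfl | ⟨a, ha⟩
  · exact ⟨_, isBelyi_C_mul_X_sub_C (a := 0) one_ne_zero (by simp)⟩
  by_cases hSa : S ⊆ {a}
  · refine ⟨_, isBelyi_C_mul_X_sub_C (a := a) one_ne_zero ?_⟩
    rintro _ ⟨s, hs, rfl⟩
    simp [Finset.mem_singleton.mp (hSa hs)]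
  · obtain ⟨c, hc, hca⟩ := Finset.not_subset.mp hSa
    rw [Finset.mem_singleton] at hca
    have hS' : {a, c} = S := Finset.eq_of_subset_of_card_le
      (Finset.insert_subset ha (Finset.singleton_subset_iff.mpr hc))
      (by rwa [Finset.card_pair (Ne.symm hca)])
    have hca' : (c - a : ℂ) ≠ 0 := by exact_mod_cast sub_ne_zero.mpr hca
    refine ⟨_, isBelyi_C_mul_X_sub_C (a := a) (inv_ne_zero (sub_ne_zero.mpr hca)) ?_⟩
    rintro _ ⟨s, hs, rfl⟩
    rw [← hS', Finset.mem_coe, Finset.mem_insert, Finset.mem_singleton] at hs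
    rcases hs with rfl | rfl <;> simp [hca']

theorem exists_pos_mul_sub_eq {a b c : ℚ} (hab : a < b) (hbc : b < c) :
    ∃ m n : ℕ, 0 < m ∧ 0 < n ∧ (m : ℚ) * (c - b) = n * (b - a) := by
  set r := (b - a) / (c - b)
  have hr : 0 < r := div_pos (sub_pos.mpr hab) (sub_pos.mpr hbc)
  have hr_num := Rat.num_pos.mpr hr
  obtain ⟨m, hm⟩ := Int.eq_ofNat_of_zero_le hr_num.le
  refine ⟨m, r.den, by omega, r.den_pos, ?_⟩
  have hmr : (m : ℚ) = r * r.den := by rw [Rat.mul_den_eq_num, hm]; simp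
  have hrc : r * (c - b) = b - a := div_mul_cancel₀ _ (sub_pos.mpr hbc).ne'
  linear_combination (c - b) * hmr + (r.den : ℚ) * hrc

theorem eq_of_aeval_derivative_eq_zero {K L : Type*} [Field K] [Field L] [Algebra K L] [CharZero L]
    {a b c : K} {m n : ℕ} (hm : 0 < m) (hn : 0 < n) (h : (m : K) * (c - b) = n * (b - a)) {z : L}
    (hz : aeval z (derivative ((X - C a) ^ m * (X - C c) ^ n)) = 0) :
    z = algebraMap K L a ∨ z = algebraMap K L b ∨ z = algebraMap K L c := by
  obtain ⟨m, rfl⟩ : ∃ m', m = m' + 1 := ⟨m - 1, by omega⟩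
  obtain ⟨n, rfl⟩ : ∃ n', n = n' + 1 := ⟨n - 1, by omega⟩
  have h' := congrArg (algebraMap K L) h
  simp only [map_mul, map_sub, map_natCast] at h'
  push_cast at h'
  have hfactors : (z - algebraMap K L a) ^ m * (z - algebraMap K L c) ^ n *
      ((m + n + 2 : ℕ) * (z - algebraMap K L b)) = 0 := by
    rw [← hz]
    simp only [derivative_mul, derivative_X_sub_C_pow, map_add, map_mul, map_pow, map_sub,
      aeval_X, aeval_C, map_natCast, map_one, Nat.add_sub_cancel, Nat.cast_add,
      Nat.cast_ofNat, Nat.cast_one]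
    linear_combination (z - algebraMap K L a) ^ m * (z - algebraMap K L c) ^ n * h'
  simp only [mul_eq_zero, Nat.cast_eq_zero, Nat.add_eq_zero_iff, OfNat.ofNat_ne_zero, and_false,
    false_or] at hfactors
  rcases hfactors with (h | h) | h
  · exact .inl (sub_eq_zero.mp (eq_zero_of_pow_eq_zero h))
  · exact .inr (.inr (sub_eq_zero.mp (eq_zero_of_pow_eq_zero h)))
  · exact .inr (.inl (sub_eq_zero.mp h))

/-- If `a < b < c` are points of `S`, a polynomial `(X - a) ^ m * (X - c) ^ n` with critical point
`b` identifies `a` with `c`. -/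
theorem exists_card_image_eval_lt {S : Finset ℚ} (hS : 2 < S.card) :
    ∃ g : ℚ[X], 0 < g.natDegree ∧ (S.image g.eval).card < S.card ∧
      (derivative g).rootSet ℂ ⊆ (↑) '' (S : Set ℚ) := by
  obtain ⟨a, b, c, ha, hb, hc, hab, hbc⟩ : ∃ a b c, a ∈ S ∧ b ∈ S ∧ c ∈ S ∧ a < b ∧ b < c := by
    refine ⟨S.orderEmbOfFin rfl ⟨0, by omega⟩, S.orderEmbOfFin rfl ⟨1, by omega⟩,
      S.orderEmbOfFin rfl ⟨2, hS⟩, ?_, ?_, ?_, ?_, ?_⟩ <;> simp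
  obtain ⟨m, n, hm, hn, hmn⟩ := exists_pos_mul_sub_eq hab hbc
  refine ⟨(X - C a) ^ m * (X - C c) ^ n, ?_, ?_, fun z hz => ?_⟩
  · rw [natDegree_mul (pow_ne_zero _ (X_sub_C_ne_zero a)) (pow_ne_zero _ (X_sub_C_ne_zero c)),
      natDegree_pow, natDegree_X_sub_C]
    omega
  · refine lt_of_le_of_ne Finset.card_image_le fun h => (hab.trans hbc).ne ?_
    exact Finset.card_image_iff.mp h ha hc (by simp [hm.ne', hn.ne'])
  · rcases eq_of_aeval_derivative_eq_zero hm hn hmn (aeval_eq_zero_of_mem_rootSet hz) with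
      rfl | rfl | rfl
    exacts [⟨a, ha, rfl⟩, ⟨b, hb, rfl⟩, ⟨c, hc, rfl⟩]

theorem exists_isBelyi_ratCast (S : Finset ℚ) : ∃ f, IsBelyi f ((↑) '' (S : Set ℚ)) := by
  induction hk : S.card using Nat.strong_induction_on generalizing S with
  | _ k ih =>
    subst hk
    rcases le_or_gt S.card 2 with hS | hS
    · exact exists_isBelyi_of_card_le_two hS
    obtain ⟨g, hg, hlt, hcrit⟩ := exists_card_image_eval_lt hS
    obtain ⟨f, hf⟩ := ih _ hlt _ rfl
    refine ⟨f.comp g, IsBelyi.comp hg ?_⟩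
    rw [Set.union_eq_left.mpr hcrit]
    convert hf using 1
    simp only [Finset.coe_image, Set.image_image]
    exact Set.image_congr fun s _ => aeval_algebraMap_apply_eq_algebraMap_eval s g

section Degree

variable (K : Type*) {L : Type*} [Field K] [Field L] [Algebra K L]

/-- The elements of `L` that are algebraic over `K` of degree at most `n`. -/
def degreeLE (L : Type*) [Field L] [Algebra K L] (n : ℕ) : Set L :=
  {z | IsIntegral K z ∧ (minpoly K z).natDegree ≤ n}

variable {K}

theorem degreeLE_mono {m n : ℕ} (h : m ≤ n) : degreeLE K L m ⊆ degreeLE K L n :=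
  fun _ hz => ⟨hz.1, hz.2.trans h⟩

theorem degreeLE_one : degreeLE K L 1 = Set.range (algebraMap K L) := by
  ext z
  refine ⟨fun ⟨hz, hdeg⟩ => minpoly.natDegree_eq_one_iff.mp
    (le_antisymm hdeg (minpoly.natDegree_pos hz)), ?_⟩
  rintro ⟨a, rfl⟩
  exact ⟨isIntegral_algebraMap, (minpoly.natDegree_eq_one_iff.mpr ⟨a, rfl⟩).le⟩

theorem rootSet_subset_degreeLE {p : K[X]} {n : ℕ} (hp : p.natDegree ≤ n) :
    p.rootSet L ⊆ degreeLE K L n := by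
  intro z hz
  have hp0 := ne_zero_of_mem_rootSet hz
  have hz := aeval_eq_zero_of_mem_rootSet hz
  exact ⟨IsAlgebraic.isIntegral ⟨p, hp0, hz⟩,
    (natDegree_le_of_dvd (minpoly.dvd K z hz) hp0).trans hp⟩

theorem aeval_mem_degreeLE {z : L} {n : ℕ} (hz : z ∈ degreeLE K L n) (g : K[X]) :
    aeval z g ∈ degreeLE K L n := by
  obtain ⟨hint, hdeg⟩ := hz
  have hg : aeval z g ∈ Algebra.adjoin K {z} := aeval_mem_adjoin_singleton K z
  have hgint : IsIntegral K (aeval z g) := adjoin_le_integralClosure hint hg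
  refine ⟨hgint, le_trans ?_ hdeg⟩
  have := IntermediateField.adjoin.finiteDimensional hint
  have hle : IntermediateField.adjoin K {aeval z g} ≤ IntermediateField.adjoin K {z} :=
    IntermediateField.adjoin_simple_le_iff.mpr (IntermediateField.algebra_adjoin_le_adjoin _ _ hg)
  rw [← IntermediateField.adjoin.finrank hgint, ← IntermediateField.adjoin.finrank hint]
  exact LinearMap.finrank_le_finrank_of_injective
    (f := (IntermediateField.inclusion hle).toLinearMap)
    (IntermediateField.inclusion hle).injective

end Degree

/-- The minimal polynomial of a point of `S` of top degree `n + 1` sends that point to `0`, while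
its critical points, hence its critical values, have degree at most `n`. -/
theorem exists_ncard_image_diff_degreeLE_lt {n : ℕ} (hn : 1 ≤ n) {S : Set ℂ} (hfin : S.Finite)
    (hS : S ⊆ degreeLE ℚ ℂ (n + 1)) (hSn : ¬ S ⊆ degreeLE ℚ ℂ n) :
    ∃ g : ℚ[X], 0 < g.natDegree ∧
      (fun z => aeval z g) '' (S ∪ (derivative g).rootSet ℂ) ⊆ degreeLE ℚ ℂ (n + 1) ∧
      ((fun z => aeval z g) '' (S ∪ (derivative g).rootSet ℂ) \ degreeLE ℚ ℂ n).ncard <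
        (S \ degreeLE ℚ ℂ n).ncard := by
  obtain ⟨s, hsS, hsn⟩ := Set.not_subset.mp hSn
  obtain ⟨hint, hdeg⟩ := hS hsS
  have hpos := minpoly.natDegree_pos hint
  have hcrit : (derivative (minpoly ℚ s)).rootSet ℂ ⊆ degreeLE ℚ ℂ n :=
    rootSet_subset_degreeLE (by have := natDegree_derivative_lt hpos.ne'; omega)
  refine ⟨minpoly ℚ s, hpos, ?_, ?_⟩
  · rintro _ ⟨z, hz | hz, rfl⟩
    · exact aeval_mem_degreeLE (hS hz) _
    · exact aeval_mem_degreeLE (degreeLE_mono n.le_succ (hcrit hz)) _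
  have hfin' : (S \ degreeLE ℚ ℂ n).Finite := hfin.subset Set.sdiff_subset
  have hsub : (fun z => aeval z (minpoly ℚ s)) '' (S ∪ (derivative (minpoly ℚ s)).rootSet ℂ) \
      degreeLE ℚ ℂ n ⊆ (fun z => aeval z (minpoly ℚ s)) '' ((S \ degreeLE ℚ ℂ n) \ {s}) := by
    rintro _ ⟨⟨z, hz | hz, rfl⟩, hzn⟩
    · refine ⟨z, ⟨⟨hz, fun h => hzn (aeval_mem_degreeLE h _)⟩, ?_⟩, rfl⟩
      rintro rfl
      refine hzn (degreeLE_mono hn (degreeLE_one.ge ⟨0, ?_⟩))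
      exact (map_zero _).trans (minpoly.aeval ℚ z).symm
    · exact absurd (aeval_mem_degreeLE (hcrit hz) _) hzn
  calc _ ≤ ((fun z => aeval z (minpoly ℚ s)) '' ((S \ degreeLE ℚ ℂ n) \ {s})).ncard :=
        Set.ncard_le_ncard hsub (hfin'.sdiff.image _)
    _ ≤ ((S \ degreeLE ℚ ℂ n) \ {s}).ncard := Set.ncard_image_le hfin'.sdiff
    _ < _ := Set.ncard_sdiff_singleton_lt_of_mem ⟨hsS, hsn⟩ hfin'

theorem exists_isBelyi_of_subset_degreeLE {n : ℕ} (hn : 1 ≤ n) {S : Set ℂ} (hfin : S.Finite)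
    (hS : S ⊆ degreeLE ℚ ℂ n) : ∃ f, IsBelyi f S := by
  induction n, hn using Nat.le_induction generalizing S with
  | base =>
    rw [degreeLE_one, Set.subset_range_iff_exists_image_eq] at hS
    obtain ⟨T, rfl⟩ := hS
    obtain ⟨T, rfl⟩ := (hfin.of_finite_image (algebraMap ℚ ℂ).injective.injOn).exists_finset_coe
    exact exists_isBelyi_ratCast T
  | succ n hn ih =>
    induction hk : (S \ degreeLE ℚ ℂ n).ncard using Nat.strong_induction_on generalizing S with
    | _ k ihk =>
      subst hk
      by_cases hSn : S ⊆ degreeLE ℚ ℂ n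
      · exact ih hfin hSn
      obtain ⟨g, hg, hle, hlt⟩ := exists_ncard_image_diff_degreeLE_lt hn hfin hS hSn
      obtain ⟨f, hf⟩ := ihk _ hlt ((hfin.union (rootSet_finite _ ℂ)).image _) hle rfl
      exact ⟨f.comp g, hf.comp hg⟩

theorem exists_isBelyi_rootSet (Q : ℚ[X]) : ∃ f, IsBelyi f (Q.rootSet ℂ) :=
  exists_isBelyi_of_subset_degreeLE (le_max_left 1 Q.natDegree) (rootSet_finite Q ℂ)
    (rootSet_subset_degreeLE (le_max_right _ _))

/-! ### The radical of `f (f - 1)` for a Belyi polynomial `f` -/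

theorem dvd_of_forall_rootMultiplicity_map_le {K : Type*} (L : Type*) [Field K] [Field L]
    [Algebra K L] [IsAlgClosed L] {p q : K[X]} (hp : p ≠ 0)
    (h : ∀ z : L, (p.map (algebraMap K L)).rootMultiplicity z ≤
      (q.map (algebraMap K L)).rootMultiplicity z) : p ∣ q := by
  classical
  rw [← Polynomial.map_dvd_map' (algebraMap K L)]
  refine (IsAlgClosed.splits _).dvd_of_roots_le_roots (map_ne_zero hp) ?_
  exact Multiset.le_iff_count.mpr fun z => by simpa only [count_roots] using h z

theorem natDegree_sub_one {R : Type*} [Ring R] (f : R[X]) : (f - 1).natDegree = f.natDegree :=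
  natDegree_sub_C (a := 1)

theorem mul_sub_one_ne_zero {R : Type*} [CommRing R] [IsDomain R] {f : R[X]}
    (hf : 0 < f.natDegree) : f * (f - 1) ≠ 0 :=
  mul_ne_zero (ne_zero_of_natDegree_gt hf)
    (ne_zero_of_natDegree_gt (hf.trans_eq (natDegree_sub_one f).symm))

theorem IsBelyi.derivative_mul_radical_dvd {f : ℚ[X]} {S : Set ℂ} (hf : IsBelyi f S) :
    derivative f * radical (f * (f - 1)) ∣ f * (f - 1) := by
  set h := f * (f - 1) with hh
  have hh0 : h ≠ 0 := mul_sub_one_ne_zero hf.natDegree_pos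
  have hf' := derivative_ne_zero_of_natDegree_pos hf.natDegree_pos
  have hne : derivative (f.map (algebraMap ℚ ℂ)) * (radical h).map (algebraMap ℚ ℂ) ≠ 0 := by
    rw [derivative_map]
    exact mul_ne_zero (map_ne_zero hf') (map_ne_zero radical_ne_zero)
  have hhφ : h.map (algebraMap ℚ ℂ) = f.map (algebraMap ℚ ℂ) * (f.map (algebraMap ℚ ℂ) - 1) := by
    simp [hh]
  refine dvd_of_forall_rootMultiplicity_map_le ℂ (mul_ne_zero hf' radical_ne_zero) fun z => ?_
  rw [Polynomial.map_mul, ← derivative_map, rootMultiplicity_mul hne]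
  by_cases hz : (h.map (algebraMap ℚ ℂ)).IsRoot z
  · obtain ⟨G, hGh, hG, hGf⟩ : ∃ G, G ∣ h.map (algebraMap ℚ ℂ) ∧ G.IsRoot z ∧
        derivative G = derivative (f.map (algebraMap ℚ ℂ)) := by
      rw [hhφ] at hz ⊢
      rcases root_mul.mp hz with hz | hz
      · exact ⟨_, dvd_mul_right _ _, hz, rfl⟩
      · exact ⟨_, dvd_mul_left _ _, hz, by simp⟩
    have hrad_le : ((radical h).map (algebraMap ℚ ℂ)).rootMultiplicity z ≤ 1 :=
      rootMultiplicity_le_one_of_separable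
        (Separable.map (PerfectField.separable_iff_squarefree.mpr squarefree_radical)) z
    have hGdvd := rootMultiplicity_le_rootMultiplicity_of_dvd (map_ne_zero hh0) hGh z
    have hGpos : 0 < G.rootMultiplicity z :=
      (rootMultiplicity_pos (ne_zero_of_dvd_ne_zero (map_ne_zero hh0) hGh)).mpr hG
    have hGder := derivative_rootMultiplicity_of_root hG
    rw [hGf] at hGder
    omega
  · have hder : ¬ (derivative (f.map (algebraMap ℚ ℂ))).IsRoot z := fun hd => hz <| by
      rw [derivative_map, IsRoot, eval_map_algebraMap] at hd
      have := hf.aeval_mem z (.inr ((mem_rootSet_of_ne hf').mpr hd))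
      rw [IsRoot, eval_map_algebraMap, hh, map_mul, map_sub, map_one, mul_eq_zero, sub_eq_zero]
      exact this
    have hradz : ¬ ((radical h).map (algebraMap ℚ ℂ)).IsRoot z :=
      fun hd => hz (hd.dvd (Polynomial.map_dvd _ radical_dvd_self))
    rw [rootMultiplicity_eq_zero hder, rootMultiplicity_eq_zero hradz]
    exact Nat.zero_le _

/-- The multiplicities of `f (f - 1)` in excess of `1` account for all the roots of `f'`. -/
theorem IsBelyi.natDegree_radical_le {f : ℚ[X]} {S : Set ℂ} (hf : IsBelyi f S) :
    (radical (f * (f - 1))).natDegree ≤ f.natDegree + 1 := by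
  have hh0 := mul_sub_one_ne_zero hf.natDegree_pos
  have hdeg := natDegree_le_of_dvd hf.derivative_mul_radical_dvd hh0
  rw [natDegree_mul (derivative_ne_zero_of_natDegree_pos hf.natDegree_pos) radical_ne_zero,
    natDegree_derivative, natDegree_mul (left_ne_zero_of_mul hh0) (right_ne_zero_of_mul hh0),
    natDegree_sub_one] at hdeg
  omega

theorem IsBelyi.dvd_radical {f P : ℚ[X]} (hP : P.Separable) (hf : IsBelyi f (P.rootSet ℂ)) :
    P ∣ radical (f * (f - 1)) := by
  have hh0 := mul_sub_one_ne_zero hf.natDegree_pos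
  refine (dvd_radical_iff hP.squarefree.isRadical hh0).mpr
    (dvd_of_forall_rootMultiplicity_map_le ℂ hP.ne_zero fun z => ?_)
  by_cases hz : (P.map (algebraMap ℚ ℂ)).IsRoot z
  · refine (rootMultiplicity_le_one_of_separable hP.map z).trans
      ((rootMultiplicity_pos (map_ne_zero hh0)).mpr ?_)
    rw [IsRoot, eval_map_algebraMap] at hz ⊢
    rw [map_mul, map_sub, map_one, mul_eq_zero, sub_eq_zero]
    exact hf.aeval_mem z (.inl ((mem_rootSet_of_ne hP.ne_zero).mpr hz))
  · rw [rootMultiplicity_eq_zero hz]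
    exact Nat.zero_le _

/-- `f` is a Belyi polynomial for the roots of `P`. -/
theorem exists_radical_mul_sub_one_eq_mul {P : ℚ[X]} (hP : P.Separable) :
    ∃ f W : ℚ[X], 0 < f.natDegree ∧ radical (f * (f - 1)) = P * W ∧
      P.natDegree + W.natDegree ≤ f.natDegree + 1 := by
  obtain ⟨f, hf⟩ := exists_isBelyi_rootSet P
  obtain ⟨W, hW⟩ := hf.dvd_radical hP
  have hPW : P * W ≠ 0 := hW ▸ radical_ne_zero
  refine ⟨f, W, hf.natDegree_pos, hW, ?_⟩
  rw [← natDegree_mul (left_ne_zero_of_mul hPW) (right_ne_zero_of_mul hPW), ← hW]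
  exact hf.natDegree_radical_le

/-! ### The abc-conjecture for arbitrary integers -/

theorem radNat_natAbs (z : ℤ) : (radNat z.natAbs : ℤ) = radical z := by
  rw [← Int.radical_natAbs_eq_radical, Nat.radical_eq_prod_primeFactors, radNat]

theorem abc_of_isCoprime (habc : ABCConjecture) {ε : ℝ} (hε : 0 < ε) : ∃ K : ℝ, 0 < K ∧
    ∀ a b c : ℤ, a ≠ 0 → b ≠ 0 → c ≠ 0 → IsCoprime a b → a + b = c →
      ((max |a| |c| : ℤ) : ℝ) ≤ K * ((radical (a * b * c) : ℤ) : ℝ) ^ (1 + ε) := by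
  obtain ⟨K, hK, h⟩ := habc ε hε
  refine ⟨K, hK, fun a b c ha hb hc hab habc' => ?_⟩
  have hac : IsCoprime a c := by
    rw [← habc']; simpa using hab.mul_add_left_right 1
  have hbc : IsCoprime b c := by
    rw [← habc', add_comm]; simpa using hab.symm.mul_add_left_right 1
  have ha' := Int.natAbs_pos.mpr ha
  have hb' := Int.natAbs_pos.mpr hb
  have hc' := Int.natAbs_pos.mpr hc
  obtain ⟨m, hm, hle⟩ : ∃ m : ℕ, max |a| |c| ≤ (m : ℤ) ∧
      (m : ℝ) ≤ K * (radNat (a * b * c).natAbs : ℝ) ^ (1 + ε) := by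
    rw [Int.natAbs_mul, Int.natAbs_mul, Int.abs_eq_natAbs, Int.abs_eq_natAbs]
    obtain e | e | e : a.natAbs + b.natAbs = c.natAbs ∨ a.natAbs + c.natAbs = b.natAbs ∨
        b.natAbs + c.natAbs = a.natAbs := by omega
    · exact ⟨c.natAbs, by omega, h _ _ _ ha' hb' hc' (Int.isCoprime_iff_gcd_eq_one.mp hab) e⟩
    · refine ⟨b.natAbs, by omega, ?_⟩
      rw [mul_right_comm]
      exact h _ _ _ ha' hc' hb' (Int.isCoprime_iff_gcd_eq_one.mp hac) e
    · refine ⟨a.natAbs, by omega, ?_⟩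
      rw [mul_assoc a.natAbs, mul_comm a.natAbs]
      exact h _ _ _ hb' hc' ha' (Int.isCoprime_iff_gcd_eq_one.mp hbc) e
  rw [← radNat_natAbs, Int.cast_natCast]
  exact le_trans (mod_cast hm) hle

theorem abc_int (habc : ABCConjecture) {ε : ℝ} (hε : 0 < ε) : ∃ K : ℝ, 0 < K ∧
    ∀ a b c : ℤ, a ≠ 0 → b ≠ 0 → c ≠ 0 → a + b = c →
      ((max |a| |c| : ℤ) : ℝ) ≤
        Int.gcd a c * (K * ((radical (a * b * c) : ℤ) : ℝ) ^ (1 + ε)) := by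
  obtain ⟨K, hK, h⟩ := abc_of_isCoprime habc hε
  refine ⟨K, hK, fun a b c ha hb hc habc' => ?_⟩
  have hg : 0 < Int.gcd a c := Int.gcd_pos_of_ne_zero_left _ ha
  obtain ⟨x, z, hxz, hx, hz⟩ := Int.exists_gcd_one hg
  set g : ℤ := (Int.gcd a c : ℤ) with hgdef
  have hy : b = (z - x) * g := by linear_combination habc' + hz - hx
  have hrad : radical (x * (z - x) * z) ≤ radical (a * b * c) := by
    refine Int.le_of_dvd (Int.radical_pos _) (radical_dvd_radical ⟨g ^ 3, ?_⟩
      (mul_ne_zero (mul_ne_zero ha hb) hc))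
    rw [hx, hy, hz]; ring
  have hcop : IsCoprime x (z - x) := by
    simpa [sub_eq_add_neg] using (Int.isCoprime_iff_gcd_eq_one.mpr hxz).add_mul_left_right (-1)
  have hmax : max |a| |c| = g * max |x| |z| := by
    rw [hx, hz, abs_mul, abs_mul, ← max_mul_of_nonneg _ _ (abs_nonneg g), mul_comm,
      abs_of_nonneg (Int.natCast_nonneg _)]
  rw [hmax, Int.cast_mul, hgdef, Int.cast_natCast]
  have := h x (z - x) z (left_ne_zero_of_mul (hx ▸ ha)) (left_ne_zero_of_mul (hy ▸ hb))
    (left_ne_zero_of_mul (hz ▸ hc)) hcop (by ring)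
  gcongr
  refine this.trans ?_
  have := Int.radical_pos (x * (z - x) * z)
  gcongr

/-! ### Binary forms -/

/-- The value at `(u, v)` of the binary form `v ^ deg p * p (u / v)` attached to `p`. -/
noncomputable def homEval (p : ℤ[X]) (u v : ℤ) : ℤ := (p.scaleRoots v).eval u

theorem homEval_eq_sum (p : ℤ[X]) (u v : ℤ) : homEval p u v =
    ∑ i ∈ Finset.range (p.natDegree + 1), p.coeff i * v ^ (p.natDegree - i) * u ^ i := by
  simp only [homEval, eval_eq_sum_range, natDegree_scaleRoots, coeff_scaleRoots]

theorem homEval_C (a u v : ℤ) : homEval (C a) u v = a := by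
  rw [homEval, scaleRoots_C, eval_C]

theorem homEval_mul (p q : ℤ[X]) (u v : ℤ) :
    homEval (p * q) u v = homEval p u v * homEval q u v := by
  rw [homEval, mul_scaleRoots_of_noZeroDivisors, eval_mul, homEval, homEval]

theorem homEval_pow (p : ℤ[X]) (n : ℕ) (u v : ℤ) : homEval (p ^ n) u v = homEval p u v ^ n := by
  rw [homEval, pow_scaleRoots_of_isReduced, eval_pow, homEval]

theorem homEval_sub_C (p : ℤ[X]) (a u v : ℤ) :
    homEval (p - C a) u v = homEval p u v - a * v ^ p.natDegree := by
  simp only [homEval_eq_sum, natDegree_sub_C, Finset.sum_range_succ' _ p.natDegree, coeff_sub,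
    coeff_C_succ, coeff_C_zero, sub_zero, pow_zero, Nat.sub_zero]
  ring

theorem homEval_num_den (p : ℤ[X]) (t : ℚ) :
    (homEval p t.num t.den : ℚ) = (t.den : ℚ) ^ p.natDegree * aeval t p := by
  have h := scaleRoots_eval₂_mul (p := p) (Int.castRingHom ℚ) t (t.den : ℤ)
  rw [eq_intCast, Int.cast_natCast, Rat.den_mul_eq_num, ← eq_intCast (Int.castRingHom ℚ) t.num,
    eval₂_at_apply] at h
  exact h

/-- The sum of the absolute values of the coefficients, which bounds `homEval p` on
`[-1, 1] × [-1, 1]`. -/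
def coeffSum (p : ℤ[X]) : ℤ := ∑ i ∈ Finset.range (p.natDegree + 1), |p.coeff i|

theorem coeffSum_pos {p : ℤ[X]} (hp : p ≠ 0) : 0 < coeffSum p :=
  (abs_pos.mpr (leadingCoeff_ne_zero.mpr hp)).trans_le <|
    Finset.single_le_sum (f := fun i => |p.coeff i|) (fun _ _ => abs_nonneg _)
      (Finset.self_mem_range_succ _)

theorem abs_homEval_le (p : ℤ[X]) (u v : ℤ) :
    |homEval p u v| ≤ coeffSum p * (max |u| |v|) ^ p.natDegree := by
  rw [homEval_eq_sum, coeffSum, Finset.sum_mul]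
  refine (Finset.abs_sum_le_sum_abs _ _).trans (Finset.sum_le_sum fun i hi => ?_)
  rw [abs_mul, abs_mul, abs_pow, abs_pow, mul_assoc,
    ← pow_sub_mul_pow _ (Finset.mem_range_succ_iff.mp hi)]
  gcongr <;> simp

theorem exists_homEval_eq_leadingCoeff_mul_add (p : ℤ[X]) (u v : ℤ) : ∃ w : ℤ,
    homEval p u v = p.leadingCoeff * u ^ p.natDegree + v * w ∧
    |w| ≤ coeffSum p * (max |u| |v|) ^ (p.natDegree - 1) := by
  refine ⟨∑ i ∈ Finset.range p.natDegree, p.coeff i * (v ^ (p.natDegree - 1 - i) * u ^ i), ?_, ?_⟩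
  · rw [homEval_eq_sum, Finset.sum_range_succ, add_comm, Finset.mul_sum, Nat.sub_self, pow_zero,
      mul_one, leadingCoeff]
    congr 1
    refine Finset.sum_congr rfl fun i hi => ?_
    rw [show p.natDegree - i = (p.natDegree - 1 - i) + 1 by grind, pow_succ]
    ring
  · rw [coeffSum, Finset.sum_mul, Finset.sum_range_succ]
    refine (Finset.abs_sum_le_sum_abs _ _).trans (le_add_of_le_of_nonneg
      (Finset.sum_le_sum fun i hi => ?_) (by positivity))
    rw [abs_mul, abs_mul, abs_pow, abs_pow,
      ← pow_sub_mul_pow _ (Nat.le_sub_one_of_lt (Finset.mem_range.mp hi))]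
    gcongr <;> simp

theorem max_pow_le_two_mul_abs_homEval {p : ℤ[X]} (hp : 0 < p.natDegree) {u v : ℤ}
    (h : 2 * coeffSum p * |v| < max |u| |v|) :
    (max |u| |v|) ^ p.natDegree ≤ 2 * |homEval p u v| := by
  have hp0 : p ≠ 0 := ne_zero_of_natDegree_gt hp
  obtain ⟨w, hw, hwb⟩ := exists_homEval_eq_leadingCoeff_mul_add p u v
  set H := max |u| |v| with hH
  have hu : H = |u| := by
    refine max_eq_left (le_of_not_gt fun hlt => ?_)
    rw [hH, max_eq_right hlt.le] at h
    nlinarith [coeffSum_pos hp0, abs_nonneg v]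
  have hlead : H ^ p.natDegree ≤ |p.leadingCoeff * u ^ p.natDegree| := by
    rw [abs_mul, abs_pow, ← hu]
    exact le_mul_of_one_le_left (by positivity) (Int.one_le_abs (leadingCoeff_ne_zero.mpr hp0))
  have hrest : 2 * |v * w| ≤ H ^ p.natDegree := by
    rw [abs_mul]
    calc 2 * (|v| * |w|) ≤ 2 * (|v| * (coeffSum p * H ^ (p.natDegree - 1))) := by gcongr
      _ = 2 * coeffSum p * |v| * H ^ (p.natDegree - 1) := by ring
      _ ≤ H * H ^ (p.natDegree - 1) := by gcongr
      _ = H ^ p.natDegree := mul_pow_sub_one hp.ne' H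
  have htri : |p.leadingCoeff * u ^ p.natDegree| ≤ |homEval p u v| + |v * w| := by
    rw [hw]
    simpa only [add_sub_cancel_right] using
      abs_sub (p.leadingCoeff * u ^ p.natDegree + v * w) (v * w)
  linarith

theorem max_pow_le_max_abs_homEval {p : ℤ[X]} (hp : 0 < p.natDegree) (u v : ℤ) :
    (max |u| |v|) ^ p.natDegree ≤
      (2 * coeffSum p) ^ p.natDegree * max |homEval p u v| (|v| ^ p.natDegree) := by
  have hM := coeffSum_pos (ne_zero_of_natDegree_gt hp)
  rcases le_or_gt (max |u| |v|) (2 * coeffSum p * |v|) with h | h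
  · calc (max |u| |v|) ^ p.natDegree ≤ (2 * coeffSum p * |v|) ^ p.natDegree := by gcongr
      _ = (2 * coeffSum p) ^ p.natDegree * |v| ^ p.natDegree := mul_pow _ _ _
      _ ≤ _ := by gcongr; exact le_max_right _ _
  · calc _ ≤ 2 * |homEval p u v| := max_pow_le_two_mul_abs_homEval hp h
      _ ≤ (2 * coeffSum p) ^ p.natDegree * |homEval p u v| := by
        gcongr
        exact (by omega : 2 ≤ 2 * coeffSum p).trans (le_self_pow₀ (by omega) hp.ne')
      _ ≤ _ := by gcongr; exact le_max_left _ _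

theorem exists_max_le_of_homEval_eq_zero {p : ℤ[X]} (hp : p ≠ 0) : ∃ B : ℤ, 1 ≤ B ∧
    ∀ u v : ℤ, v ≠ 0 → IsCoprime u v → homEval p u v = 0 → max |u| |v| ≤ B := by
  have hM := coeffSum_pos hp
  have hl := Int.one_le_abs (leadingCoeff_ne_zero.mpr hp)
  refine ⟨2 * coeffSum p * |p.leadingCoeff|, by nlinarith, fun u v hv huv h0 => ?_⟩
  have hdeg : 0 < p.natDegree := by
    refine Nat.pos_of_ne_zero fun hd => hp ?_
    rw [eq_C_of_natDegree_eq_zero hd] at h0 ⊢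
    rw [← homEval_C (p.coeff 0) u v, h0, C_0]
  have hvl : |v| ≤ |p.leadingCoeff| := by
    obtain ⟨w, hw, -⟩ := exists_homEval_eq_leadingCoeff_mul_add p u v
    refine Int.le_of_dvd (by omega) ((abs_dvd_abs _ _).mpr ?_)
    exact (huv.pow_left (m := p.natDegree)).symm.dvd_of_dvd_mul_right
      ⟨-w, by linear_combination h0 - hw⟩
  by_contra! hlt
  have hpow := max_pow_le_two_mul_abs_homEval (u := u) (v := v) hdeg
    (lt_of_le_of_lt (by gcongr) hlt)
  rw [h0, abs_zero, mul_zero] at hpow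
  exact absurd hpow (not_le.mpr (pow_pos ((abs_pos.mpr hv).trans_le (le_max_right _ _)) _))

theorem dvd_mul_leadingCoeff_pow_of_dvd_homEval {p : ℤ[X]} {u v g c : ℤ}
    (huv : IsCoprime u v) (h1 : g ∣ homEval p u v) (h2 : g ∣ c * v ^ p.natDegree) :
    g ∣ c * p.leadingCoeff ^ p.natDegree := by
  obtain ⟨w, hw, -⟩ := exists_homEval_eq_leadingCoeff_mul_add p u v
  obtain ⟨r, s, hrs⟩ := huv.pow_left (m := p.natDegree)
  set l := p.leadingCoeff
  set D := p.natDegree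
  set z := l * s - r * w
  have hlz : l - v * z = r * homEval p u v := by
    rw [hw]; linear_combination -l * hrs
  have hpow : g ∣ l ^ D - (v * z) ^ D :=
    (hlz ▸ h1.mul_left r : g ∣ l - v * z).trans (sub_dvd_pow_sub_pow _ _ _)
  have hvz : g ∣ c * (v * z) ^ D := by
    rw [mul_pow, ← mul_assoc]; exact h2.mul_right _
  simpa only [mul_sub, sub_add_cancel] using dvd_add (hpow.mul_left c) hvz

/-! ### Radicals of values of binary forms -/

theorem exists_map_eq_C_mul (f : ℚ[X]) : ∃ (c : ℤ) (g : ℤ[X]), c ≠ 0 ∧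
    g.map (Int.castRingHom ℚ) = C (c : ℚ) * f := by
  obtain ⟨c, hc, h⟩ := IsLocalization.integerNormalization_spec (nonZeroDivisors ℤ) f
  refine ⟨c, IsLocalization.integerNormalization (nonZeroDivisors ℤ) f,
    nonZeroDivisors.ne_zero hc, ?_⟩
  rw [← eq_intCast (algebraMap ℤ ℚ), ← smul_eq_C_mul, algebraMap_smul]
  exact h

/-- The polynomial of `exists_radical_mul_sub_one_eq_mul`, with denominators cleared. -/
theorem exists_int_mul_sub_C_dvd_pow {P : ℤ[X]} (hP : (P.map (Int.castRingHom ℚ)).Separable) :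
    ∃ (f W : ℤ[X]) (a b c : ℤ) (k : ℕ), 0 < f.natDegree ∧ a ≠ 0 ∧ b ≠ 0 ∧ c ≠ 0 ∧
      f * (f - C a) ∣ C b * (P * W) ^ k ∧ P * W ∣ C c * (f * (f - C a)) ∧
      P.natDegree + W.natDegree ≤ f.natDegree + 1 := by
  obtain ⟨f, W, hf, hPW, hdeg⟩ := exists_radical_mul_sub_one_eq_mul hP
  obtain ⟨k, S, hS⟩ := exists_dvd_radical_self_pow (mul_sub_one_ne_zero hf)
  obtain ⟨V, hV⟩ : P.map (Int.castRingHom ℚ) * W ∣ f * (f - 1) := hPW ▸ radical_dvd_self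
  rw [hPW] at hS
  obtain ⟨a, f₁, ha, hf₁⟩ := exists_map_eq_C_mul f
  obtain ⟨e, W₁, he, hW₁⟩ := exists_map_eq_C_mul W
  obtain ⟨s, S₁, hs, hS₁⟩ := exists_map_eq_C_mul S
  obtain ⟨r, V₁, hr, hV₁⟩ := exists_map_eq_C_mul V
  have hinj : Function.Injective (Int.castRingHom ℚ) := Int.cast_injective
  have hdeg_eq {c : ℤ} {p : ℚ[X]} {q : ℤ[X]} (hc : c ≠ 0)
      (h : q.map (Int.castRingHom ℚ) = C (c : ℚ) * p) : q.natDegree = p.natDegree := by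
    rw [← natDegree_map_eq_of_injective hinj, h, natDegree_C_mul (mod_cast hc)]
  have hC (z : ℤ) : (C z).map (Int.castRingHom ℚ) = C (z : ℚ) := map_C _
  refine ⟨f₁, W₁, a, a ^ 2 * s, e * r, k, by rwa [hdeg_eq ha hf₁], ha,
    mul_ne_zero (pow_ne_zero 2 ha) hs, mul_ne_zero he hr, ⟨C (e ^ k) * S₁, ?_⟩,
    ⟨C (a ^ 2) * V₁, ?_⟩, ?_⟩
  · apply map_injective _ hinj
    simp only [Polynomial.map_mul, Polynomial.map_pow, Polynomial.map_sub, hC, hf₁, hW₁, hS₁, C_mul,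
      C_pow, mul_pow]
    rw [mul_pow] at hS
    linear_combination C (a : ℚ) ^ 2 * C (s : ℚ) * C (e : ℚ) ^ k * hS
  · apply map_injective _ hinj
    simp only [Polynomial.map_mul, Polynomial.map_pow, Polynomial.map_sub, hC, hf₁, hW₁, hV₁, C_mul,
      C_pow]
    linear_combination C (a : ℚ) ^ 2 * C (e : ℚ) * C (r : ℚ) * hV
  · rwa [hdeg_eq ha hf₁, hdeg_eq he hW₁, ← natDegree_map_eq_of_injective hinj P]

/-- The radical of the product of the terms of `f(u, v) + (a * v ^ D - f(u, v)) = a * v ^ D`. -/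
theorem radical_homEval_dvd {P f W : ℤ[X]} {a b u v : ℤ} {k : ℕ} (hb : b ≠ 0)
    (hdvd : f * (f - C a) ∣ C b * (P * W) ^ k)
    (hP : homEval P u v ≠ 0) (hW : homEval W u v ≠ 0) :
    radical (homEval f u v * (a * v ^ f.natDegree - homEval f u v) * (a * v ^ f.natDegree)) ∣
      radical (homEval P u v) * (a * b * (v * homEval W u v)) := by
  obtain ⟨S, hS⟩ := hdvd
  have hAB : homEval f u v * (a * v ^ f.natDegree - homEval f u v) ∣
      b * (homEval P u v * homEval W u v) ^ k := by
    refine ⟨-homEval S u v, ?_⟩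
    have := congrArg (homEval · u v) hS
    simp only [homEval_mul, homEval_pow, homEval_C, homEval_sub_C] at this
    linear_combination this
  have hrad : radical (homEval f u v * (a * v ^ f.natDegree - homEval f u v)) ∣
      b * (radical (homEval P u v) * homEval W u v) := calc
    _ ∣ radical (b * (homEval P u v * homEval W u v) ^ k) :=
      radical_dvd_radical hAB (mul_ne_zero hb (pow_ne_zero k (mul_ne_zero hP hW)))
    _ ∣ b * radical (homEval P u v * homEval W u v) :=
      radical_mul_dvd.trans (mul_dvd_mul radical_dvd_self radical_pow_dvd)
    _ ∣ _ := mul_dvd_mul_left b (radical_mul_dvd.trans (mul_dvd_mul_left _ radical_dvd_self))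
  have hC : radical (a * v ^ f.natDegree) ∣ a * v :=
    radical_mul_dvd.trans (mul_dvd_mul radical_dvd_self (radical_pow_dvd.trans radical_dvd_self))
  calc _ ∣ b * (radical (homEval P u v) * homEval W u v) * (a * v) :=
        radical_mul_dvd.trans (mul_dvd_mul hrad hC)
    _ = _ := by ring

theorem exists_max_pow_le_mul_radical_rpow (habc : ABCConjecture) {f : ℤ[X]} {a : ℤ} {ε : ℝ}
    (hf : 0 < f.natDegree) (ha : a ≠ 0) (hε : 0 < ε) : ∃ K : ℝ, 0 < K ∧
    ∀ u v : ℤ, v ≠ 0 → IsCoprime u v → homEval (f * (f - C a)) u v ≠ 0 →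
      ((max |u| |v| : ℤ) : ℝ) ^ f.natDegree ≤ K * ((radical (homEval f u v *
        (a * v ^ f.natDegree - homEval f u v) * (a * v ^ f.natDegree)) : ℤ) : ℝ) ^ (1 + ε) := by
  obtain ⟨K, hK, h⟩ := abc_int habc hε
  set D := f.natDegree
  set G : ℤ := |a * f.leadingCoeff ^ D|
  have hG0 : 0 < G := abs_pos.mpr (mul_ne_zero ha (pow_ne_zero _
    (leadingCoeff_ne_zero.mpr (ne_zero_of_natDegree_gt hf))))
  have hM := coeffSum_pos (ne_zero_of_natDegree_gt hf)
  refine ⟨((2 * coeffSum f) ^ D : ℤ) * (G * K), by positivity, fun u v hv huv h0 => ?_⟩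
  set A := homEval f u v with hA
  set V := a * v ^ D with hV
  rw [homEval_mul, homEval_sub_C, ← hA, ← hV] at h0
  have hV0 : V ≠ 0 := mul_ne_zero ha (pow_ne_zero _ hv)
  have hR := Int.radical_pos (A * (V - A) * V)
  have hVA : V - A ≠ 0 := fun hz => right_ne_zero_of_mul h0 (by linear_combination -hz)
  have hgcd : (Int.gcd A V : ℤ) ≤ G := Int.le_of_dvd hG0 ((dvd_abs _ _).mpr
    (dvd_mul_leadingCoeff_pow_of_dvd_homEval huv (Int.gcd_dvd_left _ _) (Int.gcd_dvd_right _ _)))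
  have hmax : (max |u| |v|) ^ D ≤ (2 * coeffSum f) ^ D * max |A| |V| := by
    refine (max_pow_le_max_abs_homEval hf u v).trans ?_
    gcongr
    rw [hV, abs_mul, abs_pow]
    exact le_mul_of_one_le_left (by positivity) (Int.one_le_abs ha)
  calc ((max |u| |v| : ℤ) : ℝ) ^ D ≤ ((2 * coeffSum f) ^ D : ℤ) * ((max |A| |V| : ℤ) : ℝ) :=
        mod_cast hmax
    _ ≤ ((2 * coeffSum f) ^ D : ℤ) * (Int.gcd A V *
          (K * ((radical (A * (V - A) * V) : ℤ) : ℝ) ^ (1 + ε))) := by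
      gcongr
      exact h A (V - A) V (left_ne_zero_of_mul h0) hVA hV0 (by ring)
    _ ≤ ((2 * coeffSum f) ^ D : ℤ) * (G *
          (K * ((radical (A * (V - A) * V) : ℤ) : ℝ) ^ (1 + ε))) := by
      gcongr
      exact_mod_cast hgcd
    _ = _ := by ring

/-- The exponents in the application of abc with `ε = 1 / (2 * D)`: as `D / (1 + ε) ≥ D - 1 / 2`,
the degree of the form is only diminished by `1 / 2` on top of the loss in `N + m ≤ D + 2`. -/
theorem inv_mul_rpow_le_of_pow_le {H R K₁ K₂ : ℝ} {D m N : ℕ} (hH : 1 ≤ H) (hR : 0 < R)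
    (hK₁ : 0 < K₁) (hK₂ : 0 < K₂) (hD : 0 < D) (hm : N + m ≤ D + 2)
    (h : H ^ D ≤ K₁ * (R * (K₂ * H ^ m)) ^ (1 + 1 / (2 * (D : ℝ)))) :
    (K₁ ^ (1 + 1 / (2 * (D : ℝ)))⁻¹ * K₂)⁻¹ * H ^ ((N : ℝ) - 5 / 2) ≤ R := by
  have : (1 : ℝ) ≤ D := by exact_mod_cast hD
  have hH0 : 0 < H := by linarith
  set θ : ℝ := 1 + 1 / (2 * (D : ℝ)) with hθ
  have hθ0 : 0 < θ := by positivity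
  rw [inv_mul_le_iff₀ (by positivity)]
  refine le_of_mul_le_mul_right ?_ (pow_pos hH0 m)
  calc H ^ ((N : ℝ) - 5 / 2) * H ^ m ≤ (H ^ D) ^ θ⁻¹ := by
        rw [← Real.rpow_natCast H m, ← Real.rpow_natCast H D, ← Real.rpow_add hH0,
          ← Real.rpow_mul hH0.le]
        apply Real.rpow_le_rpow_of_exponent_le hH
        have hm' : (N : ℝ) + m ≤ D + 2 := by exact_mod_cast hm
        have : (D : ℝ) - 1 / 2 ≤ D * θ⁻¹ := by
          rw [← div_eq_mul_inv, le_div_iff₀ hθ0, hθ]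
          field_simp
          nlinarith
        linarith
    _ ≤ (K₁ * (R * (K₂ * H ^ m)) ^ θ) ^ θ⁻¹ := by gcongr
    _ = K₁ ^ θ⁻¹ * K₂ * R * H ^ m := by
      rw [Real.mul_rpow hK₁.le (by positivity), Real.rpow_rpow_inv (by positivity) hθ0.ne']
      ring

theorem radical_homEval_le {P f W : ℤ[X]} {a b u v : ℤ} {k : ℕ} (ha : a ≠ 0) (hb : b ≠ 0)
    (hv : v ≠ 0) (hdvd : f * (f - C a) ∣ C b * (P * W) ^ k)
    (hP : homEval P u v ≠ 0) (hW : homEval W u v ≠ 0) :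
    radical (homEval f u v * (a * v ^ f.natDegree - homEval f u v) * (a * v ^ f.natDegree)) ≤
      radical (homEval P u v) * (|a * b| * coeffSum W * (max |u| |v|) ^ (W.natDegree + 1)) := by
  have hR := Int.radical_pos (homEval P u v)
  have hcof : |a * b * (v * homEval W u v)| ≤
      |a * b| * coeffSum W * (max |u| |v|) ^ (W.natDegree + 1) := by
    rw [abs_mul, abs_mul v]
    calc _ ≤ |a * b| * (max |u| |v| * (coeffSum W * (max |u| |v|) ^ W.natDegree)) := by
          gcongr
          · exact le_max_right _ _
          · exact abs_homEval_le W u v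
      _ = _ := by ring
  refine (Int.le_of_dvd (by positivity)
    ((dvd_abs _ _).mpr (radical_homEval_dvd hb hdvd hP hW))).trans ?_
  rw [abs_mul, abs_of_pos hR]
  gcongr

theorem exists_mul_rpow_le_radical_homEval_of_ne_zero (habc : ABCConjecture) {P f W : ℤ[X]}
    {a b c : ℤ} {k : ℕ} (hf : 0 < f.natDegree) (ha : a ≠ 0) (hb : b ≠ 0) (hc : c ≠ 0)
    (hpow : f * (f - C a) ∣ C b * (P * W) ^ k) (hPW : P * W ∣ C c * (f * (f - C a)))
    (hdeg : P.natDegree + W.natDegree ≤ f.natDegree + 1) : ∃ K : ℝ, 0 < K ∧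
    ∀ u v : ℤ, v ≠ 0 → IsCoprime u v → homEval (f * (f - C a)) u v ≠ 0 →
      K * ((max |u| |v| : ℤ) : ℝ) ^ ((P.natDegree : ℝ) - 5 / 2) ≤
        (radical (homEval P u v) : ℤ) := by
  obtain ⟨V, hV⟩ := hPW
  have hW : W ≠ 0 := by
    rintro rfl
    rw [mul_zero, zero_mul, mul_eq_zero, C_eq_zero, mul_eq_zero] at hV
    obtain h | rfl | h := hV
    · exact hc h
    · exact hf.ne' natDegree_zero
    · exact hf.ne' (sub_eq_zero.mp h ▸ natDegree_C a)
  have hWsum := coeffSum_pos hW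
  obtain ⟨K₁, hK₁, h₁⟩ := exists_max_pow_le_mul_radical_rpow habc hf ha
    (ε := 1 / (2 * (f.natDegree : ℝ))) (by positivity)
  have hK₂ : 0 < ((|a * b| * coeffSum W : ℤ) : ℝ) := by
    have := abs_pos.mpr (mul_ne_zero ha hb)
    positivity
  refine ⟨_, by positivity, fun u v hv huv h0 => inv_mul_rpow_le_of_pow_le (m := W.natDegree + 1)
    (mod_cast (Int.one_le_abs hv).trans (le_max_right _ _)) (mod_cast Int.radical_pos _)
    hK₁ hK₂ hf (by omega) ((h₁ u v hv huv h0).trans ?_)⟩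
  have hPW0 : homEval P u v * homEval W u v ≠ 0 := by
    have := congrArg (homEval · u v) hV
    simp only [homEval_mul, homEval_C] at this h0
    exact left_ne_zero_of_mul (this ▸ mul_ne_zero hc h0)
  have hrad := radical_homEval_le ha hb hv hpow
    (left_ne_zero_of_mul hPW0) (right_ne_zero_of_mul hPW0)
  have hpos := Int.radical_pos (homEval f u v * (a * v ^ f.natDegree - homEval f u v) *
      (a * v ^ f.natDegree))
  gcongr
  exact_mod_cast hrad

/-- Apply abc to `f(u, v) + (a * v ^ D - f(u, v)) = a * v ^ D`, where `f / a` is a Belyi polynomial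
of degree `D` for the roots of `P`. -/
theorem exists_mul_rpow_le_radical_homEval (habc : ABCConjecture) {P : ℤ[X]}
    (hP : (P.map (Int.castRingHom ℚ)).Separable) : ∃ c : ℝ, 0 < c ∧
    ∀ u v : ℤ, v ≠ 0 → IsCoprime u v →
      c * ((max |u| |v| : ℤ) : ℝ) ^ ((P.natDegree : ℝ) - 5 / 2) ≤
        (radical (homEval P u v) : ℤ) := by
  obtain ⟨f, W, a, b, c, k, hf, ha, hb, hc, hpow, hPW, hdeg⟩ := exists_int_mul_sub_C_dvd_pow hP
  obtain ⟨K, hK, h⟩ :=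
    exists_mul_rpow_le_radical_homEval_of_ne_zero habc hf ha hb hc hpow hPW hdeg
  have hne : f * (f - C a) ≠ 0 := mul_ne_zero (ne_zero_of_natDegree_gt hf)
    (ne_zero_of_natDegree_gt (hf.trans_eq natDegree_sub_C.symm))
  obtain ⟨B, hB, hle⟩ := exists_max_le_of_homEval_eq_zero hne
  have : (1 : ℝ) ≤ B := mod_cast hB
  set e : ℝ := (P.natDegree : ℝ) - 5 / 2
  refine ⟨min K ((B : ℝ) ^ |e|)⁻¹, by positivity, fun u v hv huv => ?_⟩
  have hH : (1 : ℝ) ≤ ((max |u| |v| : ℤ) : ℝ) :=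
    mod_cast (Int.one_le_abs hv).trans (le_max_right _ _)
  by_cases h0 : homEval (f * (f - C a)) u v = 0
  · calc _ ≤ ((B : ℝ) ^ |e|)⁻¹ * (B : ℝ) ^ |e| := by
          gcongr
          · exact min_le_right _ _
          · refine (Real.rpow_le_rpow_of_exponent_le hH (le_abs_self e)).trans ?_
            gcongr
            exact_mod_cast hle u v hv huv h0
      _ = 1 := inv_mul_cancel₀ (by positivity)
      _ ≤ _ := mod_cast Int.radical_pos _
  · refine le_trans ?_ (h u v hv huv h0)
    gcongr
    exact min_le_left _ _

theorem isSquare_mul_homEval {P : ℤ[X]} (hP : Even P.natDegree) {d : ℤ} {t y : ℚ}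
    (h : y ^ 2 = d * aeval t P) : IsSquare (d * homEval P t.num t.den) := by
  obtain ⟨m, hm⟩ := hP
  rw [← Rat.isSquare_intCast_iff]
  refine ⟨y * t.den ^ m, ?_⟩
  push_cast
  rw [homEval_num_den, hm, mul_left_comm, ← h]
  ring

theorem radical_sq_le_abs_of_isSquare_mul {d F : ℤ} (h0 : d * F ≠ 0) (h : IsSquare (d * F)) :
    radical F ^ 2 ≤ |d * F| := by
  obtain ⟨w, hw⟩ := h
  have hdvd : radical F ∣ w := by
    refine (radical_dvd_radical (Dvd.intro_left d rfl) h0).trans ?_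
    rw [hw, ← sq, radical_pow _ two_ne_zero]
    exact radical_dvd_self
  rw [hw, ← sq]
  exact Int.le_of_dvd (abs_pos.mpr (by rwa [sq, ← hw]))
    ((dvd_abs _ _).mpr (pow_dvd_pow_of_dvd hdvd 2))

theorem pow_le_mul_of_mul_rpow_sq_le {H c B : ℝ} {N : ℕ} (hH : 1 ≤ H) (hc : 0 < c) (hN : 8 ≤ N)
    (h : (c * H ^ ((N : ℝ) - 5 / 2)) ^ 2 ≤ B * H ^ N) : H ^ 3 ≤ B / c ^ 2 := by
  have hH0 : 0 < H := by linarith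
  have hexp : (H ^ ((N : ℝ) - 5 / 2)) ^ 2 = H ^ (N - 5) * H ^ N := by
    rw [← pow_add, ← Real.rpow_natCast, ← Real.rpow_mul hH0.le, ← Real.rpow_natCast]
    push_cast [Nat.cast_sub (by omega : 5 ≤ N)]
    ring_nf
  rw [mul_pow, hexp, ← mul_assoc] at h
  rw [le_div_iff₀' (by positivity)]
  calc c ^ 2 * H ^ 3 ≤ c ^ 2 * H ^ (N - 5) := by
        gcongr
        omega
    _ ≤ B := le_of_mul_le_mul_right h (by positivity)

/-- With `t = u / v` and `F` the form of `P`, the radical of `F(u, v)` is at most `(d F(u, v)) ^ ½`,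
so that abc yields `H ^ (2 N - 5) ≪ |d| H ^ N` for the height `H` of `t`. -/
theorem exists_height_pow_le (habc : ABCConjecture) {P : ℤ[X]}
    (hP : (P.map (Int.castRingHom ℚ)).Separable) (hN : 8 ≤ P.natDegree)
    (heven : Even P.natDegree) : ∃ K : ℝ, 0 < K ∧ ∀ (d : ℤ) (t y : ℚ), d ≠ 0 → aeval t P ≠ 0 →
      y ^ 2 = d * aeval t P → ((max |t.num| |(t.den : ℤ)| : ℤ) : ℝ) ^ 3 ≤ K * |(d : ℝ)| := by
  obtain ⟨c, hc, hrad⟩ := exists_mul_rpow_le_radical_homEval habc hP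
  have hM := coeffSum_pos (ne_zero_of_natDegree_gt hN)
  refine ⟨coeffSum P / c ^ 2, by positivity, fun d t y hd ht hy => ?_⟩
  have hden : (t.den : ℤ) ≠ 0 := mod_cast t.den_ne_zero
  have hF : homEval P t.num t.den ≠ 0 := by
    have : (homEval P t.num t.den : ℚ) ≠ 0 := by
      rw [homEval_num_den]
      exact mul_ne_zero (pow_ne_zero _ (mod_cast hden)) ht
    exact_mod_cast this
  rw [div_mul_eq_mul_div]
  have hH : 1 ≤ max |t.num| |(t.den : ℤ)| := (Int.one_le_abs hden).trans (le_max_right _ _)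
  refine pow_le_mul_of_mul_rpow_sq_le (by exact_mod_cast hH) hc hN ?_
  calc _ ≤ ((radical (homEval P t.num t.den) : ℤ) : ℝ) ^ 2 := by
        gcongr
        exact hrad _ _ hden (Int.isCoprime_iff_gcd_eq_one.mpr t.reduced)
    _ ≤ |(d : ℝ)| * |(homEval P t.num t.den : ℝ)| := by
      rw [← abs_mul]
      exact_mod_cast radical_sq_le_abs_of_isSquare_mul (mul_ne_zero hd hF)
        (isSquare_mul_homEval heven hy)
    _ ≤ |(d : ℝ)| * (coeffSum P * ((max |t.num| |(t.den : ℤ)| : ℤ) : ℝ) ^ P.natDegree) := by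
      gcongr
      exact_mod_cast abs_homEval_le P t.num t.den
    _ = _ := by ring

theorem card_le_of_height_le {ι : Type*} {S : Finset ι} {t : ι → ℚ} (ht : Set.InjOn t S) {b : ℕ}
    (hb : ∀ i ∈ S, max |(t i).num| |((t i).den : ℤ)| ≤ b) : S.card ≤ (2 * b + 1) ^ 2 := by
  calc S.card ≤ (Finset.Icc (-(b : ℤ)) b ×ˢ Finset.Icc (-(b : ℤ)) b).card := by
        refine Finset.card_le_card_of_injOn (fun i => ((t i).num, ((t i).den : ℤ)))
          (fun i hi => ?_) fun i hi j hj hij => ht hi hj ?_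
        · simpa only [Finset.coe_product, Finset.coe_Icc, Set.mem_prod, Set.mem_Icc, abs_le,
            max_le_iff] using hb i hi
        · rw [Prod.mk.injEq, Nat.cast_inj] at hij
          exact Rat.ext hij.1 hij.2
    _ = (2 * b + 1) ^ 2 := by
      rw [Finset.card_product, Int.card_Icc, sq]
      congr <;> omega

theorem eq_of_isSquare_mul_of_prime {p q : ℕ} (hp : p.Prime) (hq : q.Prime)
    (h : IsSquare (p * q)) : p = q := by
  by_contra hne
  have hsq : Squarefree (p * q) := (Nat.squarefree_mul ((Nat.coprime_primes hp hq).mpr hne)).mpr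
    ⟨hp.squarefree, hq.squarefree⟩
  obtain ⟨r, hr⟩ := h
  rw [Nat.isUnit_iff.mp (hsq r (hr ▸ dvd_rfl))] at hr
  exact hp.ne_one (Nat.eq_one_of_mul_eq_one_right hr)

theorem eq_of_sq_eq_prime_mul {p q : ℕ} (hp : p.Prime) (hq : q.Prime) {r y z : ℚ} (hr : r ≠ 0)
    (hy : y ^ 2 = p * r) (hz : z ^ 2 = q * r) : p = q := by
  refine eq_of_isSquare_mul_of_prime hp hq (Rat.isSquare_natCast_iff.mp ⟨y * z / r, ?_⟩)
  rw [div_mul_div_comm, mul_mul_mul_comm, ← sq, ← sq, hy, hz]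
  push_cast
  field_simp

theorem two_mul_floor_rpow_add_one_sq_le {K x : ℝ} (hK : 0 ≤ K) (hx : 1 ≤ x) :
    (2 * (⌊(K * x) ^ (1 / 3 : ℝ)⌋₊ : ℝ) + 1) ^ 2 ≤
      9 * (K ^ (1 / 3 : ℝ) + 1) ^ 2 * x ^ (2 / 3 : ℝ) := by
  have hx0 : 0 ≤ x := by linarith
  have hfloor : (⌊(K * x) ^ (1 / 3 : ℝ)⌋₊ : ℝ) ≤ K ^ (1 / 3 : ℝ) * x ^ (1 / 3 : ℝ) := by
    rw [← Real.mul_rpow hK hx0]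
    exact Nat.floor_le (by positivity)
  have hx1 : 1 ≤ x ^ (1 / 3 : ℝ) := Real.one_le_rpow hx (by norm_num)
  calc _ ≤ (3 * ((K ^ (1 / 3 : ℝ) + 1) * x ^ (1 / 3 : ℝ))) ^ 2 := by
        have : 0 ≤ K ^ (1 / 3 : ℝ) * x ^ (1 / 3 : ℝ) := by positivity
        gcongr
        linarith
    _ = 9 * (K ^ (1 / 3 : ℝ) + 1) ^ 2 * (x ^ (1 / 3 : ℝ)) ^ 2 := by ring
    _ = _ := by
      rw [← Real.rpow_mul_natCast hx0]
      norm_num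

/-- The abscissa of a rational point determines `ℓ`, and has height `O(x ^ (1 / 3))`. -/
theorem exists_card_le_mul_rpow_of_rational_points (habc : ABCConjecture) {P : ℤ[X]}
    (hP : (P.map (Int.castRingHom ℚ)).Separable) (hN : 8 ≤ P.natDegree)
    (heven : Even P.natDegree) (hroot : ∀ t : ℚ, aeval t P ≠ 0) {d : ℤ} (hd : d ≠ 0) :
    ∃ K : ℝ, 0 < K ∧ ∀ (x : ℕ) (S : Finset ℕ), (∀ ℓ ∈ S, ℓ.Prime ∧ |d * ℓ| ≤ x ∧
      ∃ t y : ℚ, y ^ 2 = ((d * ℓ : ℤ) : ℚ) * aeval t P) →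
      (S.card : ℝ) ≤ K * (x : ℝ) ^ (2 / 3 : ℝ) := by
  obtain ⟨K, hK, hheight⟩ := exists_height_pow_le habc hP hN heven
  refine ⟨9 * (K ^ (1 / 3 : ℝ) + 1) ^ 2, by positivity, fun x S hS => ?_⟩
  rcases S.eq_empty_or_nonempty with rfl | ⟨ℓ₀, hℓ₀⟩
  · rw [Finset.card_empty, Nat.cast_zero]
    positivity
  have hne : ∀ ℓ ∈ S, d * ℓ ≠ 0 := fun ℓ hℓ => mul_ne_zero hd (mod_cast (hS ℓ hℓ).1.ne_zero)
  have hx : (1 : ℤ) ≤ x := (Int.one_le_abs (hne ℓ₀ hℓ₀)).trans (hS ℓ₀ hℓ₀).2.1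
  choose! t y hty using fun ℓ hℓ => (hS ℓ hℓ).2.2
  have hinj : Set.InjOn t S := fun p hp q hq hpq =>
    eq_of_sq_eq_prime_mul (hS p hp).1 (hS q hq).1 (mul_ne_zero (Int.cast_ne_zero.mpr hd)
      (hroot (t p))) (by rw [hty p hp]; push_cast; ring) (by rw [hty q hq, hpq]; push_cast; ring)
  refine le_trans ?_ (two_mul_floor_rpow_add_one_sq_le hK.le (mod_cast hx))
  refine mod_cast card_le_of_height_le hinj fun ℓ hℓ => ?_
  have hH : (0 : ℤ) ≤ max |(t ℓ).num| |((t ℓ).den : ℤ)| := (abs_nonneg _).trans (le_max_left _ _)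
  lift max |(t ℓ).num| |((t ℓ).den : ℤ)| to ℕ using hH with H hHeq
  have hcube : (H : ℝ) ^ (3 : ℝ) ≤ K * x := by
    have h := hheight _ (t ℓ) (y ℓ) (hne ℓ hℓ) (hroot _) (hty ℓ hℓ)
    rw [← hHeq] at h
    calc (H : ℝ) ^ (3 : ℝ) ≤ K * |((d * ℓ : ℤ) : ℝ)| := mod_cast h
      _ ≤ K * x := by
        gcongr
        exact_mod_cast (hS ℓ hℓ).2.1
  rw [Nat.cast_le, one_div]
  exact Nat.le_floor ((Real.le_rpow_inv_iff_of_pos (by positivity) (by positivity)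
    (by norm_num)).mpr hcube)

/-! ### Square values over prime fields -/

section Field

variable {F : Type*} [Field F]

theorem eq_zero_of_sq_mul_eq_C_mul_sq {P : F[X]} (hP : Squarefree P) (hN : 0 < P.natDegree)
    {c : F} (hc : c ≠ 0) {r s : F[X]} (h : r ^ 2 * P = C c * s ^ 2) : r = 0 ∧ s = 0 := by
  have hP0 : P ≠ 0 := ne_zero_of_natDegree_gt hN
  have hc0 : (C c : F[X]) ≠ 0 := C_ne_zero.mpr hc
  by_cases hr : r = 0
  · rw [hr, sq, zero_mul, zero_mul, eq_comm, mul_eq_zero, sq_eq_zero_iff] at h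
    exact ⟨hr, h.resolve_left hc0⟩
  by_cases hs : s = 0
  · rw [hs, sq 0, zero_mul, mul_zero, mul_eq_zero, sq_eq_zero_iff] at h
    exact ⟨h.resolve_right hP0, hs⟩
  obtain ⟨π, hπ, hπP⟩ := WfDvdMonoid.exists_irreducible_factor
    (fun hu => hN.ne' (natDegree_eq_zero_of_isUnit hu)) hP0
  have hfin {f : F[X]} (hf : f ≠ 0) : FiniteMultiplicity π f :=
    FiniteMultiplicity.of_prime_left hπ.prime hf
  have hpar := congrArg (multiplicity π) h
  rw [multiplicity_mul hπ.prime (hfin (mul_ne_zero (pow_ne_zero 2 hr) hP0)),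
    multiplicity_mul hπ.prime (hfin (mul_ne_zero hc0 (pow_ne_zero 2 hs))),
    (hfin hr).multiplicity_pow hπ.prime, (hfin hs).multiplicity_pow hπ.prime] at hpar
  have hge : 1 ≤ multiplicity π P :=
    (hfin hP0).le_multiplicity_of_pow_dvd ((pow_one π).symm ▸ hπP)
  have hlt : multiplicity π P < 2 := by
    rw [(hfin hP0).multiplicity_lt_iff_not_dvd, sq]
    exact fun hd => hπ.not_isUnit (hP _ hd)
  have hunit : multiplicity π (C c) = 0 := multiplicity_eq_zero.mpr fun hd =>
    hπ.not_isUnit (isUnit_of_dvd_unit hd (isUnit_C.mpr hc.isUnit))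
  omega

/-- The linear operator `r ↦ P ^ (k - c) * (P ^ c * r)⁽ᵏ⁾`, where `c` is allowed to be any scalar;
it turns the vanishing of derivatives of Stepanov's polynomial into linear conditions. -/
noncomputable def derivCofactor (P : F[X]) (c : F) : ℕ → F[X] →ₗ[F] F[X]
  | 0 => LinearMap.id
  | k + 1 => ((c - k) • LinearMap.mulLeft F (derivative P) +
      LinearMap.mulLeft F P ∘ₗ derivative) ∘ₗ derivCofactor P c k

theorem derivCofactor_succ_apply (P : F[X]) (c : F) (k : ℕ) (r : F[X]) :
    derivCofactor P c (k + 1) r = C (c - k) * (derivative P * derivCofactor P c k r) +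
      P * derivative (derivCofactor P c k r) := by
  rw [← smul_eq_C_mul]
  rfl

theorem iterate_derivative_pow_mul (P r : F[X]) {e k : ℕ} (hk : k ≤ e) :
    derivative^[k] (P ^ e * r) = P ^ (e - k) * derivCofactor P e k r := by
  induction k with
  | zero => rfl
  | succ k ih =>
    obtain ⟨n, rfl⟩ : ∃ n, e = n + 1 + k := ⟨e - 1 - k, by omega⟩
    have hcast : ((n + 1 + k : ℕ) : F) - k = n + 1 := by
      push_cast
      ring
    have hsub : n + 1 + k - (k + 1) = n := by omega
    rw [Function.iterate_succ_apply', ih (by omega), derivCofactor_succ_apply, hcast, hsub,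
      Nat.add_sub_cancel, derivative_mul, derivative_pow_succ]
    simp only [map_add, map_natCast, map_one]
    ring

theorem iterate_derivative_mul_of_derivative_eq_zero (f : F[X]) {h : F[X]} (hh : derivative h = 0)
    (k : ℕ) : derivative^[k] (f * h) = derivative^[k] f * h := by
  induction k with
  | zero => rfl
  | succ k ih => rw [Function.iterate_succ_apply', ih, Function.iterate_succ_apply',
      derivative_mul, hh, mul_zero, add_zero]

theorem natDegree_derivCofactor_le (P : F[X]) (c : F) (k : ℕ) (r : F[X]) :
    (derivCofactor P c k r).natDegree ≤ r.natDegree + k * P.natDegree := by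
  induction k with
  | zero => exact Nat.le_add_right _ _
  | succ k ih =>
    rw [derivCofactor_succ_apply, add_mul, one_mul]
    have hP := natDegree_derivative_le P
    have hr := natDegree_derivative_le (derivCofactor P c k r)
    refine (natDegree_add_le _ _).trans (max_le
      ((natDegree_C_mul_le _ _).trans (natDegree_mul_le.trans ?_)) (natDegree_mul_le.trans ?_)) <;>
    omega

theorem exists_ne_zero_forall_apply_eq_zero {V : Type*} [AddCommGroup V] [Module F V]
    [FiniteDimensional F V] {M B : ℕ} {Ψ : ℕ → V →ₗ[F] F[X]}
    (hdeg : ∀ k < M, ∀ v, (Ψ k v).natDegree < B) (hrank : M * B < Module.finrank F V) :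
    ∃ v ≠ 0, ∀ k < M, Ψ k v = 0 := by
  let Φ : V →ₗ[F] Fin M → Fin B → F :=
    LinearMap.pi fun k => LinearMap.pi fun i => lcoeff F i ∘ₗ Ψ k
  have hcard : Module.finrank F (Fin M → Fin B → F) = M * B := by
    simp [Module.finrank_pi_fintype]
  obtain ⟨v, hv, hv0⟩ := Submodule.exists_mem_ne_zero_of_ne_bot
    (LinearMap.ker_ne_bot_of_finrank_lt (f := Φ) (hcard.trans_lt hrank))
  refine ⟨v, hv0, fun k hk => Polynomial.ext fun i => ?_⟩
  by_cases hi : i < B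
  · exact congrFun (congrFun (LinearMap.mem_ker.mp hv) ⟨k, hk⟩) ⟨i, hi⟩
  · exact coeff_eq_zero_of_natDegree_lt ((hdeg k hk v).trans_le (not_lt.mp hi))

theorem natDegree_le_of_mem_degreeLT {A : ℕ} {f : F[X]} (hf : f ∈ degreeLT F (A + 1)) :
    f.natDegree ≤ A := by
  rw [degreeLT_succ_eq_degreeLE, mem_degreeLE] at hf
  exact natDegree_le_of_degree_le hf

theorem finrank_degreeLT (n : ℕ) : Module.finrank F (degreeLT F n) = n := by
  rw [(degreeLTEquiv F n).finrank_eq, Module.finrank_fin_fun]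

theorem natDegree_X_pow_mul_derivCofactor_add_le (P : F[X]) (c d ε : F) {r s : F[X]} {A : ℕ}
    (hr : r.natDegree ≤ A) (hs : s.natDegree ≤ A) (j k : ℕ) :
    (X ^ j * (derivCofactor P c k r + C ε * derivCofactor P d k s)).natDegree ≤
      j + (A + k * P.natDegree) := by
  have h₁ := natDegree_derivCofactor_le P c k r
  have h₂ := natDegree_derivCofactor_le P d k s
  refine natDegree_mul_le.trans (add_le_add (natDegree_X_pow j).le ?_)
  exact natDegree_add_le_of_degree_le (h₁.trans (by omega))
    ((natDegree_C_mul_le ε _).trans (h₂.trans (by omega)))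

theorem exists_derivCofactor_sum_eq_zero (P : F[X]) (c d ε : F) {A J M : ℕ}
    (h : M * (A + M * P.natDegree + J) < 2 * J * (A + 1)) : ∃ r s : Fin J → F[X],
      (∀ j, (r j).natDegree ≤ A) ∧ (∀ j, (s j).natDegree ≤ A) ∧ ¬ (∀ j, r j = 0 ∧ s j = 0) ∧
      ∀ k < M, ∑ j : Fin J, X ^ (j : ℕ) *
        (derivCofactor P c k (r j) + C ε * derivCofactor P d k (s j)) = 0 := by
  have hJ : 0 < J := by
    rw [Nat.pos_iff_ne_zero]
    rintro rfl
    omega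
  let V := (Fin J → degreeLT F (A + 1)) × (Fin J → degreeLT F (A + 1))
  have : FiniteDimensional F (degreeLT F (A + 1)) :=
    (degreeLTEquiv F (A + 1)).symm.finiteDimensional
  have hrank : Module.finrank F V = 2 * J * (A + 1) := by
    rw [Module.finrank_prod, Module.finrank_pi_fintype, Finset.sum_const, Finset.card_fin,
      finrank_degreeLT, smul_eq_mul]
    ring
  let Ψ : ℕ → V →ₗ[F] F[X] := fun k => ∑ j : Fin J, LinearMap.mulLeft F (X ^ (j : ℕ)) ∘ₗ
    (derivCofactor P c k ∘ₗ Submodule.subtype _ ∘ₗ LinearMap.proj j ∘ₗ LinearMap.fst F _ _ +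
      ε • derivCofactor P d k ∘ₗ Submodule.subtype _ ∘ₗ LinearMap.proj j ∘ₗ LinearMap.snd F _ _)
  have hΨ (k : ℕ) (v : V) : Ψ k v = ∑ j : Fin J, X ^ (j : ℕ) *
      (derivCofactor P c k (v.1 j) + C ε * derivCofactor P d k (v.2 j)) := by
    simp only [Ψ, LinearMap.sum_apply, ← smul_eq_C_mul]
    rfl
  have hdeg : ∀ k < M, ∀ v, (Ψ k v).natDegree < A + M * P.natDegree + J := fun k hk v => by
    rw [hΨ]
    refine (natDegree_sum_le_of_forall_le (n := A + M * P.natDegree + (J - 1)) _ _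
      fun j _ => ?_).trans_lt (by omega)
    refine (natDegree_X_pow_mul_derivCofactor_add_le P c d ε
      (natDegree_le_of_mem_degreeLT (v.1 j).2)
      (natDegree_le_of_mem_degreeLT (v.2 j).2) j k).trans ?_
    have := Nat.mul_le_mul_right P.natDegree hk.le
    omega
  obtain ⟨v, hv0, hv⟩ := exists_ne_zero_forall_apply_eq_zero hdeg (h.trans_eq hrank.symm)
  refine ⟨fun j => v.1 j, fun j => v.2 j, fun j => natDegree_le_of_mem_degreeLT (v.1 j).2,
    fun j => natDegree_le_of_mem_degreeLT (v.2 j).2, fun hz => hv0 ?_,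
    fun k hk => (hΨ k v).symm.trans (hv k hk)⟩
  exact Prod.ext (funext fun j => Subtype.ext (hz j).1) (funext fun j => Subtype.ext (hz j).2)

theorem card_mul_le_natDegree {G : F[X]} {T : Finset F} {M : ℕ}
    (h : ∀ t ∈ T, M ≤ G.rootMultiplicity t) : T.card * M ≤ G.natDegree := by
  classical
  refine le_trans ?_ (card_roots' G)
  calc T.card * M = ∑ _t ∈ T, M := by rw [Finset.sum_const, smul_eq_mul]
    _ ≤ ∑ t ∈ T, G.roots.count t :=
      Finset.sum_le_sum fun t ht => (h t ht).trans_eq (count_roots G).symm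
    _ ≤ ∑ t ∈ T ∪ G.roots.toFinset, G.roots.count t :=
      Finset.sum_le_sum_of_subset Finset.subset_union_left
    _ = G.roots.card := Multiset.sum_count_eq_card fun t ht =>
      Finset.mem_union_right _ (Multiset.mem_toFinset.mpr ht)

theorem card_sub_natDegree_le_card_filter_eval_ne_zero [Fintype F] [DecidableEq F] {P : F[X]}
    (hP : P ≠ 0) :
    Fintype.card F - P.natDegree ≤ (Finset.univ.filter fun t => P.eval t ≠ 0).card := by
  have hroots : (Finset.univ.filter fun t => ¬ P.eval t ≠ 0).card ≤ P.natDegree := by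
    refine (Finset.card_le_card fun t ht => ?_).trans
      ((Multiset.toFinset_card_le _).trans (card_roots' P))
    rw [Multiset.mem_toFinset, mem_roots hP]
    exact not_not.mp (Finset.mem_filter.mp ht).2
  have hsum := Finset.card_filter_add_card_filter_not (s := (Finset.univ : Finset F))
    (fun t => P.eval t ≠ 0)
  rw [Finset.card_univ] at hsum
  omega

end Field

theorem auxPoly_natDegree_bound_lt {A N p q : ℕ} (hA : 2 * A ≤ p) (hN : 100 * (N + 1) ≤ p)
    (hq : 2 * q + 1 = p) :
    (2 * (N + 1) + q) * N + A + p * (N + 1) < (p - N) * (2 * (N + 1)) := by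
  obtain ⟨n, rfl⟩ : ∃ n, p = N + n := ⟨p - N, by omega⟩
  rw [Nat.add_sub_cancel_left]
  nlinarith [Nat.mul_le_mul_right (N + 1) hN]

section ZMod

variable {p : ℕ} [hp : Fact p.Prime] {P : (ZMod p)[X]} {A J : ℕ}

theorem exists_expand_eq_C_add_X_pow_mul (P : (ZMod p)[X]) :
    ∃ E, expand (ZMod p) p P = C (P.eval 0) + X ^ p * E := by
  refine ⟨expand (ZMod p) p (divX P), ?_⟩
  conv_lhs => rw [← divX_mul_X_add P]
  rw [map_add, map_mul, expand_X, expand_C, coeff_zero_eq_eval_zero]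
  ring

theorem sum_mul_X_pow_mul_succ {R : Type*} [CommSemiring R] (p : ℕ) (r : Fin (J + 1) → R[X]) :
    ∑ j, r j * X ^ (p * (j : ℕ)) =
      r 0 + X ^ p * ∑ j : Fin J, r j.succ * X ^ (p * (j : ℕ)) := by
  rw [Fin.sum_univ_succ, Finset.mul_sum, Fin.val_zero, mul_zero, pow_zero, mul_one]
  congr 1
  refine Finset.sum_congr rfl fun j _ => ?_
  rw [Fin.val_succ, mul_add, mul_one, pow_add]
  ring

/-- Modulo `X ^ p` the identity reads `r₀ ^ 2 * P = P(0) * s₀ ^ 2`. -/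
theorem eq_zero_of_sum_sq_mul_eq_expand (hP : Squarefree P) (hN : 0 < P.natDegree)
    (h0 : P.eval 0 ≠ 0) (hA : 2 * A + P.natDegree < p) {r s : Fin J → (ZMod p)[X]}
    (hr : ∀ j, (r j).natDegree ≤ A) (hs : ∀ j, (s j).natDegree ≤ A)
    (h : (∑ j, r j * X ^ (p * (j : ℕ))) ^ 2 * P =
      (∑ j, s j * X ^ (p * (j : ℕ))) ^ 2 * expand (ZMod p) p P) (j : Fin J) :
    r j = 0 ∧ s j = 0 := by
  induction J with
  | zero => exact j.elim0
  | succ J ih =>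
    rw [sum_mul_X_pow_mul_succ, sum_mul_X_pow_mul_succ] at h
    set R := ∑ j : Fin J, r j.succ * X ^ (p * (j : ℕ))
    set S := ∑ j : Fin J, s j.succ * X ^ (p * (j : ℕ))
    obtain ⟨E, hE⟩ := exists_expand_eq_C_add_X_pow_mul P
    have hdvd : X ^ p ∣ r 0 ^ 2 * P - C (P.eval 0) * s 0 ^ 2 := by
      rw [hE] at h
      refine ⟨s 0 ^ 2 * E + (2 * s 0 * S + X ^ p * S ^ 2) * (C (P.eval 0) + X ^ p * E) -
        (2 * r 0 * R + X ^ p * R ^ 2) * P, ?_⟩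
      linear_combination h
    have hdeg : (r 0 ^ 2 * P - C (P.eval 0) * s 0 ^ 2).natDegree <
        (X ^ p : (ZMod p)[X]).natDegree := by
      have hr₂ := natDegree_pow_le_of_le 2 (hr 0)
      have hs₂ := natDegree_pow_le_of_le 2 (hs 0)
      rw [natDegree_X_pow]
      refine (natDegree_sub_le _ _).trans_lt (max_lt (natDegree_mul_le.trans_lt ?_)
        ((natDegree_C_mul_le _ _).trans_lt ?_)) <;> omega
    obtain ⟨hr0, hs0⟩ := eq_zero_of_sq_mul_eq_C_mul_sq hP hN h0
      (sub_eq_zero.mp (eq_zero_of_dvd_of_natDegree_lt hdvd hdeg))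
    rw [hr0, hs0, zero_add, zero_add, mul_pow, mul_pow, mul_assoc, mul_assoc] at h
    have htail := ih (fun j => hr j.succ) (fun j => hs j.succ)
      (mul_left_cancel₀ (pow_ne_zero 2 (pow_ne_zero p X_ne_zero)) h)
    exact Fin.cases ⟨hr0, hs0⟩ htail j

/-- Stepanov's auxiliary polynomial. Where `P(t) ^ q = ε`, it takes the same value at `t` as
`P ^ M * ∑ X ^ j * (r j + ε * s j)`, a polynomial of much smaller degree. -/
noncomputable def auxPoly (P : (ZMod p)[X]) (M q : ℕ) (r s : Fin J → (ZMod p)[X]) : (ZMod p)[X] :=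
  ∑ j : Fin J, (P ^ M * r j + P ^ (M + q) * s j) * X ^ (p * (j : ℕ))

theorem eval_iterate_derivative_auxPoly {M q k : ℕ} (hk : k ≤ M) {ε t : ZMod p}
    (ht : P.eval t ^ q = ε) (r s : Fin J → (ZMod p)[X]) :
    (derivative^[k] (auxPoly P M q r s)).eval t = P.eval t ^ (M - k) *
      (∑ j : Fin J, X ^ (j : ℕ) * (derivCofactor P (M : ℕ) k (r j) +
        C ε * derivCofactor P (M + q : ℕ) k (s j))).eval t := by
  rw [auxPoly, iterate_derivative_sum, eval_finsetSum, eval_finsetSum, Finset.mul_sum]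
  refine Finset.sum_congr rfl fun j _ => ?_
  rw [iterate_derivative_mul_of_derivative_eq_zero _ (by simp [derivative_X_pow]),
    iterate_map_add, iterate_derivative_pow_mul _ _ hk, iterate_derivative_pow_mul _ _ (by omega),
    Nat.sub_add_comm hk]
  simp only [eval_mul, eval_add, eval_pow, eval_X, eval_C]
  rw [pow_mul, ZMod.pow_card, pow_add, ht]
  ring

theorem natDegree_auxPoly_le (P : (ZMod p)[X]) (M q : ℕ) {r s : Fin J → (ZMod p)[X]}
    (hr : ∀ j, (r j).natDegree ≤ A) (hs : ∀ j, (s j).natDegree ≤ A) :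
    (auxPoly P M q r s).natDegree ≤ (M + q) * P.natDegree + A + p * (J - 1) := by
  refine natDegree_sum_le_of_forall_le _ _ fun j _ => ?_
  have hj : p * (j : ℕ) ≤ p * (J - 1) := Nat.mul_le_mul_left _ (by omega)
  have hM : (P ^ M * r j).natDegree ≤ (M + q) * P.natDegree + A :=
    natDegree_mul_le_of_le (natDegree_pow_le.trans
      (Nat.mul_le_mul_right _ (Nat.le_add_right M q))) (hr j)
  have hMq : (P ^ (M + q) * s j).natDegree ≤ (M + q) * P.natDegree + A :=
    natDegree_mul_le_of_le natDegree_pow_le (hs j)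
  exact natDegree_mul_le_of_le (natDegree_add_le_of_degree_le hM hMq)
    ((natDegree_X_pow_le _).trans hj)

theorem eq_zero_of_eval_iterate_derivative_eq_zero {G : (ZMod p)[X]} {T : Finset (ZMod p)} {M : ℕ}
    (hM : M ≤ p) (h : ∀ t ∈ T, ∀ k < M, (derivative^[k] G).eval t = 0)
    (hdeg : G.natDegree < T.card * M) : G = 0 := by
  by_contra hG
  refine hdeg.not_ge (card_mul_le_natDegree fun t ht => ?_)
  rcases M.eq_zero_or_pos with rfl | hM0
  · exact Nat.zero_le _
  refine Nat.le_of_pred_lt (lt_rootMultiplicity_of_isRoot_iterate_derivative_of_mem_nonZeroDivisors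
    hG (fun k hk => h t ht k (Nat.lt_of_le_pred hM0 hk)) ?_)
  rw [mem_nonZeroDivisors_iff_ne_zero, Ne, ZMod.natCast_eq_zero_iff, hp.out.dvd_factorial]
  exact (Nat.pred_lt hM0.ne').trans_le hM |>.not_ge

/-- Cancel `P ^ M` and square, using `P ^ (2 * q + 1) = P ^ p = P(X ^ p)`. -/
theorem eq_zero_of_auxPoly_eq_zero (hP : Squarefree P) (hN : 0 < P.natDegree) (h0 : P.eval 0 ≠ 0)
    (hA : 2 * A + P.natDegree < p) {M q : ℕ} (hq : 2 * q + 1 = p) {r s : Fin J → (ZMod p)[X]}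
    (hr : ∀ j, (r j).natDegree ≤ A) (hs : ∀ j, (s j).natDegree ≤ A)
    (h : auxPoly P M q r s = 0) (j : Fin J) : r j = 0 ∧ s j = 0 := by
  have hfactor : auxPoly P M q r s = P ^ M * (∑ j, r j * X ^ (p * (j : ℕ)) +
      P ^ q * ∑ j, s j * X ^ (p * (j : ℕ))) := by
    rw [auxPoly, Finset.mul_sum, ← Finset.sum_add_distrib, Finset.mul_sum]
    refine Finset.sum_congr rfl fun j _ => ?_
    ring
  rw [hfactor] at h
  have hsum := (mul_eq_zero.mp h).resolve_left (pow_ne_zero _ (ne_zero_of_natDegree_gt hN))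
  refine eq_zero_of_sum_sq_mul_eq_expand hP hN h0 hA hr hs ?_ j
  have hPp : P ^ p = (P ^ q) ^ 2 * P := by rw [← pow_mul, ← pow_succ, mul_comm q 2, hq]
  rw [ZMod.expand_card, hPp, eq_neg_of_add_eq_zero_left hsum]
  ring

/-- Stepanov's method: an auxiliary polynomial vanishing to order `2 * (N + 1)` wherever
`P(t) ^ (p / 2) = ε` has fewer roots than that if this is almost all of `𝔽_p`. -/
theorem exists_eval_ne_zero_and_pow_ne (hP : Squarefree P) (hN : 0 < P.natDegree)
    (h0 : P.eval 0 ≠ 0) (hbig : 100 * (P.natDegree + 1) ^ 3 ≤ p) (ε : ZMod p) :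
    ∃ t, P.eval t ≠ 0 ∧ P.eval t ^ (p / 2) ≠ ε := by
  by_contra! hcon
  set N := P.natDegree
  set m := N + 1 with hm
  set A := (p - m) / 2
  have hm3 : m * m ≤ m ^ 3 := by
    rw [pow_succ, sq]
    exact Nat.le_mul_of_pos_right _ (by omega)
  have hmm : m ≤ m * m := Nat.le_mul_self m
  have hq : 2 * (p / 2) + 1 = p := by
    have := hp.out.eq_two_or_odd
    omega
  obtain ⟨r, s, hr, hs, hne, hker⟩ := exists_derivCofactor_sum_eq_zero P ((2 * m : ℕ) : ZMod p)
    ((2 * m + p / 2 : ℕ) : ZMod p) ε (A := A) (J := m + 1) (M := 2 * m) (by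
      have hA : 49 * m ^ 3 ≤ A := by omega
      nlinarith [Nat.mul_le_mul_left (m * m) (show N ≤ m by omega)])
  refine hne (eq_zero_of_auxPoly_eq_zero (M := 2 * m) hP hN h0 (by omega) hq hr hs
    (eq_zero_of_eval_iterate_derivative_eq_zero (T := Finset.univ.filter fun t => P.eval t ≠ 0)
      (M := 2 * m) (by omega) (fun t ht k hk => ?_) ?_))
  · rw [eval_iterate_derivative_auxPoly hk.le (hcon t (Finset.mem_filter.mp ht).2), hker k hk,
      eval_zero, mul_zero]
  · have hcard := card_sub_natDegree_le_card_filter_eval_ne_zero (ne_zero_of_natDegree_gt hN)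
    rw [ZMod.card] at hcard
    refine (natDegree_auxPoly_le P _ _ hr hs).trans_lt
      (lt_of_lt_of_le ?_ (Nat.mul_le_mul_right _ hcard))
    exact auxPoly_natDegree_bound_lt (by omega) (by omega) hq

theorem exists_eval_ne_zero_and_isSquare_mul (hP : P.Separable) (hN : 0 < P.natDegree)
    (hbig : 100 * (P.natDegree + 1) ^ 3 ≤ p) {c : ZMod p} (hc : c ≠ 0) :
    ∃ t, P.eval t ≠ 0 ∧ IsSquare (c * P.eval t) := by
  have hP0 : P ≠ 0 := ne_zero_of_natDegree_gt hN
  obtain ⟨b, hb⟩ : ∃ b, P.eval b ≠ 0 := by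
    have hcard := card_sub_natDegree_le_card_filter_eval_ne_zero hP0
    have hle : P.natDegree + 1 ≤ (P.natDegree + 1) ^ 3 := Nat.le_self_pow three_ne_zero _
    rw [ZMod.card] at hcard
    obtain ⟨b, hb⟩ := Finset.card_pos.mp (lt_of_lt_of_le (by omega) hcard)
    exact ⟨b, (Finset.mem_filter.mp hb).2⟩
  have hsep : (P.comp (X + C b)).Separable := by
    have : IsCoprime (P.comp (X + C b)) ((derivative P).comp (X + C b)) :=
      IsCoprime.map hP (compRingHom (X + C b))
    simpa [Polynomial.Separable, derivative_comp] using this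
  have hdeg : (P.comp (X + C b)).natDegree = P.natDegree := by
    rw [natDegree_comp, natDegree_X_add_C, mul_one]
  have heval (t : ZMod p) : (P.comp (X + C b)).eval t = P.eval (t + b) := by simp
  obtain ⟨t, ht0, ht⟩ := exists_eval_ne_zero_and_pow_ne hsep.squarefree (hdeg.symm ▸ hN)
    (by rwa [heval, zero_add]) (hdeg.symm ▸ hbig) (-(c ^ (p / 2)))
  rw [heval] at ht0 ht
  refine ⟨t + b, ht0, ?_⟩
  rw [ZMod.euler_criterion p (mul_ne_zero hc ht0), mul_pow]
  have hc2 : (c ^ (p / 2)) ^ 2 = 1 := sq_eq_one_iff.mpr (ZMod.pow_div_two_eq_neg_one_or_one p hc)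
  have ht2 : (P.eval (t + b) ^ (p / 2)) ^ 2 = 1 :=
    sq_eq_one_iff.mpr (ZMod.pow_div_two_eq_neg_one_or_one p ht0)
  rw [(sq_eq_sq_iff_eq_or_eq_neg.mp (ht2.trans hc2.symm)).resolve_right ht, ← sq, hc2]

end ZMod

/-! ### Lifting solutions to `ℚ_p` -/

section Padic

theorem intCast_eval_map {R : Type*} [Ring R] (F : ℤ[X]) (a : ℤ) :
    (F.map (Int.castRingHom R)).eval (a : R) = (F.eval a : ℤ) := by
  rw [eval_intCast_map, Int.cast_id, eq_intCast]

theorem aeval_intCast {R : Type*} [CommRing R] (F : ℤ[X]) (a : ℤ) :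
    aeval (a : R) F = (F.eval a : ℤ) :=
  aeval_algebraMap_apply_eq_algebraMap_eval a F

variable {p : ℕ} [Fact p.Prime]

theorem exists_padicInt_aeval_eq_zero {F : ℤ[X]} {a : ℤ} (h0 : (p : ℤ) ∣ F.eval a)
    (h1 : ¬ (p : ℤ) ∣ (derivative F).eval a) : ∃ z : ℤ_[p], aeval z F = 0 := by
  obtain ⟨z, hz, -⟩ := hensels_lemma (p := p) (F := F) (a := (a : ℤ_[p])) (by
    rw [aeval_intCast, aeval_intCast, PadicInt.norm_intCast_eq_one_iff.2
      ((Nat.prime_iff_prime_int.1 Fact.out).coprime_iff_not_dvd.2 h1).symm, one_pow]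
    exact (PadicInt.norm_int_lt_one_iff_dvd _).2 h0)
  exact ⟨z, hz⟩

theorem isSquare_intCast_padicInt_of_isSquare_zmod (hp : p ≠ 2) {m : ℤ} (h0 : (m : ZMod p) ≠ 0)
    (h : IsSquare (m : ZMod p)) : IsSquare (m : ℤ_[p]) := by
  obtain ⟨s, hs⟩ := h
  obtain ⟨b, rfl⟩ := ZMod.intCast_surjective s
  have hb : (b : ZMod p) ≠ 0 := by
    intro hb
    rw [hs, hb, mul_zero] at h0
    exact h0 rfl
  obtain ⟨z, hz⟩ := exists_padicInt_aeval_eq_zero (p := p) (F := X ^ 2 - C m) (a := b)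
    (by
      rw [← ZMod.intCast_zmod_eq_zero_iff_dvd]
      simp [hs, sq])
    (by
      rw [← ZMod.intCast_zmod_eq_zero_iff_dvd]
      simpa [one_add_one_eq_two, hb] using Ring.two_ne_zero (by rwa [ZMod.ringChar_zmod_n]))
  refine ⟨z, ?_⟩
  simp only [map_sub, map_pow, aeval_X, eq_intCast, map_intCast, sub_eq_zero] at hz
  rw [← sq, hz]

theorem isSquare_intCast_padicInt_two {m : ℤ} (h : 8 ∣ m - 1) : IsSquare (m : ℤ_[2]) := by
  obtain ⟨z, hz, -⟩ := hensels_lemma (p := 2) (F := X ^ 2 - C m) (a := (1 : ℤ_[2])) (by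
    have hval : aeval (1 : ℤ_[2]) (X ^ 2 - C m) = ((1 - m : ℤ) : ℤ_[2]) := by simp
    have hder : aeval (1 : ℤ_[2]) (derivative (X ^ 2 - C m)) = ((2 : ℕ) : ℤ_[2]) := by
      simp [one_add_one_eq_two, map_ofNat]
    have hnorm : ‖((1 - m : ℤ) : ℤ_[2])‖ ≤ ((2 : ℕ) : ℝ) ^ (-(3 : ℕ) : ℤ) := by
      rw [PadicInt.norm_int_le_pow_iff_dvd, dvd_sub_comm]
      exact_mod_cast h
    rw [hval, hder, PadicInt.norm_p]
    exact hnorm.trans_lt (by norm_num))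
  refine ⟨z, ?_⟩
  simp only [map_sub, map_pow, aeval_X, eq_intCast, map_intCast, sub_eq_zero] at hz
  rw [← sq, hz]

theorem isSquare_intCast_padicInt_of_dvd_sub_one {m : ℤ} (h : (8 * p : ℤ) ∣ m - 1) :
    IsSquare (m : ℤ_[p]) := by
  rcases eq_or_ne p 2 with rfl | hp
  · exact isSquare_intCast_padicInt_two (dvd_of_mul_right_dvd h)
  · have h1 : (m : ZMod p) = 1 := by
      have := (ZMod.intCast_zmod_eq_zero_iff_dvd _ p).2 (dvd_of_mul_left_dvd h)
      rwa [Int.cast_sub, Int.cast_one, sub_eq_zero] at this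
    exact isSquare_intCast_padicInt_of_isSquare_zmod hp (by simp [h1]) (by simp [h1])

theorem exists_padic_aeval_eq_zero {P : ℤ[X]} (hP : (P.map (Int.castRingHom (ZMod p))).Separable)
    {t : ZMod p} (ht : (P.map (Int.castRingHom (ZMod p))).eval t = 0) :
    ∃ z : ℚ_[p], aeval z P = 0 := by
  obtain ⟨a, rfl⟩ := ZMod.intCast_surjective t
  have hder := hP.eval₂_derivative_ne_zero (RingHom.id _) (x := (a : ZMod p)) ht
  rw [eval₂_id, derivative_map, intCast_eval_map] at hder
  rw [intCast_eval_map] at ht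
  obtain ⟨z, hz⟩ := exists_padicInt_aeval_eq_zero
    ((ZMod.intCast_zmod_eq_zero_iff_dvd _ p).1 ht)
    (mt (ZMod.intCast_zmod_eq_zero_iff_dvd _ p).2 hder)
  refine ⟨z, ?_⟩
  rw [← PadicInt.algebraMap_apply, aeval_algebraMap_apply, hz, map_zero]

theorem exists_padic_sq_eq_mul_aeval (hp : p ≠ 2) {P : ℤ[X]} {d : ℤ} {t : ZMod p}
    (h0 : (d : ZMod p) * (P.map (Int.castRingHom (ZMod p))).eval t ≠ 0)
    (hsq : IsSquare ((d : ZMod p) * (P.map (Int.castRingHom (ZMod p))).eval t)) :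
    ∃ z y : ℚ_[p], y ^ 2 = (d : ℚ_[p]) * aeval z P := by
  obtain ⟨a, rfl⟩ := ZMod.intCast_surjective t
  have heval : ((d * P.eval a : ℤ) : ZMod p) =
      (d : ZMod p) * (P.map (Int.castRingHom (ZMod p))).eval (a : ZMod p) := by
    rw [Int.cast_mul, intCast_eval_map]
  obtain ⟨y, hy⟩ := isSquare_intCast_padicInt_of_isSquare_zmod hp (heval ▸ h0) (heval ▸ hsq)
  refine ⟨a, y, ?_⟩
  have := congrArg ((↑) : ℤ_[p] → ℚ_[p]) hy
  push_cast at this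
  rw [aeval_intCast, this, sq]

end Padic

/-! ### Lattice points in cubes -/

section Lattice

variable {ι : Type*} [Fintype ι] [DecidableEq ι]

/-- The lattice points of the cube `[-R, R]^ι`, the coordinates of the elements of a box. -/
noncomputable def cube (ι : Type*) [Fintype ι] [DecidableEq ι] (R : ℕ) : Finset (ι → ℤ) :=
  Fintype.piFinset fun _ => Finset.Icc (-(R : ℤ)) R

theorem mem_cube {R : ℕ} {x : ι → ℤ} : x ∈ cube ι R ↔ ∀ i, |x i| ≤ R := by
  simp only [cube, Fintype.mem_piFinset, Finset.mem_Icc, abs_le]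

theorem card_cube (R : ℕ) : (cube ι R).card = (2 * R + 1) ^ Fintype.card ι := by
  rw [cube, Fintype.card_piFinset]
  simp only [Int.card_Icc, Finset.prod_const, Finset.card_univ]
  congr 1
  omega

theorem add_mem_cube {R r : ℕ} {x y : ι → ℤ} (hx : x ∈ cube ι R) (hy : y ∈ cube ι r) :
    x + y ∈ cube ι (R + r) := by
  refine mem_cube.2 fun i => (abs_add_le _ _).trans ?_
  exact_mod_cast add_le_add (mem_cube.1 hx i) (mem_cube.1 hy i)

theorem sub_mem_cube {R r : ℕ} {x y : ι → ℤ} (hx : x ∈ cube ι R) (hy : y ∈ cube ι r) :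
    x - y ∈ cube ι (R + r) := by
  refine mem_cube.2 fun i => (abs_sub _ _).trans ?_
  exact_mod_cast add_le_add (mem_cube.1 hx i) (mem_cube.1 hy i)

theorem exists_rightInverse_mem_cube {H : AddSubgroup (ι → ℤ)} {r : ℕ}
    (hr : ∀ x : ι → ℤ, ∃ y ∈ cube ι r, x - y ∈ H) :
    ∃ ρ : (ι → ℤ) ⧸ H → ι → ℤ, (∀ k, ρ k ∈ cube ι r) ∧
      Function.RightInverse ρ (QuotientAddGroup.mk : (ι → ℤ) → (ι → ℤ) ⧸ H) := by
  have hrep (k : (ι → ℤ) ⧸ H) : ∃ y ∈ cube ι r, (QuotientAddGroup.mk y : (ι → ℤ) ⧸ H) = k := by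
    obtain ⟨x, rfl⟩ := QuotientAddGroup.mk_surjective k
    obtain ⟨y, hy, hxy⟩ := hr x
    exact ⟨y, hy, by rwa [QuotientAddGroup.eq, neg_add_eq_sub]⟩
  choose ρ hρ using hrep
  exact ⟨ρ, fun k => (hρ k).1, fun k => (hρ k).2⟩

theorem finite_quotient_of_forall_exists_mem_cube {H : AddSubgroup (ι → ℤ)} {r : ℕ}
    (hr : ∀ x : ι → ℤ, ∃ y ∈ cube ι r, x - y ∈ H) : Finite ((ι → ℤ) ⧸ H) := by
  obtain ⟨ρ, hρ, hinv⟩ := exists_rightInverse_mem_cube hr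
  exact Finite.of_injective (fun k => (⟨ρ k, hρ k⟩ : cube ι r)) fun k l h =>
    hinv.injective (congrArg Subtype.val h)

-- `(k, x) ↦ x + ρ k` is injective, as `k` is the class of `c + (x + ρ k)`.
open Classical in
theorem index_mul_card_filter_cube_le {H : AddSubgroup (ι → ℤ)} {r : ℕ}
    (hr : ∀ x : ι → ℤ, ∃ y ∈ cube ι r, x - y ∈ H) (c : ι → ℤ) (R : ℕ) :
    H.index * ((cube ι R).filter fun x => c + x ∈ H).card ≤
      (2 * (R + r) + 1) ^ Fintype.card ι := by
  have := finite_quotient_of_forall_exists_mem_cube hr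
  have := Fintype.ofFinite ((ι → ℤ) ⧸ H)
  obtain ⟨ρ, hρ, hinv⟩ := exists_rightInverse_mem_cube hr
  have hclass {x : ι → ℤ} (hx : c + x ∈ H) (k : (ι → ℤ) ⧸ H) :
      (QuotientAddGroup.mk (c + (x + ρ k)) : (ι → ℤ) ⧸ H) = k := by
    conv_rhs => rw [← hinv k]
    rw [eq_comm, QuotientAddGroup.eq]
    convert hx using 1
    abel
  rw [AddSubgroup.index, Nat.card_eq_fintype_card,
    ← Finset.card_univ (α := (ι → ℤ) ⧸ H), ← Finset.card_product, ← card_cube]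
  refine Finset.card_le_card_of_injOn (fun kx => kx.2 + ρ kx.1) ?_ ?_
  · rintro ⟨k, x⟩ h
    exact add_mem_cube (Finset.mem_filter.1 (Finset.mem_product.1 h).2).1 (hρ k)
  · rintro ⟨k, x⟩ h ⟨l, y⟩ h' (he : x + ρ k = y + ρ l)
    have hk := hclass (Finset.mem_filter.1 (Finset.mem_product.1 h).2).2 k
    have hl := hclass (Finset.mem_filter.1 (Finset.mem_product.1 h').2).2 l
    rw [he, hl] at hk
    subst hk
    rw [add_right_cancel he]

-- `x ↦ (k, x - ρ k)`, with `k` the class of `c + x`, is injective.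
open Classical in
theorem le_index_mul_card_filter_cube {H : AddSubgroup (ι → ℤ)} {r : ℕ}
    (hr : ∀ x : ι → ℤ, ∃ y ∈ cube ι r, x - y ∈ H) (c : ι → ℤ) {R : ℕ} (hrR : r ≤ R) :
    (2 * (R - r) + 1) ^ Fintype.card ι ≤
      H.index * ((cube ι R).filter fun x => c + x ∈ H).card := by
  have := finite_quotient_of_forall_exists_mem_cube hr
  have := Fintype.ofFinite ((ι → ℤ) ⧸ H)
  obtain ⟨ρ, hρ, hinv⟩ := exists_rightInverse_mem_cube hr
  let κ (x : ι → ℤ) : (ι → ℤ) ⧸ H := QuotientAddGroup.mk (c + x)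
  rw [AddSubgroup.index, Nat.card_eq_fintype_card,
    ← Finset.card_univ (α := (ι → ℤ) ⧸ H), ← Finset.card_product, ← card_cube]
  refine Finset.card_le_card_of_injOn (fun x => (κ x, x - ρ (κ x))) ?_ ?_
  · intro x hx
    refine Finset.mem_product.2 ⟨Finset.mem_univ _, Finset.mem_filter.2 ⟨?_, ?_⟩⟩
    · simpa only [Nat.sub_add_cancel hrR] using sub_mem_cube hx (hρ (κ x))
    · have hmem := QuotientAddGroup.eq.1 (hinv (κ x))
      change c + (x - ρ (κ x)) ∈ H
      convert hmem using 1
      abel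
  · intro x _ y _ he
    obtain ⟨hκ, hsub⟩ := Prod.mk.inj he
    rw [hκ] at hsub
    exact sub_left_injective hsub

-- Rounding the coordinates of `A⁻¹ z` to integers changes `z` by a combination of the columns of
-- `A` with coefficients in `[0, 1)`.
theorem exists_sub_mulVec_mem_cube {A : Matrix ι ι ℤ} (hA : A.det ≠ 0) {h : ℕ}
    (hh : ∀ i j, |A i j| ≤ h) (z : ι → ℤ) :
    ∃ y : ι → ℤ, z - A.mulVec y ∈ cube ι (Fintype.card ι * h) := by
  set A' : Matrix ι ι ℚ := A.map (Int.castRingHom ℚ)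
  have hdet : IsUnit A'.det := by
    have hmap : A'.det = Int.castRingHom ℚ A.det := ((Int.castRingHom ℚ).map_det A).symm
    rw [isUnit_iff_ne_zero, hmap]
    simpa using hA
  set x : ι → ℚ := A'⁻¹.mulVec (fun i => (z i : ℚ))
  have hAx : A'.mulVec x = fun i => (z i : ℚ) := by
    rw [Matrix.mulVec_mulVec, Matrix.mul_nonsing_inv _ hdet, Matrix.one_mulVec]
  refine ⟨fun i => ⌊x i⌋, mem_cube.mpr fun i => ?_⟩
  have hfract : (((z - A.mulVec fun i => ⌊x i⌋) i : ℤ) : ℚ) =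
      ∑ j, (A i j : ℚ) * Int.fract (x j) := by
    have hz : ∑ j, (A i j : ℚ) * x j = z i := congrFun hAx i
    simp only [Pi.sub_apply, Matrix.mulVec, dotProduct, Int.cast_sub, Int.cast_sum, Int.cast_mul]
    rw [← hz, ← Finset.sum_sub_distrib]
    exact Finset.sum_congr rfl fun j _ => by rw [Int.fract]; ring
  have hterm (j : ι) : |(A i j : ℚ) * Int.fract (x j)| ≤ h := by
    rw [abs_mul, abs_of_nonneg (Int.fract_nonneg (x j))]
    have hAij : |(A i j : ℚ)| ≤ h := by exact_mod_cast hh i j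
    exact (mul_le_of_le_one_right (abs_nonneg _) (Int.fract_lt_one (x j)).le).trans hAij
  have hsum : |(((z - A.mulVec fun i => ⌊x i⌋) i : ℤ) : ℚ)| ≤ (Fintype.card ι * h : ℕ) := by
    rw [hfract]
    refine (Finset.abs_sum_le_sum_abs _ _).trans ((Finset.sum_le_sum fun j _ => hterm j).trans ?_)
    simp
  exact_mod_cast hsum

end Lattice

/-! ### Sums over rational primes -/

section PrimeSums

theorem mul_sum_le_sum_mul_of_antitone {b f : ℕ → ℝ} (hf : Antitone f)
    (hb : ∀ k, 0 ≤ ∑ m ∈ Finset.range k, b m) (k : ℕ) :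
    f k * ∑ m ∈ Finset.range (k + 1), b m ≤ ∑ m ∈ Finset.range (k + 1), b m * f m := by
  induction k with
  | zero => simp [mul_comm]
  | succ k ih =>
    rw [Finset.sum_range_succ _ (k + 1), Finset.sum_range_succ _ (k + 1), mul_add]
    linarith [mul_le_mul_of_nonneg_right (hf k.le_succ) (hb (k + 1)),
      mul_comm (f (k + 1)) (b (k + 1))]

theorem sum_mul_le_of_antitone {a f : ℕ → ℝ} {C : ℝ} (hf : Antitone f) (hf0 : ∀ m, 0 ≤ f m)
    (hC : ∀ k : ℕ, ∑ m ∈ Finset.range k, a m ≤ C * k) (k : ℕ) :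
    ∑ m ∈ Finset.range k, a m * f m ≤ C * ∑ m ∈ Finset.range k, f m := by
  have hdiff (k : ℕ) : 0 ≤ ∑ m ∈ Finset.range k, (C - a m) := by
    rw [Finset.sum_sub_distrib, Finset.sum_const, Finset.card_range, nsmul_eq_mul]
    linarith [hC k]
  cases k with
  | zero => simp
  | succ k =>
    have habel := (mul_nonneg (hf0 k) (hdiff (k + 1))).trans
      (mul_sum_le_sum_mul_of_antitone hf hdiff k)
    simp only [sub_mul, Finset.sum_sub_distrib, ← Finset.mul_sum] at habel
    linarith

-- Bernoulli's inequality at `-1/(k+1)` compares each term with a difference of values of `k ^ s`.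
theorem sum_range_rpow_sub_one_le {s : ℝ} (hs0 : 0 < s) (hs1 : s ≤ 1) (k : ℕ) :
    ∑ m ∈ Finset.range k, ((m + 1 : ℕ) : ℝ) ^ (s - 1) ≤ s⁻¹ * (k : ℝ) ^ s := by
  induction k with
  | zero => simp [Real.zero_rpow hs0.ne']
  | succ k ih =>
    set u : ℝ := ((k + 1 : ℕ) : ℝ) with hu
    have hu1 : 1 ≤ u := by
      rw [hu, Nat.one_le_cast]
      exact k.succ_pos
    have hu0 : 0 < u := by linarith
    have hinv : -1 ≤ -u⁻¹ := neg_le_neg (inv_le_one_of_one_le₀ hu1)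
    have hbern : (k : ℝ) ^ s ≤ u ^ s * (1 + s * -u⁻¹) := by
      have hk : (k : ℝ) = u * (1 + -u⁻¹) := by
        rw [mul_add, mul_neg, mul_inv_cancel₀ hu0.ne', hu]
        push_cast
        ring
      rw [hk, Real.mul_rpow hu0.le (by linarith)]
      gcongr
      exact rpow_one_add_le_one_add_mul_self hinv hs0.le hs1
    calc ∑ m ∈ Finset.range (k + 1), ((m + 1 : ℕ) : ℝ) ^ (s - 1)
        ≤ s⁻¹ * (k : ℝ) ^ s + u ^ (s - 1) := by
          rw [Finset.sum_range_succ]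
          gcongr
      _ ≤ s⁻¹ * (u ^ s * (1 + s * -u⁻¹)) + u ^ s / u := by
          rw [Real.rpow_sub_one hu0.ne']
          gcongr
      _ = s⁻¹ * u ^ s := by field_simp; ring

theorem sum_Ioc_prime_eq_sum_range (g : ℕ → ℝ) (Y : ℕ) :
    ∑ p ∈ Finset.Ioc 0 Y with p.Prime, g p =
      ∑ m ∈ Finset.range Y, if (m + 1).Prime then g (m + 1) else 0 := by
  rw [Finset.sum_filter, Finset.range_eq_Ico,
    Finset.sum_Ico_add' (fun m => if m.Prime then g m else 0) 0 Y 1]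
  rfl

theorem sum_prime_log_mul_rpow_sub_one_le {s : ℝ} (hs0 : 0 < s) (hs1 : s ≤ 1) (Y : ℕ) :
    ∑ p ∈ Finset.Ioc 0 Y with p.Prime, Real.log p * (p : ℝ) ^ (s - 1) ≤
      Real.log 4 * (s⁻¹ * (Y : ℝ) ^ s) := by
  have hanti : Antitone fun m : ℕ => ((m + 1 : ℕ) : ℝ) ^ (s - 1) := fun m m' hm =>
    Real.rpow_le_rpow_of_nonpos (by positivity) (by exact_mod_cast Nat.succ_le_succ hm)
      (by linarith)
  have hcheb (k : ℕ) :
      ∑ m ∈ Finset.range k, (if (m + 1).Prime then Real.log (m + 1 : ℕ) else 0) ≤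
        Real.log 4 * k := by
    rw [← sum_Ioc_prime_eq_sum_range fun p => Real.log p]
    simpa only [Chebyshev.theta, Nat.floor_natCast] using
      Chebyshev.theta_le_log4_mul_x (x := (k : ℝ)) (by positivity)
  rw [sum_Ioc_prime_eq_sum_range fun p => Real.log p * (p : ℝ) ^ (s - 1)]
  calc _ = ∑ m ∈ Finset.range Y, (if (m + 1).Prime then Real.log (m + 1 : ℕ) else 0) *
        ((m + 1 : ℕ) : ℝ) ^ (s - 1) := by simp only [ite_mul, zero_mul]
    _ ≤ Real.log 4 * ∑ m ∈ Finset.range Y, ((m + 1 : ℕ) : ℝ) ^ (s - 1) :=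
        sum_mul_le_of_antitone hanti (fun m => by positivity) hcheb Y
    _ ≤ _ := by
        gcongr
        exact sum_range_rpow_sub_one_le hs0 hs1 Y

theorem summable_log_div_sq : Summable fun m : ℕ => Real.log m / (m : ℝ) ^ 2 := by
  have hsum : Summable fun m : ℕ => 2 * ((m : ℝ) ^ ((3 : ℝ) / 2))⁻¹ :=
    (Real.summable_nat_rpow_inv.mpr (by norm_num)).mul_left 2
  refine hsum.of_nonneg_of_le (fun m => div_nonneg (Real.log_natCast_nonneg m) (by positivity))
    fun m => ?_
  rcases m.eq_zero_or_pos with rfl | hm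
  · simp
  have hm0 : 0 < (m : ℝ) := by exact_mod_cast hm
  have hsq : (m : ℝ) ^ 2 = (m : ℝ) ^ ((3 : ℝ) / 2) * (m : ℝ) ^ ((1 : ℝ) / 2) := by
    rw [← Real.rpow_add hm0]
    norm_num
  rw [hsq, div_le_iff₀ (by positivity)]
  calc Real.log m ≤ (m : ℝ) ^ ((1 : ℝ) / 2) / (1 / 2) :=
        Real.log_le_rpow_div hm0.le (by norm_num)
    _ = _ := by field_simp

end PrimeSums

/-! ### Boxes in rings of integers -/

section RealBounds

theorem one_add_pow_le {x X : ℝ} (hx : 0 ≤ x) (hxX : x ≤ X) (n : ℕ) :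
    (1 + x) ^ n ≤ 1 + n * (1 + X) ^ n * x := by
  have hterm : ∀ i ∈ Finset.range n, (1 + x) ^ i ≤ (1 + X) ^ n := fun i hi =>
    (pow_le_pow_left₀ (by linarith) (by linarith) i).trans
      (pow_le_pow_right₀ (by linarith) (Finset.mem_range.1 hi).le)
  have hsum := Finset.sum_le_card_nsmul _ _ _ hterm
  rw [Finset.card_range, nsmul_eq_mul] at hsum
  have hgeom := geom_sum_mul (1 + x) n
  rw [add_sub_cancel_left] at hgeom
  linarith [mul_le_mul_of_nonneg_right hsum hx]

theorem mul_one_sub_le_two_mul_sub_add_one_pow {r R : ℝ} (hr : 0 ≤ r) (hrR : r ≤ R) (hR : 0 < R)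
    (n : ℕ) : (2 * R + 1) ^ n * (1 - n * (r / R)) ≤ (2 * (R - r) + 1) ^ n := by
  set a : ℝ := 2 * r / (2 * R + 1)
  have haR : a ≤ r / R := by
    rw [div_le_div_iff₀ (by linarith) hR]
    linarith
  have hr1 : r / R ≤ 1 := (div_le_one hR).2 hrR
  have hbern := one_add_mul_le_pow (a := -a) (by linarith) n
  calc (2 * R + 1) ^ n * (1 - n * (r / R)) ≤ (2 * R + 1) ^ n * (1 + -a) ^ n := by
        gcongr
        linarith [mul_le_mul_of_nonneg_left haR n.cast_nonneg]
    _ = (2 * (R - r) + 1) ^ n := by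
        rw [← mul_pow]
        congr 1
        have : 2 * R + 1 ≠ 0 := by linarith
        simp only [a]
        field_simp
        ring

theorem two_mul_add_add_one_pow_le {r R X : ℝ} (hr : 0 ≤ r) (hR : 0 < R) (hX : r / R ≤ X) (n : ℕ) :
    (2 * (R + r) + 1) ^ n ≤ (2 * R + 1) ^ n * (1 + n * (1 + X) ^ n * (r / R)) := by
  set a : ℝ := 2 * r / (2 * R + 1)
  have ha : 0 ≤ a := by positivity
  have haR : a ≤ r / R := by
    rw [div_le_div_iff₀ (by linarith) hR]
    linarith
  calc (2 * (R + r) + 1) ^ n = (2 * R + 1) ^ n * (1 + a) ^ n := by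
        rw [← mul_pow]
        congr 1
        have : 2 * R + 1 ≠ 0 := by linarith
        simp only [a]
        field_simp
        ring
    _ ≤ (2 * R + 1) ^ n * (1 + n * (1 + X) ^ n * a) := by
        gcongr
        exact one_add_pow_le ha (haR.trans hX) n
    _ ≤ _ := by
        have : 0 ≤ X := (ha.trans haR).trans hX
        gcongr

theorem rpow_one_div_le_of_le_mul_pow {n D R Y : ℕ} (hn : n ≠ 0) (hD : 1 ≤ D)
    (hY : Y ≤ D * R ^ n) : (Y : ℝ) ^ (1 / n : ℝ) ≤ D * R := by
  have hle : (Y : ℝ) ≤ ((D : ℝ) * R) ^ n := by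
    have hpow : D * R ^ n ≤ (D * R) ^ n := by
      rw [mul_pow]
      exact Nat.mul_le_mul_right _ (Nat.le_self_pow hn D)
    exact_mod_cast hY.trans hpow
  refine (Real.rpow_le_rpow (by positivity) hle (by positivity)).trans_eq ?_
  rw [one_div, Real.pow_rpow_inv_natCast (by positivity) hn]

end RealBounds

section CoordLattice

variable {O : Type*} [CommRing O] {ι : Type*} [Fintype ι]

/-- The lattice `I` in the coordinates given by the basis `b`. -/
noncomputable def coordLattice (b : Module.Basis ι ℤ O) (I : Ideal O) : AddSubgroup (ι → ℤ) :=
  I.toAddSubgroup.comap (b.equivFun.symm : (ι → ℤ) →+ O)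

theorem mem_coordLattice {b : Module.Basis ι ℤ O} {I : Ideal O} {x : ι → ℤ} :
    x ∈ coordLattice b I ↔ b.equivFun.symm x ∈ I := Iff.rfl

variable [IsDedekindDomain O] [Module.Free ℤ O]

theorem index_coordLattice (b : Module.Basis ι ℤ O) (I : Ideal O) :
    (coordLattice b I).index = Ideal.absNorm I := by
  rw [Ideal.absNorm_apply, Submodule.cardQuot]
  exact AddSubgroup.index_comap_of_surjective _ b.equivFun.symm.surjective

variable [Module.Finite ℤ O]

theorem exists_mem_abs_coord_le (b : Module.Basis ι ℤ O) {I : Ideal O} (hI : I ≠ ⊥) {h : ℕ}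
    (hh : Ideal.absNorm I < (h + 1) ^ Fintype.card ι) :
    ∃ z ∈ I, z ≠ 0 ∧ ∀ i, |b.equivFun z i| ≤ h := by
  classical
  have := Ideal.finiteQuotientOfFreeOfNeBot I hI
  have := Fintype.ofFinite (O ⧸ I)
  let e (v : ι → Fin (h + 1)) : O := b.equivFun.symm fun i => ((v i : ℕ) : ℤ)
  have hcard : Fintype.card (O ⧸ I) < Fintype.card (ι → Fin (h + 1)) := by
    rw [Ideal.absNorm_apply, Submodule.cardQuot_apply, Nat.card_eq_fintype_card] at hh
    rw [Fintype.card_fun, Fintype.card_fin]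
    exact hh
  obtain ⟨v, w, hvw, hf⟩ := Fintype.exists_ne_map_eq_of_card_lt
    (fun v => Ideal.Quotient.mk I (e v)) hcard
  refine ⟨e v - e w, Ideal.Quotient.eq.mp hf, fun h0 => hvw ?_, fun i => ?_⟩
  · ext i
    exact_mod_cast congrFun (b.equivFun.symm.injective (sub_eq_zero.mp h0)) i
  · simp only [e, map_sub, LinearEquiv.apply_symm_apply, Pi.sub_apply]
    rw [abs_le]
    have := (v i).2
    have := (w i).2
    constructor <;> omega

end CoordLattice

section Boxes

variable {O : Type*} [CommRing O] {ι : Type*} [Fintype ι] [DecidableEq ι]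

theorem leftMulMatrix_apply_eq_sum (b : Module.Basis ι ℤ O) (z : O) (i j : ι) :
    Algebra.leftMulMatrix b z i j =
      ∑ k, b.equivFun z k * Algebra.leftMulMatrix b (b k) i j := by
  conv_lhs => rw [← b.sum_equivFun z]
  simp only [map_sum, map_smul, Matrix.sum_apply, Matrix.smul_apply, smul_eq_mul]

theorem exists_abs_leftMulMatrix_le (b : Module.Basis ι ℤ O) : ∃ C : ℕ, 1 ≤ C ∧
    ∀ (z : O) (h : ℕ), (∀ i, |b.equivFun z i| ≤ h) →
      ∀ i j, |Algebra.leftMulMatrix b z i j| ≤ (C * h : ℕ) := by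
  let a (k : ι) (ij : ι × ι) : ℕ := (Algebra.leftMulMatrix b (b k) ij.1 ij.2).natAbs
  refine ⟨1 + ∑ k, ∑ ij, a k ij, Nat.le_add_right _ _, fun z h hz i j => ?_⟩
  calc |Algebra.leftMulMatrix b z i j|
      = |∑ k, b.equivFun z k * Algebra.leftMulMatrix b (b k) i j| := by
        rw [leftMulMatrix_apply_eq_sum]
    _ ≤ ∑ k, |b.equivFun z k| * a k (i, j) := by
        refine (Finset.abs_sum_le_sum_abs _ _).trans_eq ?_
        simp only [a, abs_mul, Int.natCast_natAbs]
    _ ≤ ∑ k, (h : ℤ) * (∑ ij, a k ij : ℕ) := by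
        gcongr with k
        · exact hz k
        · exact Finset.single_le_sum (fun _ _ => Nat.zero_le _) (Finset.mem_univ (i, j))
    _ ≤ _ := by
        rw [← Finset.mul_sum]
        push_cast
        nlinarith

theorem exists_det_one_add_bounds (ι : Type*) [Fintype ι] [DecidableEq ι] : ∃ δ : ℝ, 0 < δ ∧
    ∀ E : Matrix ι ι ℝ, (∀ i j, |E i j| ≤ δ) → 1 / 2 ≤ (1 + E).det ∧ (1 + E).det ≤ 2 := by
  have hcont : Continuous fun E : ι → ι → ℝ => (1 + Matrix.of E).det :=
    Continuous.matrix_det (continuous_const.add (by fun_prop))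
  have hlim := hcont.tendsto 0
  rw [show (1 + Matrix.of (0 : ι → ι → ℝ)).det = 1 by simp, Metric.tendsto_nhds_nhds] at hlim
  obtain ⟨δ, hδ, hdet⟩ := hlim (1 / 2) (by norm_num)
  refine ⟨δ / 2, by positivity, fun E hE => ?_⟩
  have hdist : dist (fun i j => E i j : ι → ι → ℝ) 0 < δ := by
    refine (dist_pi_lt_iff hδ).mpr fun i => (dist_pi_lt_iff hδ).mpr fun j => ?_
    rw [Pi.zero_apply, Pi.zero_apply, Real.dist_eq, sub_zero]
    linarith [hE i j]
  have hclose : |(1 + E).det - 1| < 1 / 2 := hdet hdist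
  rw [abs_lt] at hclose
  constructor <;> linarith

/-- The elements of `O` whose coordinates differ from those of `T` by at most `R`. -/
noncomputable def box (b : Module.Basis ι ℤ O) (T R : ℕ) : Finset O :=
  (cube ι R).map ⟨fun x => (T : O) + b.equivFun.symm x,
    fun _ _ h => b.equivFun.symm.injective (add_left_cancel h)⟩

theorem card_box (b : Module.Basis ι ℤ O) (T R : ℕ) :
    (box b T R).card = (2 * R + 1) ^ Fintype.card ι := by
  rw [box, Finset.card_map, card_cube]

open Classical in
theorem card_filter_box (b : Module.Basis ι ℤ O) (I : Ideal O) (T R : ℕ) :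
    ((box b T R).filter fun z => z ∈ I).card =
      ((cube ι R).filter fun x => b.equivFun (T : O) + x ∈ coordLattice b I).card := by
  rw [box, Finset.filter_map, Finset.card_map]
  refine congrArg _ (Finset.filter_congr fun x _ => ?_)
  rw [mem_coordLattice, map_add, LinearEquiv.symm_apply_apply]
  rfl

variable [IsDedekindDomain O] [Module.Free ℤ O] [Module.Finite ℤ O]

theorem absNorm_span_natCast_add (b : Module.Basis ι ℤ O) {T : ℕ} (hT : 0 < T) (x : O) :
    (Ideal.absNorm (Ideal.span {(T : O) + x}) : ℝ) = |(T : ℝ) ^ Fintype.card ι *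
      (1 + (T : ℝ)⁻¹ • (Algebra.leftMulMatrix b x).map (Int.cast : ℤ → ℝ)).det| := by
  have hT0 : (T : ℝ) ≠ 0 := by exact_mod_cast hT.ne'
  have hmat : (Algebra.leftMulMatrix b ((T : O) + x)).map (Int.cast : ℤ → ℝ) =
      (T : ℝ) • (1 + (T : ℝ)⁻¹ • (Algebra.leftMulMatrix b x).map (Int.cast : ℤ → ℝ)) := by
    rw [smul_add, smul_inv_smul₀ hT0, map_add, map_natCast,
      Matrix.map_add _ Int.cast_add, ← Matrix.diagonal_natCast,
      Matrix.diagonal_map Int.cast_zero, ← Matrix.diagonal_one, ← Matrix.diagonal_smul]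
    congr
    ext i
    simp
  have hdet : (((Algebra.leftMulMatrix b ((T : O) + x)).det : ℤ) : ℝ) =
      ((Algebra.leftMulMatrix b ((T : O) + x)).map (Int.cast : ℤ → ℝ)).det :=
    (Int.castRingHom ℝ).map_det _
  rw [Ideal.absNorm_span_singleton, Algebra.norm_eq_matrix_det b, Nat.cast_natAbs, Int.cast_abs,
    hdet, hmat, Matrix.det_smul]

theorem exists_absNorm_natCast_add_bounds (b : Module.Basis ι ℤ O) : ∃ δ : ℝ, 0 < δ ∧
    ∀ (T : ℕ) (x : O), 0 < T → (∀ i j, |(Algebra.leftMulMatrix b x i j : ℝ)| ≤ δ * T) →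
      (T : ℝ) ^ Fintype.card ι / 2 ≤ Ideal.absNorm (Ideal.span {(T : O) + x}) ∧
      Ideal.absNorm (Ideal.span {(T : O) + x}) ≤ 2 * T ^ Fintype.card ι := by
  obtain ⟨δ, hδ, hdet⟩ := exists_det_one_add_bounds ι
  refine ⟨δ, hδ, fun T x hT hx => ?_⟩
  have hT0 : (0 : ℝ) < T := by exact_mod_cast hT
  obtain ⟨hlo, hhi⟩ := hdet ((T : ℝ)⁻¹ • (Algebra.leftMulMatrix b x).map (Int.cast : ℤ → ℝ))
    fun i j => by
      rw [Matrix.smul_apply, Matrix.map_apply, smul_eq_mul, abs_mul, abs_inv, abs_of_pos hT0,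
        inv_mul_le_iff₀ hT0, mul_comm]
      exact hx i j
  have hTn : (0 : ℝ) < (T : ℝ) ^ Fintype.card ι := by positivity
  have hnorm := absNorm_span_natCast_add b hT x
  rw [abs_of_nonneg (mul_nonneg hTn.le (by linarith))] at hnorm
  constructor
  · rw [hnorm]
    linarith [mul_le_mul_of_nonneg_left hlo hTn.le]
  · have : (Ideal.absNorm (Ideal.span {(T : O) + x}) : ℝ) ≤ 2 * (T : ℝ) ^ Fintype.card ι := by
      rw [hnorm]
      linarith [mul_le_mul_of_nonneg_left hhi hTn.le]
    exact_mod_cast this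

theorem exists_absNorm_bounds_of_mem_box (b : Module.Basis ι ℤ O) : ∃ k D : ℕ, 1 ≤ D ∧
    ∀ R : ℕ, 1 ≤ R → ∀ z ∈ box b (k * R) R,
      (R : ℝ) ^ Fintype.card ι / D ≤ Ideal.absNorm (Ideal.span {z}) ∧
      Ideal.absNorm (Ideal.span {z}) ≤ D * R ^ Fintype.card ι := by
  obtain ⟨C, -, hC⟩ := exists_abs_leftMulMatrix_le b
  obtain ⟨δ, hδ, hnorm⟩ := exists_absNorm_natCast_add_bounds b
  obtain ⟨k, hk⟩ := exists_nat_gt (C / δ)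
  have hk1 : 1 ≤ k := by
    have : (0 : ℝ) < k := lt_of_le_of_lt (by positivity) hk
    exact_mod_cast this
  have hkn : 1 ≤ k ^ Fintype.card ι := Nat.one_le_pow _ _ hk1
  refine ⟨k, 2 * k ^ Fintype.card ι, by omega, fun R hR z hz => ?_⟩
  obtain ⟨x, hx, rfl⟩ := Finset.mem_map.1 hz
  obtain ⟨hlo, hhi⟩ := hnorm (k * R) (b.equivFun.symm x) (Nat.mul_pos hk1 hR) fun i j => by
    have hentry := hC (b.equivFun.symm x) R
      (fun i => by simpa only [LinearEquiv.apply_symm_apply] using mem_cube.1 hx i) i j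
    have hCk : (C : ℝ) ≤ δ * k := ((div_lt_iff₀' hδ).1 hk).le
    calc |(Algebra.leftMulMatrix b (b.equivFun.symm x) i j : ℝ)| ≤ C * R := by
          exact_mod_cast hentry
      _ ≤ δ * k * R := by gcongr
      _ = δ * (k * R : ℕ) := by push_cast; ring
  refine ⟨le_trans ?_ hlo, hhi.trans_eq (by rw [mul_pow, mul_assoc])⟩
  have hkn' : (1 : ℝ) ≤ (k : ℝ) ^ Fintype.card ι := by exact_mod_cast hkn
  push_cast
  rw [mul_pow, div_le_div_iff₀ (by positivity) two_pos]
  have hRn : (0 : ℝ) ≤ (R : ℝ) ^ Fintype.card ι := by positivity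
  nlinarith [mul_le_mul_of_nonneg_left (one_le_mul_of_one_le_of_one_le hkn' hkn') hRn]

theorem exists_mem_cube_sub_mem_coordLattice (b : Module.Basis ι ℤ O) : ∃ C : ℕ, 1 ≤ C ∧
    ∀ I : Ideal O, I ≠ ⊥ → ∀ h : ℕ, Ideal.absNorm I < (h + 1) ^ Fintype.card ι →
      ∀ x : ι → ℤ, ∃ y ∈ cube ι (C * h), x - y ∈ coordLattice b I := by
  obtain ⟨C, hC1, hC⟩ := exists_abs_leftMulMatrix_le b
  have : Nonempty ι := b.index_nonempty
  refine ⟨Fintype.card ι * C, Nat.mul_pos Fintype.card_pos hC1, fun I hI h hh x => ?_⟩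
  obtain ⟨z, hzI, hz0, hz⟩ := exists_mem_abs_coord_le b hI hh
  have hdet : (Algebra.leftMulMatrix b z).det ≠ 0 := by
    rw [← Algebra.norm_eq_matrix_det]
    exact Algebra.norm_ne_zero_iff.mpr hz0
  obtain ⟨y, hy⟩ := exists_sub_mulVec_mem_cube hdet (hC z h hz) x
  have hmul : (Algebra.leftMulMatrix b z).mulVec y = b.equivFun (z * b.equivFun.symm y) := by
    have := Algebra.leftMulMatrix_mulVec_repr b z (b.equivFun.symm y)
    rwa [show (⇑(b.repr (b.equivFun.symm y)) : ι → ℤ) = y from b.equivFun.apply_symm_apply y]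
      at this
  refine ⟨_, by rwa [mul_assoc], ?_⟩
  rw [sub_sub_cancel, mem_coordLattice, hmul, LinearEquiv.symm_apply_apply]
  exact I.mul_mem_right _ hzI

open Classical in
theorem exists_card_filter_box_bounds (b : Module.Basis ι ℤ O) : ∃ C : ℝ, 0 < C ∧
    ∀ I : Ideal O, I ≠ ⊥ → ∃ r : ℕ,
      (r : ℝ) ≤ C * (Ideal.absNorm I : ℝ) ^ (1 / Fintype.card ι : ℝ) ∧ ∀ T R : ℕ,
        Ideal.absNorm I * ((box b T R).filter fun z => z ∈ I).card ≤
          (2 * (R + r) + 1) ^ Fintype.card ι ∧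
        (r ≤ R → (2 * (R - r) + 1) ^ Fintype.card ι ≤
          Ideal.absNorm I * ((box b T R).filter fun z => z ∈ I).card) := by
  obtain ⟨C, hC1, hC⟩ := exists_mem_cube_sub_mem_coordLattice b
  have : Nonempty ι := b.index_nonempty
  refine ⟨C, by exact_mod_cast hC1, fun I hI => ?_⟩
  set s : ℝ := (Ideal.absNorm I : ℝ) ^ (1 / Fintype.card ι : ℝ) with hs
  have hs0 : 0 ≤ s := by positivity
  have hlt : Ideal.absNorm I < (⌊s⌋₊ + 1) ^ Fintype.card ι := by
    have hpow : (Ideal.absNorm I : ℝ) = s ^ Fintype.card ι := by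
      rw [hs, one_div, Real.rpow_inv_natCast_pow (by positivity) Fintype.card_ne_zero]
    have hfloor := pow_lt_pow_left₀ (Nat.lt_floor_add_one s) hs0 (Fintype.card_ne_zero (α := ι))
    rw [← hpow] at hfloor
    exact_mod_cast hfloor
  refine ⟨C * ⌊s⌋₊, ?_, fun T R => ?_⟩
  · push_cast
    gcongr
    exact Nat.floor_le hs0
  · rw [card_filter_box, ← index_coordLattice b]
    exact ⟨index_mul_card_filter_cube_le (hC I hI _ hlt) _ _,
      le_index_mul_card_filter_cube (hC I hI _ hlt) _⟩

end Boxes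

section EquidistributedBox

variable {O : Type*} [CommRing O] [IsDedekindDomain O] [Module.Free ℤ O]

open Classical in
/-- A finite set `B` of elements of the order `O` of rank `n`, all of norm of exact order `R ^ n`,
such that every nonzero ideal `I` contains the expected proportion `1 / N(I)` of `B`, up to the
relative error `E * N(I) ^ (1 / n) / R`; the upper bound is only required for `N(I) ≤ D * R ^ n`. -/
structure EquidistributedBox (D : ℕ) (E : ℝ) (R : ℕ) (B : Finset O) : Prop where
  nonempty : B.Nonempty
  le_absNorm : ∀ z ∈ B, (R : ℝ) ^ Module.finrank ℤ O / D ≤ Ideal.absNorm (Ideal.span {z})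
  absNorm_le : ∀ z ∈ B, Ideal.absNorm (Ideal.span {z}) ≤ D * R ^ Module.finrank ℤ O
  card_mul_le : ∀ I : Ideal O, I ≠ ⊥ →
    (B.card : ℝ) * (1 - E * ((Ideal.absNorm I : ℝ) ^ (1 / Module.finrank ℤ O : ℝ) / R)) ≤
      Ideal.absNorm I * (B.filter fun z => z ∈ I).card
  mul_card_le : ∀ I : Ideal O, I ≠ ⊥ → Ideal.absNorm I ≤ D * R ^ Module.finrank ℤ O →
    (Ideal.absNorm I : ℝ) * (B.filter fun z => z ∈ I).card ≤
      B.card * (1 + E * ((Ideal.absNorm I : ℝ) ^ (1 / Module.finrank ℤ O : ℝ) / R))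

open Classical in
theorem card_box_mul_le {ι : Type*} [Fintype ι] [DecidableEq ι] [Nonempty ι]
    (b : Module.Basis ι ℤ O) {I : Ideal O} {T R r : ℕ} (hR : 0 < R) {t E : ℝ} (hrt : (r : ℝ) ≤ t)
    (hE : Fintype.card ι * t ≤ E)
    (h : r ≤ R → (2 * (R - r) + 1) ^ Fintype.card ι ≤
      Ideal.absNorm I * ((box b T R).filter fun z => z ∈ I).card) :
    ((box b T R).card : ℝ) * (1 - E / R) ≤
      Ideal.absNorm I * ((box b T R).filter fun z => z ∈ I).card := by
  have hR0 : (0 : ℝ) < R := by exact_mod_cast hR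
  have hrE : Fintype.card ι * (r / R : ℝ) ≤ E / R := by
    rw [← mul_div_assoc]
    gcongr
    exact (by gcongr : (Fintype.card ι : ℝ) * r ≤ Fintype.card ι * t).trans hE
  rcases le_or_gt r R with hrR | hrR
  · have hcast : (2 * ((R : ℝ) - r) + 1) ^ Fintype.card ι ≤
        Ideal.absNorm I * ((box b T R).filter fun z => z ∈ I).card := by
      have := h hrR
      rw [← Nat.cast_sub hrR]
      exact_mod_cast this
    refine le_trans ?_ ((mul_one_sub_le_two_mul_sub_add_one_pow r.cast_nonneg
      (by exact_mod_cast hrR) hR0 _).trans hcast)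
    rw [card_box]
    push_cast
    gcongr
  · have hn : (1 : ℝ) ≤ Fintype.card ι := by exact_mod_cast Fintype.card_pos (α := ι)
    have hr1 : (1 : ℝ) ≤ r / R := (one_le_div hR0).2 (by exact_mod_cast hrR.le)
    have hneg : 1 - E / R ≤ 0 := by linarith [one_le_mul_of_one_le_of_one_le hn hr1]
    exact (mul_nonpos_of_nonneg_of_nonpos (by positivity) hneg).trans (by positivity)

open Classical in
theorem mul_card_filter_box_le {ι : Type*} [Fintype ι] [DecidableEq ι]
    (b : Module.Basis ι ℤ O) {I : Ideal O} {T R r : ℕ} (hR : 0 < R) {t E X : ℝ}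
    (hrt : (r : ℝ) ≤ t) (hX : t / R ≤ X) (hE : Fintype.card ι * (1 + X) ^ Fintype.card ι * t ≤ E)
    (h : Ideal.absNorm I * ((box b T R).filter fun z => z ∈ I).card ≤
      (2 * (R + r) + 1) ^ Fintype.card ι) :
    (Ideal.absNorm I : ℝ) * ((box b T R).filter fun z => z ∈ I).card ≤
      (box b T R).card * (1 + E / R) := by
  have hR0 : (0 : ℝ) < R := by exact_mod_cast hR
  have hrX : (r / R : ℝ) ≤ X := le_trans (by gcongr) hX
  have hX0 : 0 ≤ X := le_trans (by positivity) hrX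
  have hrE : Fintype.card ι * (1 + X) ^ Fintype.card ι * (r / R : ℝ) ≤ E / R := by
    rw [← mul_div_assoc]
    gcongr
    exact le_trans (by gcongr) hE
  have hcast : (Ideal.absNorm I : ℝ) * ((box b T R).filter fun z => z ∈ I).card ≤
      (2 * ((R : ℝ) + r) + 1) ^ Fintype.card ι := by exact_mod_cast h
  refine hcast.trans ((two_mul_add_add_one_pow_le r.cast_nonneg hR0 hrX _).trans ?_)
  rw [card_box]
  push_cast
  gcongr

variable (O) [Module.Finite ℤ O]

theorem exists_equidistributedBox : ∃ D : ℕ, 1 ≤ D ∧ ∃ E : ℝ, 0 < E ∧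
    ∀ R : ℕ, 1 ≤ R → ∃ B : Finset O, EquidistributedBox D E R B := by
  classical
  let b := Module.Free.chooseBasis ℤ O
  obtain ⟨k, D, hD, hnorm⟩ := exists_absNorm_bounds_of_mem_box b
  obtain ⟨C, hC, hcount⟩ := exists_card_filter_box_bounds b
  have hne : Nonempty (Module.Free.ChooseBasisIndex ℤ O) := b.index_nonempty
  have hn : Module.finrank ℤ O = Fintype.card (Module.Free.ChooseBasisIndex ℤ O) :=
    Module.finrank_eq_card_chooseBasisIndex ℤ O
  set n := Fintype.card (Module.Free.ChooseBasisIndex ℤ O)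
  have hn0 : n ≠ 0 := Fintype.card_ne_zero
  have hpow : (1 : ℝ) ≤ (1 + C * D) ^ n := one_le_pow₀ (le_add_of_nonneg_right (by positivity))
  refine ⟨D, hD, n * (1 + C * D) ^ n * C, by positivity, fun R hR => ⟨box b (k * R) R, ?_⟩⟩
  have hR0 : (0 : ℝ) < R := by exact_mod_cast hR
  constructor
  · exact Finset.card_pos.1 (by rw [card_box]; positivity)
  all_goals rw [hn]
  · exact fun z hz => (hnorm R hR z hz).1
  · exact fun z hz => (hnorm R hR z hz).2
  · intro I hI
    obtain ⟨r, hr, hbox⟩ := hcount I hI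
    rw [← mul_div_assoc]
    refine card_box_mul_le b hR hr ?_ (hbox _ _).2
    rw [← mul_assoc]
    gcongr
    exact le_mul_of_one_le_right n.cast_nonneg hpow
  · intro I hI hID
    obtain ⟨r, hr, hbox⟩ := hcount I hI
    rw [← mul_div_assoc]
    refine mul_card_filter_box_le b hR hr (X := C * D) ?_ (by rw [← mul_assoc]) (hbox _ _).1
    rw [div_le_iff₀ hR0, mul_assoc]
    gcongr
    exact rpow_one_div_le_of_le_mul_pow hn0 hD hID

end EquidistributedBox

/-! ### Prime ideals and rational primes -/

section PrimeIdeals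

variable {O : Type*} [CommRing O] [IsDedekindDomain O] [Module.Free ℤ O]

theorem absNorm_ne_one_of_prime {𝔭 : Ideal O} (h𝔭 : Prime 𝔭) : Ideal.absNorm 𝔭 ≠ 1 := by
  rw [Ne, Ideal.absNorm_eq_one_iff]
  exact (Ideal.isPrime_of_prime h𝔭).ne_top

theorem prime_minFac_absNorm {𝔭 : Ideal O} (h𝔭 : Prime 𝔭) : (Ideal.absNorm 𝔭).minFac.Prime :=
  Nat.minFac_prime (absNorm_ne_one_of_prime h𝔭)

theorem prod_absNorm_dvd_absNorm_span {T : Finset (Ideal O)} (hT : ∀ 𝔭 ∈ T, Prime 𝔭) {z : O}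
    (hz : ∀ 𝔭 ∈ T, z ∈ 𝔭) : ∏ 𝔭 ∈ T, Ideal.absNorm 𝔭 ∣ Ideal.absNorm (Ideal.span {z}) := by
  rw [← map_prod]
  exact map_dvd _ (Finset.prod_primes_dvd _ hT fun 𝔭 h => Ideal.dvd_span_singleton.2 (hz 𝔭 h))

variable [Module.Finite ℤ O]

theorem two_le_absNorm_of_prime {𝔭 : Ideal O} (h𝔭 : Prime 𝔭) : 2 ≤ Ideal.absNorm 𝔭 :=
  Nat.two_le_iff _ |>.2 ⟨by rw [Ne, Ideal.absNorm_eq_zero_iff]; exact h𝔭.ne_zero,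
    absNorm_ne_one_of_prime h𝔭⟩

theorem minFac_absNorm_le {𝔭 : Ideal O} (h𝔭 : Prime 𝔭) :
    (Ideal.absNorm 𝔭).minFac ≤ Ideal.absNorm 𝔭 :=
  Nat.minFac_le (by linarith [two_le_absNorm_of_prime h𝔭])

theorem sum_log_absNorm_le_log_absNorm_span {T : Finset (Ideal O)} (hT : ∀ 𝔭 ∈ T, Prime 𝔭) {z : O}
    (hz0 : z ≠ 0) (hz : ∀ 𝔭 ∈ T, z ∈ 𝔭) :
    ∑ 𝔭 ∈ T, Real.log (Ideal.absNorm 𝔭) ≤ Real.log (Ideal.absNorm (Ideal.span {z})) := by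
  have hpos : ∀ 𝔭 ∈ T, 0 < Ideal.absNorm 𝔭 := fun 𝔭 h =>
    two_pos.trans_le (two_le_absNorm_of_prime (hT 𝔭 h))
  have hspan : 0 < Ideal.absNorm (Ideal.span {z}) := Nat.pos_of_ne_zero <| by
    rwa [Ne, Ideal.absNorm_eq_zero_iff, Ideal.span_singleton_eq_bot]
  rw [← Real.log_prod fun 𝔭 h => Nat.cast_ne_zero.2 (hpos 𝔭 h).ne', ← Nat.cast_prod]
  refine Real.log_le_log (by exact_mod_cast Finset.prod_pos hpos) ?_
  exact_mod_cast Nat.le_of_dvd hspan (prod_absNorm_dvd_absNorm_span hT hz)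

theorem exists_absNorm_eq_minFac_pow {𝔭 : Ideal O} (h𝔭 : Prime 𝔭) :
    ∃ f : ℕ, f ≠ 0 ∧ Ideal.absNorm 𝔭 = (Ideal.absNorm 𝔭).minFac ^ f := by
  have := Ideal.isPrime_of_prime h𝔭
  have := this.isMaximal h𝔭.ne_zero
  obtain ⟨p, f, hf, -, hp, h⟩ := Ideal.exists_prime_and_absNorm_eq_pow 𝔭
  refine ⟨f, hf.ne', ?_⟩
  rw [h, Nat.pow_minFac hf.ne', hp.minFac_eq]

theorem minFac_absNorm_mem {𝔭 : Ideal O} (h𝔭 : Prime 𝔭) :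
    (((Ideal.absNorm 𝔭).minFac : ℕ) : O) ∈ 𝔭 := by
  obtain ⟨f, -, h⟩ := exists_absNorm_eq_minFac_pow h𝔭
  have hmem := Ideal.absNorm_mem 𝔭
  rw [h, Nat.cast_pow] at hmem
  exact (Ideal.isPrime_of_prime h𝔭).mem_of_pow_mem _ hmem

theorem minFac_sq_le_absNorm {𝔭 : Ideal O} (h𝔭 : Prime 𝔭) (hdeg : ¬ (Ideal.absNorm 𝔭).Prime) :
    (Ideal.absNorm 𝔭).minFac ^ 2 ≤ Ideal.absNorm 𝔭 :=
  Nat.minFac_sq_le_self (by linarith [two_le_absNorm_of_prime h𝔭]) hdeg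

theorem absNorm_dvd_minFac_pow {𝔭 : Ideal O} (h𝔭 : Prime 𝔭) :
    Ideal.absNorm 𝔭 ∣ (Ideal.absNorm 𝔭).minFac ^ Module.finrank ℤ O := by
  rw [← Ideal.absNorm_span_natCast (S := O)]
  exact Ideal.absNorm_dvd_absNorm_of_le
    ((Ideal.span_singleton_le_iff_mem _).mpr (minFac_absNorm_mem h𝔭))

theorem log_absNorm_le_finrank_mul {𝔭 : Ideal O} (h𝔭 : Prime 𝔭) :
    Real.log (Ideal.absNorm 𝔭) ≤ Module.finrank ℤ O * Real.log (Ideal.absNorm 𝔭).minFac := by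
  have hp := prime_minFac_absNorm h𝔭
  have hle := Nat.le_of_dvd (pow_pos hp.pos _) (absNorm_dvd_minFac_pow h𝔭)
  rw [← Real.log_pow]
  exact Real.log_le_log (Nat.cast_pos.2 (two_pos.trans_le (two_le_absNorm_of_prime h𝔭)))
    (by exact_mod_cast hle)

theorem card_le_finrank_of_minFac_absNorm_eq {T : Finset (Ideal O)} (hT : ∀ 𝔭 ∈ T, Prime 𝔭)
    {p : ℕ} (hp : p.Prime) (h : ∀ 𝔭 ∈ T, (Ideal.absNorm 𝔭).minFac = p) :
    T.card ≤ Module.finrank ℤ O := by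
  have hdvd := prod_absNorm_dvd_absNorm_span hT (z := (p : O)) fun 𝔭 h𝔭 => by
    rw [← h 𝔭 h𝔭]
    exact minFac_absNorm_mem (hT 𝔭 h𝔭)
  rw [Ideal.absNorm_span_natCast] at hdvd
  have hpow : p ^ T.card ≤ ∏ 𝔭 ∈ T, Ideal.absNorm 𝔭 := by
    rw [← Finset.prod_const]
    refine Finset.prod_le_prod' fun 𝔭 h𝔭 => ?_
    rw [← h 𝔭 h𝔭]
    exact minFac_absNorm_le (hT 𝔭 h𝔭)
  exact (Nat.pow_le_pow_iff_right hp.one_lt).mp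
    (hpow.trans (Nat.le_of_dvd (pow_pos hp.pos _) hdvd))

theorem sum_minFac_absNorm_le {T : Finset (Ideal O)} (hT : ∀ 𝔭 ∈ T, Prime 𝔭) {Y : ℕ}
    (hY : ∀ 𝔭 ∈ T, Ideal.absNorm 𝔭 ≤ Y) {g : ℕ → ℝ} (hg : ∀ p : ℕ, 0 ≤ g p) :
    ∑ 𝔭 ∈ T, g (Ideal.absNorm 𝔭).minFac ≤
      Module.finrank ℤ O * ∑ p ∈ Finset.Ioc 0 Y with p.Prime, g p := by
  have hmaps : ∀ 𝔭 ∈ T, (Ideal.absNorm 𝔭).minFac ∈ (Finset.Ioc 0 Y).filter Nat.Prime := by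
    intro 𝔭 h𝔭
    have hp := prime_minFac_absNorm (hT 𝔭 h𝔭)
    exact Finset.mem_filter.mpr ⟨Finset.mem_Ioc.mpr
      ⟨hp.pos, (minFac_absNorm_le (hT 𝔭 h𝔭)).trans (hY 𝔭 h𝔭)⟩, hp⟩
  rw [← Finset.sum_fiberwise_of_maps_to hmaps, Finset.mul_sum]
  refine Finset.sum_le_sum fun p hp => ?_
  have hcard := card_le_finrank_of_minFac_absNorm_eq
    (T := T.filter fun 𝔭 => (Ideal.absNorm 𝔭).minFac = p)
    (fun 𝔭 h => hT 𝔭 (Finset.mem_filter.mp h).1) (Finset.mem_filter.mp hp).2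
    (fun 𝔭 h => (Finset.mem_filter.mp h).2)
  rw [Finset.sum_congr rfl fun 𝔭 h => congrArg g (Finset.mem_filter.mp h).2, Finset.sum_const,
    nsmul_eq_mul]
  exact mul_le_mul_of_nonneg_right (by exact_mod_cast hcard) (hg p)

open Classical in
/-- The nonzero prime ideals of norm at most `Y`. -/
noncomputable def primesUpTo (O : Type*) [CommRing O] [IsDedekindDomain O] [Module.Free ℤ O]
    [Module.Finite ℤ O] [CharZero O] (Y : ℕ) : Finset (Ideal O) :=
  (Ideal.finite_setOfPred_absNorm_le (S := O) Y).toFinset.filter Prime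

variable [CharZero O]

theorem mem_primesUpTo {Y : ℕ} {𝔭 : Ideal O} :
    𝔭 ∈ primesUpTo O Y ↔ Ideal.absNorm 𝔭 ≤ Y ∧ Prime 𝔭 := by
  simp [primesUpTo]

/-- The prime ideals of degree one, that is, of prime norm, of norm at most `Y`. -/
noncomputable def degOne (O : Type*) [CommRing O] [IsDedekindDomain O] [Module.Free ℤ O]
    [Module.Finite ℤ O] [CharZero O] (Y : ℕ) : Finset (Ideal O) :=
  (primesUpTo O Y).filter fun 𝔭 => (Ideal.absNorm 𝔭).Prime

theorem mem_degOne {Y : ℕ} {𝔭 : Ideal O} :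
    𝔭 ∈ degOne O Y ↔ (Ideal.absNorm 𝔭 ≤ Y ∧ Prime 𝔭) ∧ (Ideal.absNorm 𝔭).Prime := by
  rw [degOne, Finset.mem_filter, mem_primesUpTo]

end PrimeIdeals

section Factorization

variable {O : Type*} [CommRing O] [IsDedekindDomain O]

open Classical in
theorem pow_dvd_of_le_count_normalizedFactors {I : Ideal O} (hI : I ≠ ⊥) {𝔭 : Ideal O} {k : ℕ}
    (hk : k ≤ (normalizedFactors I).count 𝔭) : 𝔭 ^ k ∣ I := by
  rw [← Multiset.prod_replicate]
  exact (Multiset.prod_dvd_prod_of_le (Multiset.le_count_iff_replicate_le.mp hk)).trans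
    (Ideal.prod_normalizedFactors_eq_self hI).dvd

variable [Module.Free ℤ O] [Module.Finite ℤ O]

theorem absNorm_pow_le_of_dvd {I 𝔭 : Ideal O} (hI : I ≠ ⊥) {k : ℕ} (h : 𝔭 ^ k ∣ I) :
    Ideal.absNorm 𝔭 ^ k ≤ Ideal.absNorm I := by
  rw [← map_pow]
  exact Nat.le_of_dvd (Nat.pos_of_ne_zero (by rwa [Ne, Ideal.absNorm_eq_zero_iff])) (map_dvd _ h)

open Classical in
theorem count_normalizedFactors_le_card {I 𝔭 : Ideal O} (hI : I ≠ ⊥) (h𝔭 : Prime 𝔭) {Y : ℕ}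
    (hY : Ideal.absNorm I ≤ Y) :
    (normalizedFactors I).count 𝔭 ≤ ((Finset.Icc 1 Y).filter fun k => 𝔭 ^ k ∣ I).card := by
  rw [← Nat.add_sub_cancel ((normalizedFactors I).count 𝔭) 1, ← Nat.card_Icc]
  refine Finset.card_le_card fun k hk => ?_
  rw [Finset.mem_Icc] at hk
  have hdvd := pow_dvd_of_le_count_normalizedFactors hI hk.2
  have hkY : k ≤ Y := (Nat.lt_pow_self (two_le_absNorm_of_prime h𝔭)).le.trans
    ((absNorm_pow_le_of_dvd hI hdvd).trans hY)
  exact Finset.mem_filter.mpr ⟨Finset.mem_Icc.mpr ⟨hk.1, hkY⟩, hdvd⟩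

open Classical in
theorem log_absNorm_eq_sum {I : Ideal O} (hI : I ≠ ⊥) :
    Real.log (Ideal.absNorm I) = ∑ 𝔭 ∈ (normalizedFactors I).toFinset,
      (normalizedFactors I).count 𝔭 * Real.log (Ideal.absNorm 𝔭) := by
  conv_lhs => rw [← Ideal.prod_normalizedFactors_eq_self hI, Finset.prod_multiset_count, map_prod,
    Nat.cast_prod]
  rw [Real.log_prod]
  · simp only [map_pow, Nat.cast_pow, Real.log_pow]
  · intro 𝔭 h
    have hnorm := two_le_absNorm_of_prime (prime_of_normalized_factor 𝔭 (Multiset.mem_toFinset.1 h))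
    rw [map_pow]
    positivity

open Classical in
theorem log_absNorm_span_le_sum [CharZero O] {Y : ℕ} {z : O} (hz : z ≠ 0)
    (hY : Ideal.absNorm (Ideal.span {z}) ≤ Y) :
    Real.log (Ideal.absNorm (Ideal.span {z})) ≤
      ∑ 𝔭 ∈ primesUpTo O Y, ∑ k ∈ Finset.Icc 1 Y with z ∈ 𝔭 ^ k, Real.log (Ideal.absNorm 𝔭) := by
  have hI : Ideal.span {z} ≠ ⊥ := by rwa [Ne, Ideal.span_singleton_eq_bot]
  have hprime : ∀ 𝔭 ∈ (normalizedFactors (Ideal.span {z})).toFinset, Prime 𝔭 := fun 𝔭 h =>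
    prime_of_normalized_factor 𝔭 (Multiset.mem_toFinset.1 h)
  rw [log_absNorm_eq_sum hI]
  refine (Finset.sum_le_sum fun 𝔭 h => ?_).trans (Finset.sum_le_sum_of_subset_of_nonneg
    (fun 𝔭 h => mem_primesUpTo.2 ⟨?_, hprime 𝔭 h⟩)
    fun 𝔭 _ _ => Finset.sum_nonneg fun k _ => Real.log_natCast_nonneg _)
  · have hcount := count_normalizedFactors_le_card hI (hprime 𝔭 h) hY
    simp only [Ideal.dvd_span_singleton] at hcount
    rw [Finset.sum_const, nsmul_eq_mul]
    exact mul_le_mul_of_nonneg_right (by exact_mod_cast hcount) (Real.log_natCast_nonneg _)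
  · have hdvd := dvd_of_mem_normalizedFactors (Multiset.mem_toFinset.1 h)
    simpa only [pow_one] using
      (absNorm_pow_le_of_dvd hI (k := 1) (by rwa [pow_one])).trans hY

end Factorization

/-! ### A Mertens estimate for prime ideals of degree one -/

section Mertens

open Classical in
theorem sum_sum_filter_comm {α β : Type*} (s : Finset α) (t : Finset β) (r : α → β → Prop)
    (g : β → ℝ) :
    ∑ a ∈ s, ∑ b ∈ t with r a b, g b = ∑ b ∈ t, (s.filter fun a => r a b).card * g b := by
  simp only [Finset.sum_filter]
  rw [Finset.sum_comm]
  simp only [← Finset.sum_filter, Finset.sum_const, nsmul_eq_mul]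

theorem sum_Icc_inv_pow_le {N : ℝ} (hN : 2 ≤ N) (j Y : ℕ) :
    ∑ k ∈ Finset.Icc j Y, (N ^ k)⁻¹ ≤ 2 * (N ^ j)⁻¹ := by
  have hN2 : N⁻¹ ≤ 2⁻¹ := inv_anti₀ two_pos hN
  have hN0 : 0 < N⁻¹ := inv_pos.2 (by linarith)
  simp only [← inv_pow]
  rw [← Finset.Ico_add_one_right_eq_Icc]
  refine (geom_sum_Ico_le_of_lt_one hN0.le (by linarith)).trans ?_
  rw [div_le_iff₀ (by linarith)]
  have : 0 < N⁻¹ ^ j := by positivity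
  nlinarith

variable {O : Type*} [CommRing O] [IsDedekindDomain O] [Module.Free ℤ O]

namespace EquidistributedBox

variable {D R : ℕ} {E : ℝ} {B : Finset O}

theorem absNorm_pos (hB : EquidistributedBox D E R B) (hD : 0 < D) (hR : 0 < R) {z : O}
    (hz : z ∈ B) : 0 < Ideal.absNorm (Ideal.span {z}) := by
  have : (0 : ℝ) < Ideal.absNorm (Ideal.span {z}) :=
    lt_of_lt_of_le (by positivity) (hB.le_absNorm z hz)
  exact_mod_cast this

theorem le_log_absNorm (hB : EquidistributedBox D E R B) (hD : 0 < D) (hR : 0 < R) {z : O}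
    (hz : z ∈ B) : Module.finrank ℤ O * Real.log R - Real.log D ≤
      Real.log (Ideal.absNorm (Ideal.span {z})) := by
  rw [← Real.log_pow, ← Real.log_div (by positivity) (by positivity)]
  exact Real.log_le_log (by positivity) (hB.le_absNorm z hz)

theorem log_absNorm_le (hB : EquidistributedBox D E R B) (hD : 0 < D) (hR : 0 < R) {z : O}
    (hz : z ∈ B) : Real.log (Ideal.absNorm (Ideal.span {z})) ≤
      Module.finrank ℤ O * Real.log R + Real.log D := by
  rw [← Real.log_pow, ← Real.log_mul (by positivity) (by positivity), mul_comm]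
  exact Real.log_le_log (by exact_mod_cast hB.absNorm_pos hD hR hz)
    (by exact_mod_cast hB.absNorm_le z hz)

theorem ne_zero (hB : EquidistributedBox D E R B) (hD : 0 < D) (hR : 0 < R) {z : O}
    (hz : z ∈ B) : z ≠ 0 := by
  rintro rfl
  simpa using hB.absNorm_pos hD hR hz

variable [Module.Finite ℤ O]

open Classical in
theorem card_filter_mem_le (hB : EquidistributedBox D E R B) (hD : 0 < D) (hE : 0 ≤ E)
    (hR : 0 < R) {I : Ideal O} (hI : I ≠ ⊥) :
    ((B.filter fun z => z ∈ I).card : ℝ) ≤ B.card * (1 + E * D) * (Ideal.absNorm I : ℝ)⁻¹ := by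
  rcases (B.filter fun z => z ∈ I).eq_empty_or_nonempty with hempty | ⟨z, hz⟩
  · rw [hempty, Finset.card_empty, Nat.cast_zero]
    positivity
  obtain ⟨hzB, hzI⟩ := Finset.mem_filter.mp hz
  have hle : Ideal.absNorm I ≤ D * R ^ Module.finrank ℤ O :=
    (Nat.le_of_dvd (hB.absNorm_pos hD hR hzB)
      (map_dvd _ (Ideal.dvd_span_singleton.mpr hzI))).trans (hB.absNorm_le z hzB)
  have hN : (0 : ℝ) < Ideal.absNorm I := by
    exact_mod_cast Nat.pos_of_ne_zero (by rwa [Ne, Ideal.absNorm_eq_zero_iff])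
  have hn : Module.finrank ℤ O ≠ 0 := Module.finrank_pos.ne'
  rw [← div_eq_mul_inv, le_div_iff₀ hN, mul_comm]
  refine (hB.mul_card_le I hI hle).trans ?_
  gcongr
  rw [div_le_iff₀ (by exact_mod_cast hR)]
  exact rpow_one_div_le_of_le_mul_pow hn hD hle

open Classical in
theorem sum_card_filter_mem_pow_mul_log_le (hB : EquidistributedBox D E R B) (hD : 0 < D)
    (hE : 0 ≤ E) (hR : 0 < R) {𝔭 : Ideal O} (h𝔭 : Prime 𝔭) (j Y : ℕ) :
    ∑ k ∈ Finset.Icc j Y, (B.filter fun z => z ∈ 𝔭 ^ k).card * Real.log (Ideal.absNorm 𝔭) ≤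
      B.card * (2 * (1 + E * D) * (Real.log (Ideal.absNorm 𝔭) / (Ideal.absNorm 𝔭 : ℝ) ^ j)) := by
  have := Real.log_natCast_nonneg (Ideal.absNorm 𝔭)
  have hcount (k : ℕ) : ((B.filter fun z => z ∈ 𝔭 ^ k).card : ℝ) ≤
      B.card * (1 + E * D) * ((Ideal.absNorm 𝔭 : ℝ) ^ k)⁻¹ := by
    simpa only [map_pow, Nat.cast_pow] using
      hB.card_filter_mem_le hD hE hR (pow_ne_zero k h𝔭.ne_zero)
  calc _ ≤ ∑ k ∈ Finset.Icc j Y, B.card * (1 + E * D) * ((Ideal.absNorm 𝔭 : ℝ) ^ k)⁻¹ *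
        Real.log (Ideal.absNorm 𝔭) := by
        gcongr with k
        exact hcount k
    _ = B.card * (1 + E * D) * (∑ k ∈ Finset.Icc j Y, ((Ideal.absNorm 𝔭 : ℝ) ^ k)⁻¹) *
        Real.log (Ideal.absNorm 𝔭) := by rw [Finset.mul_sum, Finset.sum_mul]
    _ ≤ B.card * (1 + E * D) * (2 * ((Ideal.absNorm 𝔭 : ℝ) ^ j)⁻¹) *
        Real.log (Ideal.absNorm 𝔭) := by
        gcongr
        exact sum_Icc_inv_pow_le (by exact_mod_cast two_le_absNorm_of_prime h𝔭) j Y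
    _ = _ := by ring

open Classical in
theorem sum_card_filter_mem_pow_mul_log_le_of_not_prime (hB : EquidistributedBox D E R B)
    (hD : 0 < D) (hE : 0 ≤ E) (hR : 0 < R) {𝔭 : Ideal O} (h𝔭 : Prime 𝔭)
    (hdeg : ¬ (Ideal.absNorm 𝔭).Prime) (Y : ℕ) :
    ∑ k ∈ Finset.Icc 1 Y, (B.filter fun z => z ∈ 𝔭 ^ k).card * Real.log (Ideal.absNorm 𝔭) ≤
      B.card * (2 * (1 + E * D) * (Module.finrank ℤ O *
        (Real.log (Ideal.absNorm 𝔭).minFac / ((Ideal.absNorm 𝔭).minFac : ℝ) ^ 2))) := by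
  have hp : (0 : ℝ) < (Ideal.absNorm 𝔭).minFac := by
    exact_mod_cast (prime_minFac_absNorm h𝔭).pos
  refine (hB.sum_card_filter_mem_pow_mul_log_le hD hE hR h𝔭 1 Y).trans ?_
  rw [pow_one, ← mul_div_assoc (Module.finrank ℤ O : ℝ)]
  gcongr
  · exact log_absNorm_le_finrank_mul h𝔭
  · exact_mod_cast minFac_sq_le_absNorm h𝔭 hdeg

end EquidistributedBox

variable [Module.Finite ℤ O] [CharZero O]

variable (O) in
theorem sum_degOne_log_mul_rpow_le (Y : ℕ) :
    ∑ 𝔭 ∈ degOne O Y, Real.log (Ideal.absNorm 𝔭) *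
      (Ideal.absNorm 𝔭 : ℝ) ^ (1 / Module.finrank ℤ O - 1 : ℝ) ≤
    Module.finrank ℤ O *
      (Real.log 4 * (Module.finrank ℤ O * (Y : ℝ) ^ (1 / Module.finrank ℤ O : ℝ))) := by
  have hn : (1 : ℝ) ≤ Module.finrank ℤ O := by exact_mod_cast Module.finrank_pos (R := ℤ) (M := O)
  have hmin : ∀ 𝔭 ∈ degOne O Y, (Ideal.absNorm 𝔭).minFac = Ideal.absNorm 𝔭 := fun 𝔭 h =>
    (mem_degOne.mp h).2.minFac_eq
  calc _ = ∑ 𝔭 ∈ degOne O Y, Real.log (Ideal.absNorm 𝔭).minFac *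
        ((Ideal.absNorm 𝔭).minFac : ℝ) ^ (1 / Module.finrank ℤ O - 1 : ℝ) :=
        Finset.sum_congr rfl fun 𝔭 h => by rw [hmin 𝔭 h]
    _ ≤ Module.finrank ℤ O * ∑ p ∈ Finset.Ioc 0 Y with p.Prime,
        Real.log p * (p : ℝ) ^ (1 / Module.finrank ℤ O - 1 : ℝ) :=
        sum_minFac_absNorm_le (fun 𝔭 h => (mem_degOne.mp h).1.2) (fun 𝔭 h => (mem_degOne.mp h).1.1)
          (g := fun p => Real.log p * (p : ℝ) ^ (1 / Module.finrank ℤ O - 1 : ℝ))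
          fun p => mul_nonneg (Real.log_natCast_nonneg p) (by positivity)
    _ ≤ _ := by
        gcongr
        refine (sum_prime_log_mul_rpow_sub_one_le (by positivity)
          ((div_le_one (by linarith)).2 hn) Y).trans_eq ?_
        rw [one_div, inv_inv]

theorem sum_degOne_boundary_le {D R Y : ℕ} {E : ℝ} (hD : 1 ≤ D) (hE : 0 ≤ E) (hR : 0 < R)
    (hY : Y ≤ D * R ^ Module.finrank ℤ O) :
    ∑ 𝔭 ∈ degOne O Y, Real.log (Ideal.absNorm 𝔭) / Ideal.absNorm 𝔭 *
      (E * ((Ideal.absNorm 𝔭 : ℝ) ^ (1 / Module.finrank ℤ O : ℝ) / R)) ≤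
    E * (Module.finrank ℤ O * (Real.log 4 * (Module.finrank ℤ O * D))) := by
  have : (0 : ℝ) < R := by exact_mod_cast hR
  calc _ = E / R * ∑ 𝔭 ∈ degOne O Y, Real.log (Ideal.absNorm 𝔭) *
        (Ideal.absNorm 𝔭 : ℝ) ^ (1 / Module.finrank ℤ O - 1 : ℝ) := by
        rw [Finset.mul_sum]
        refine Finset.sum_congr rfl fun 𝔭 h => ?_
        have hpos := (mem_degOne.mp h).2.pos
        rw [Real.rpow_sub_one (by positivity)]
        ring
    _ ≤ E / R * (Module.finrank ℤ O * (Real.log 4 * (Module.finrank ℤ O * (D * R)))) := by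
        gcongr
        refine (sum_degOne_log_mul_rpow_le O Y).trans ?_
        gcongr
        exact rpow_one_div_le_of_le_mul_pow Module.finrank_pos.ne' hD hY
    _ = _ := by field_simp

theorem sum_primesUpTo_log_div_sq_le (Y : ℕ) :
    ∑ 𝔭 ∈ primesUpTo O Y, Real.log (Ideal.absNorm 𝔭).minFac / ((Ideal.absNorm 𝔭).minFac : ℝ) ^ 2 ≤
      Module.finrank ℤ O * ∑' m : ℕ, Real.log m / (m : ℝ) ^ 2 := by
  have hnonneg (m : ℕ) : 0 ≤ Real.log m / (m : ℝ) ^ 2 :=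
    div_nonneg (Real.log_natCast_nonneg m) (by positivity)
  refine (sum_minFac_absNorm_le (fun 𝔭 h => (mem_primesUpTo.mp h).2)
    (fun 𝔭 h => (mem_primesUpTo.mp h).1) hnonneg).trans ?_
  gcongr
  exact summable_log_div_sq.sum_le_tsum _ fun m _ => hnonneg m

namespace EquidistributedBox

variable {D R : ℕ} {E : ℝ} {B : Finset O}

-- The expected proportion of multiples of each `𝔭` in the box is compared with the fact that the
-- prime ideals containing a single `z` contribute at most `log |N z|`.
theorem sum_degOne_log_div_le (hB : EquidistributedBox D E R B) (hD : 0 < D) (hE : 0 ≤ E)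
    (hR : 0 < R) :
    ∑ 𝔭 ∈ degOne O (R ^ Module.finrank ℤ O), Real.log (Ideal.absNorm 𝔭) / Ideal.absNorm 𝔭 ≤
      Module.finrank ℤ O * Real.log R + Real.log D +
        E * (Module.finrank ℤ O * (Real.log 4 * (Module.finrank ℤ O * D))) := by
  classical
  set n := Module.finrank ℤ O
  set S := degOne O (R ^ n)
  have hcard : (0 : ℝ) < B.card := by exact_mod_cast hB.nonempty.card_pos
  have hupper : ∑ 𝔭 ∈ S, (B.filter fun z => z ∈ 𝔭).card * Real.log (Ideal.absNorm 𝔭) ≤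
      B.card * (n * Real.log R + Real.log D) := by
    rw [← sum_sum_filter_comm B S (fun z 𝔭 => z ∈ 𝔭), ← nsmul_eq_mul]
    refine Finset.sum_le_card_nsmul _ _ _ fun z hz =>
      (sum_log_absNorm_le_log_absNorm_span (fun 𝔭 h => ?_) (hB.ne_zero hD hR hz)
        fun 𝔭 h => (Finset.mem_filter.1 h).2).trans (hB.log_absNorm_le hD hR hz)
    exact (mem_degOne.1 (Finset.mem_filter.1 h).1).1.2
  have hlower : ∀ 𝔭 ∈ S, B.card * (Real.log (Ideal.absNorm 𝔭) / Ideal.absNorm 𝔭 -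
      Real.log (Ideal.absNorm 𝔭) / Ideal.absNorm 𝔭 *
        (E * ((Ideal.absNorm 𝔭 : ℝ) ^ (1 / n : ℝ) / R))) ≤
      (B.filter fun z => z ∈ 𝔭).card * Real.log (Ideal.absNorm 𝔭) := by
    intro 𝔭 h
    obtain ⟨⟨-, h𝔭⟩, hq⟩ := mem_degOne.1 h
    have hq0 : (0 : ℝ) < Ideal.absNorm 𝔭 := by exact_mod_cast hq.pos
    have hcount := mul_le_mul_of_nonneg_left (hB.card_mul_le 𝔭 h𝔭.ne_zero)
      (div_nonneg (Real.log_natCast_nonneg (Ideal.absNorm 𝔭)) hq0.le)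
    refine le_trans (le_of_eq ?_) (hcount.trans_eq ?_)
    · ring
    · field_simp
  have hsum := (Finset.sum_le_sum hlower).trans hupper
  rw [← Finset.mul_sum, mul_le_mul_iff_right₀ hcard, Finset.sum_sub_distrib] at hsum
  linarith [sum_degOne_boundary_le (O := O) hD hE hR (Nat.le_mul_of_pos_left (R ^ n) hD)]

open Classical in
theorem sum_card_filter_mem_pow_mul_log_le_of_prime (hB : EquidistributedBox D E R B)
    (hD : 0 < D) (hE : 0 ≤ E) (hR : 0 < R) {𝔭 : Ideal O}
    (h𝔭 : 𝔭 ∈ degOne O (D * R ^ Module.finrank ℤ O)) (Y : ℕ) :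
    ∑ k ∈ Finset.Icc 1 Y, (B.filter fun z => z ∈ 𝔭 ^ k).card * Real.log (Ideal.absNorm 𝔭) ≤
      B.card * (Real.log (Ideal.absNorm 𝔭) / Ideal.absNorm 𝔭 +
        Real.log (Ideal.absNorm 𝔭) / Ideal.absNorm 𝔭 *
          (E * ((Ideal.absNorm 𝔭 : ℝ) ^ (1 / Module.finrank ℤ O : ℝ) / R)) +
        2 * (1 + E * D) * (Real.log (Ideal.absNorm 𝔭) / (Ideal.absNorm 𝔭 : ℝ) ^ 2)) := by
  obtain ⟨⟨hq, hpr⟩, hqp⟩ := mem_degOne.1 h𝔭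
  have hq0 : (0 : ℝ) < Ideal.absNorm 𝔭 := by exact_mod_cast hqp.pos
  have hlog : 0 ≤ Real.log (Ideal.absNorm 𝔭) := Real.log_natCast_nonneg _
  have hsplit : ∑ k ∈ Finset.Icc 1 Y, (B.filter fun z => z ∈ 𝔭 ^ k).card *
        Real.log (Ideal.absNorm 𝔭) ≤
      (B.filter fun z => z ∈ 𝔭).card * Real.log (Ideal.absNorm 𝔭) +
        ∑ k ∈ Finset.Icc 2 Y, (B.filter fun z => z ∈ 𝔭 ^ k).card * Real.log (Ideal.absNorm 𝔭) := by
    refine (Finset.sum_le_sum_of_subset_of_nonneg (t := insert 1 (Finset.Icc 2 Y))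
      (fun k hk => ?_) fun k _ _ => by positivity).trans_eq ?_
    · simp only [Finset.mem_Icc, Finset.mem_insert] at hk ⊢
      lia
    · rw [Finset.sum_insert (by simp), pow_one]
  have hfirst : (B.filter fun z => z ∈ 𝔭).card * Real.log (Ideal.absNorm 𝔭) ≤
      B.card * (Real.log (Ideal.absNorm 𝔭) / Ideal.absNorm 𝔭 +
        Real.log (Ideal.absNorm 𝔭) / Ideal.absNorm 𝔭 *
          (E * ((Ideal.absNorm 𝔭 : ℝ) ^ (1 / Module.finrank ℤ O : ℝ) / R))) := by
    have hcount := mul_le_mul_of_nonneg_left (hB.mul_card_le 𝔭 hpr.ne_zero hq)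
      (div_nonneg hlog hq0.le)
    refine le_trans (le_of_eq ?_) (hcount.trans_eq ?_)
    · field_simp
    · ring
  linarith [hB.sum_card_filter_mem_pow_mul_log_le hD hE hR hpr 2 Y]

open Classical in
theorem sum_card_filter_mem_pow_mul_log_le_of_mem_primesUpTo (hB : EquidistributedBox D E R B)
    (hD : 0 < D) (hE : 0 ≤ E) (hR : 0 < R) {𝔭 : Ideal O}
    (h𝔭 : 𝔭 ∈ primesUpTo O (D * R ^ Module.finrank ℤ O)) (Y : ℕ) :
    ∑ k ∈ Finset.Icc 1 Y, (B.filter fun z => z ∈ 𝔭 ^ k).card * Real.log (Ideal.absNorm 𝔭) ≤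
      B.card * ((if (Ideal.absNorm 𝔭).Prime then Real.log (Ideal.absNorm 𝔭) / Ideal.absNorm 𝔭 +
          Real.log (Ideal.absNorm 𝔭) / Ideal.absNorm 𝔭 *
            (E * ((Ideal.absNorm 𝔭 : ℝ) ^ (1 / Module.finrank ℤ O : ℝ) / R)) else 0) +
        2 * (1 + E * D) * (Module.finrank ℤ O *
          (Real.log (Ideal.absNorm 𝔭).minFac / ((Ideal.absNorm 𝔭).minFac : ℝ) ^ 2))) := by
  split_ifs with hdeg
  · refine (hB.sum_card_filter_mem_pow_mul_log_le_of_prime hD hE hR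
      (Finset.mem_filter.2 ⟨h𝔭, hdeg⟩) Y).trans ?_
    have hn : (1 : ℝ) ≤ Module.finrank ℤ O := by
      exact_mod_cast Module.finrank_pos (R := ℤ) (M := O)
    rw [hdeg.minFac_eq]
    gcongr
    exact le_mul_of_one_le_left
      (div_nonneg (Real.log_natCast_nonneg _) (by positivity)) hn
  · rw [zero_add]
    exact hB.sum_card_filter_mem_pow_mul_log_le_of_not_prime hD hE hR (mem_primesUpTo.1 h𝔭).2
      hdeg Y

theorem le_sum_degOne_log_div (hB : EquidistributedBox D E R B) (hD : 0 < D) (hE : 0 ≤ E)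
    (hR : 0 < R) :
    Module.finrank ℤ O * Real.log R - Real.log D ≤
      ∑ 𝔭 ∈ degOne O (D * R ^ Module.finrank ℤ O), Real.log (Ideal.absNorm 𝔭) / Ideal.absNorm 𝔭 +
        E * (Module.finrank ℤ O * (Real.log 4 * (Module.finrank ℤ O * D))) +
        2 * (1 + E * D) * (Module.finrank ℤ O *
          (Module.finrank ℤ O * ∑' m : ℕ, Real.log m / (m : ℝ) ^ 2)) := by
  classical
  set n := Module.finrank ℤ O
  set Y := D * R ^ n
  have hcard : (0 : ℝ) < B.card := by exact_mod_cast hB.nonempty.card_pos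
  have hlower : B.card * (n * Real.log R - Real.log D) ≤ ∑ z ∈ B, ∑ 𝔭 ∈ primesUpTo O Y,
      ∑ k ∈ Finset.Icc 1 Y with z ∈ 𝔭 ^ k, Real.log (Ideal.absNorm 𝔭) := by
    rw [← nsmul_eq_mul]
    exact Finset.card_nsmul_le_sum _ _ _ fun z hz => (hB.le_log_absNorm hD hR hz).trans
      (log_absNorm_span_le_sum (hB.ne_zero hD hR hz) (hB.absNorm_le z hz))
  rw [Finset.sum_comm] at hlower
  simp only [sum_sum_filter_comm] at hlower
  have hupper := hlower.trans (Finset.sum_le_sum fun 𝔭 h =>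
    hB.sum_card_filter_mem_pow_mul_log_le_of_mem_primesUpTo hD hE hR h Y)
  rw [← Finset.mul_sum, mul_le_mul_iff_right₀ hcard, Finset.sum_add_distrib,
    ← Finset.sum_filter, ← degOne, Finset.sum_add_distrib, ← Finset.mul_sum, ← Finset.mul_sum]
    at hupper
  refine hupper.trans ?_
  gcongr
  · exact sum_degOne_boundary_le hD hE hR le_rfl
  · exact sum_primesUpTo_log_div_sq_le Y

end EquidistributedBox

-- Only the logarithmic growth matters below, so the two ranges may differ by the factor `D`.
variable (O) in
theorem exists_mertens_bounds_degOne : ∃ (D : ℕ) (C : ℝ), 1 ≤ D ∧ ∀ R : ℕ, 1 ≤ R →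
    ∑ 𝔭 ∈ degOne O (R ^ Module.finrank ℤ O), Real.log (Ideal.absNorm 𝔭) / Ideal.absNorm 𝔭 ≤
      Module.finrank ℤ O * Real.log R + C ∧
    Module.finrank ℤ O * Real.log R - C ≤
      ∑ 𝔭 ∈ degOne O (D * R ^ Module.finrank ℤ O),
        Real.log (Ideal.absNorm 𝔭) / Ideal.absNorm 𝔭 := by
  obtain ⟨D, hD, E, hE, hbox⟩ := exists_equidistributedBox O
  set n := Module.finrank ℤ O
  have hT : 0 ≤ 2 * (1 + E * D) * (n * (n * ∑' m : ℕ, Real.log m / (m : ℝ) ^ 2)) := by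
    have : 0 ≤ ∑' m : ℕ, Real.log m / (m : ℝ) ^ 2 := tsum_nonneg fun m =>
      div_nonneg (Real.log_natCast_nonneg m) (sq_nonneg _)
    positivity
  refine ⟨D, Real.log D + E * (n * (Real.log 4 * (n * D))) +
    2 * (1 + E * D) * (n * (n * ∑' m : ℕ, Real.log m / (m : ℝ) ^ 2)), hD, fun R hR => ?_⟩
  obtain ⟨B, hB⟩ := hbox R hR
  exact ⟨by linarith [hB.sum_degOne_log_div_le hD hE.le hR],
    by linarith [hB.le_sum_degOne_log_div hD hE.le hR]⟩

end Mertens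

/-! ### Counting the primes modulo which a polynomial has a root -/

section Count

theorem exists_mul_pow_le_and_lt_mul_two_mul_pow {n A x : ℕ} (hn : n ≠ 0) (hA : 1 ≤ A)
    (hx : A ≤ x) : ∃ R : ℕ, 1 ≤ R ∧ A * R ^ n ≤ x ∧ x < A * (2 * R) ^ n := by
  set R := Nat.nthRoot n (x / A)
  have hle {a : ℕ} : a ≤ R ↔ A * a ^ n ≤ x := by
    rw [Nat.le_nthRoot_iff hn, Nat.le_div_iff_mul_le hA, mul_comm]
  have hR : 1 ≤ R := hle.2 (by simpa using hx)
  refine ⟨R, hR, hle.1 le_rfl, not_le.1 fun h => ?_⟩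
  have := hle.2 h
  lia

variable {O : Type*} [CommRing O] [IsDedekindDomain O] [Module.Free ℤ O] [Module.Finite ℤ O]

open Classical in
theorem sum_log_div_le_card_image_absNorm {S : Finset (Ideal O)} (hS : ∀ 𝔭 ∈ S, Prime 𝔭)
    (hdeg : ∀ 𝔭 ∈ S, (Ideal.absNorm 𝔭).Prime) {L : ℝ} (hL : 0 < L)
    (hle : ∀ 𝔭 ∈ S, L ≤ Ideal.absNorm 𝔭) {x : ℕ} (hx : ∀ 𝔭 ∈ S, Ideal.absNorm 𝔭 ≤ x) :
    ∑ 𝔭 ∈ S, Real.log (Ideal.absNorm 𝔭) / Ideal.absNorm 𝔭 ≤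
      Module.finrank ℤ O * (S.image Ideal.absNorm).card * (Real.log x / L) := by
  have hterm : ∀ 𝔭 ∈ S, Real.log (Ideal.absNorm 𝔭) / Ideal.absNorm 𝔭 ≤ Real.log x / L := by
    intro 𝔭 h
    have := (hdeg 𝔭 h).pos
    gcongr
    · exact hx 𝔭 h
    · exact hle 𝔭 h
  have hcard : S.card ≤ Module.finrank ℤ O * (S.image Ideal.absNorm).card := by
    refine Finset.card_le_mul_card_image S _ fun p hp => ?_
    obtain ⟨𝔮, h𝔮, rfl⟩ := Finset.mem_image.1 hp
    refine card_le_finrank_of_minFac_absNorm_eq (fun 𝔭 h => hS 𝔭 (Finset.mem_filter.1 h).1)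
      (hdeg 𝔮 h𝔮) fun 𝔭 h => ?_
    rw [(Finset.mem_filter.1 h).2, (hdeg 𝔮 h𝔮).minFac_eq]
  refine (Finset.sum_le_card_nsmul _ _ _ hterm).trans ?_
  rw [nsmul_eq_mul]
  have := Real.log_natCast_nonneg x
  gcongr
  exact_mod_cast hcard

variable [CharZero O]

theorem degOne_mono {X Y : ℕ} (h : X ≤ Y) : degOne O X ⊆ degOne O Y := fun _ h𝔭 => by
  rw [mem_degOne] at h𝔭 ⊢
  exact ⟨⟨h𝔭.1.1.trans h, h𝔭.1.2⟩, h𝔭.2⟩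

theorem mem_degOne_sdiff {X Y : ℕ} {𝔭 : Ideal O} [DecidableEq (Ideal O)] :
    𝔭 ∈ degOne O Y \ degOne O X ↔ (X < Ideal.absNorm 𝔭 ∧ Ideal.absNorm 𝔭 ≤ Y) ∧
      Prime 𝔭 ∧ (Ideal.absNorm 𝔭).Prime := by
  rw [Finset.mem_sdiff, mem_degOne, mem_degOne, ← not_le]
  tauto

variable (O)

open Classical in
theorem exists_one_le_sum_degOne_sdiff : ∃ A : ℕ, 1 ≤ A ∧ ∀ R : ℕ, 1 ≤ R →
    1 ≤ ∑ 𝔭 ∈ degOne O (A * R ^ Module.finrank ℤ O) \ degOne O (R ^ Module.finrank ℤ O),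
      Real.log (Ideal.absNorm 𝔭) / Ideal.absNorm 𝔭 := by
  obtain ⟨D, C, hD, hmertens⟩ := exists_mertens_bounds_degOne O
  set n := Module.finrank ℤ O
  have hn : (0 : ℝ) < n := by exact_mod_cast Module.finrank_pos (R := ℤ) (M := O)
  obtain ⟨M, hM⟩ := exists_nat_gt (Real.exp ((2 * C + 1) / n))
  have hM0 : 0 < M := by exact_mod_cast (Real.exp_pos _).trans hM
  have hlogM : 2 * C + 1 ≤ n * Real.log M := by
    rw [← div_le_iff₀' hn]
    exact (Real.le_log_iff_exp_le (by positivity)).2 hM.le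
  refine ⟨D * M ^ n, Nat.mul_pos hD (pow_pos hM0 n), fun R hR => ?_⟩
  have hupper := (hmertens R hR).1
  have hlower := (hmertens (M * R) (Nat.mul_pos hM0 hR)).2
  rw [mul_pow, ← mul_assoc, Nat.cast_mul, Real.log_mul (by positivity) (by positivity),
    ← Finset.sum_sdiff (degOne_mono (O := O)
      (Nat.le_mul_of_pos_left (R ^ n) (Nat.mul_pos hD (pow_pos hM0 n))))] at hlower
  linarith

open Classical in
theorem exists_le_card_prime_absNorm (m : ℕ) : ∃ c : ℝ, 0 < c ∧ ∃ x₀ : ℕ, ∀ x : ℕ, x₀ ≤ x →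
    c * x / Real.log x ≤ (((Finset.Icc 1 x).filter fun p => p.Prime ∧ m < p ∧
      ∃ 𝔭 : Ideal O, Ideal.absNorm 𝔭 = p).card : ℝ) := by
  obtain ⟨A, hA, hsum⟩ := exists_one_le_sum_degOne_sdiff O
  set n := Module.finrank ℤ O
  have hn : 0 < n := Module.finrank_pos
  refine ⟨1 / (A * 2 ^ n * n), by positivity, max (A * 2 ^ n * (m + 1)) (A + 1), fun x hx => ?_⟩
  obtain ⟨R, hR, hRx, hxR⟩ := exists_mul_pow_le_and_lt_mul_two_mul_pow hn.ne' hA (x := x)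
    (by lia)
  set Z := (Finset.Icc 1 x).filter fun p => p.Prime ∧ m < p ∧
    ∃ 𝔭 : Ideal O, Ideal.absNorm 𝔭 = p
  set S := degOne O (A * R ^ n) \ degOne O (R ^ n)
  have hm : m + 1 ≤ R ^ n := by
    rw [mul_pow, ← mul_assoc] at hxR
    exact (lt_of_mul_lt_mul_left ((le_max_left _ _).trans hx |>.trans_lt hxR) (Nat.zero_le _)).le
  have hSZ : S.image Ideal.absNorm ⊆ Z := by
    intro p hp
    obtain ⟨𝔭, h, rfl⟩ := Finset.mem_image.1 hp
    obtain ⟨⟨hlt, hle⟩, -, hprime⟩ := mem_degOne_sdiff.1 h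
    exact Finset.mem_filter.2 ⟨Finset.mem_Icc.2 ⟨hprime.pos, hle.trans hRx⟩, hprime, by lia, 𝔭, rfl⟩
  have hone : 1 ≤ n * (S.image Ideal.absNorm).card * (Real.log x / (R ^ n : ℕ)) :=
    (hsum R hR).trans (sum_log_div_le_card_image_absNorm
      (fun 𝔭 h => (mem_degOne_sdiff.1 h).2.1) (fun 𝔭 h => (mem_degOne_sdiff.1 h).2.2)
      (by positivity) (fun 𝔭 h => by exact_mod_cast (mem_degOne_sdiff.1 h).1.1.le)
      fun 𝔭 h => (mem_degOne_sdiff.1 h).1.2.trans hRx)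
  have hlog : 0 < Real.log x := Real.log_pos (by exact_mod_cast (by lia : 1 < x))
  have hRn : (R : ℝ) ^ n ≤ n * Z.card * Real.log x := by
    rw [← mul_div_assoc, one_le_div (by positivity), Nat.cast_pow] at hone
    exact hone.trans (by gcongr)
  rw [div_le_iff₀ hlog, one_div_mul_eq_div, div_le_iff₀ (by positivity)]
  calc (x : ℝ) ≤ A * (2 * R) ^ n := by exact_mod_cast hxR.le
    _ = A * 2 ^ n * (R : ℝ) ^ n := by ring
    _ ≤ A * 2 ^ n * (n * Z.card * Real.log x) := by gcongr
    _ = _ := by ring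

end Count

section RootsModPrimes

theorem intCast_zmod_ne_zero_of_natAbs_lt {p : ℕ} {a : ℤ} (ha : a ≠ 0) (h : a.natAbs < p) :
    (a : ZMod p) ≠ 0 := by
  rw [Ne, ZMod.intCast_zmod_eq_zero_iff_dvd, Int.natCast_dvd]
  exact Nat.not_dvd_of_pos_of_lt (Int.natAbs_pos.2 ha) h

variable {p : ℕ} [Fact p.Prime]

theorem nonempty_ringHom_zmod_of_absNorm_eq {O : Type*} [CommRing O] [IsDedekindDomain O]
    [Module.Free ℤ O] {𝔭 : Ideal O} (h : Ideal.absNorm 𝔭 = p) : Nonempty (O →+* ZMod p) := by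
  have hp := Fact.out (p := p.Prime)
  have hcard : Nat.card (O ⧸ 𝔭) = p := by
    rw [← h, Ideal.absNorm_apply, Submodule.cardQuot_apply]
  have : Finite (O ⧸ 𝔭) := Nat.finite_of_card_ne_zero (hcard ▸ hp.ne_zero)
  have := Fintype.ofFinite (O ⧸ 𝔭)
  rw [Nat.card_eq_fintype_card] at hcard
  exact ⟨((ZMod.ringEquivOfPrime _ hp hcard).symm : _ →+* ZMod p).comp (Ideal.Quotient.mk 𝔭)⟩

theorem dvd_sub_one_of_isPrimitiveRoot {O : Type*} [CommRing O] [IsDomain O] (φ : O →+* ZMod p)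
    {Q : ℕ} (hQ : (Q : ZMod p) ≠ 0) {ζ : O} (hζ : IsPrimitiveRoot ζ Q) : Q ∣ p - 1 := by
  have hQ0 : 0 < Q := Nat.pos_of_ne_zero (by rintro rfl; simp at hQ)
  have : NeZero (Q : ZMod p) := ⟨hQ⟩
  have hroot := (hζ.isRoot_cyclotomic hQ0).map (f := φ)
  rw [map_cyclotomic, isRoot_cyclotomic_iff] at hroot
  exact hroot.dvd_of_pow_eq_one _ (ZMod.pow_card_sub_one_eq_one (hroot.ne_zero hQ0.ne'))

open NumberField in
theorem exists_eval_eq_zero_of_ringHom {K : Type*} [Field K] (φ : 𝓞 K →+* ZMod p) {P : ℤ[X]}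
    (ha : (P.leadingCoeff : ZMod p) ≠ 0) {α : K} (hα : aeval α P = 0) :
    ∃ t : ZMod p, (P.map (Int.castRingHom (ZMod p))).eval t = 0 := by
  let β : 𝓞 K := ⟨P.leadingCoeff • α, isIntegral_leadingCoeff_smul P α hα⟩
  have hβ : aeval β (P.scaleRoots P.leadingCoeff) = 0 := by
    apply RingOfIntegers.coe_injective
    rw [map_zero, ← aeval_algebraMap_apply]
    have hcoe : algebraMap (𝓞 K) K β = algebraMap ℤ K P.leadingCoeff * α := by
      rw [← Algebra.smul_def]
      rfl
    rw [hcoe]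
    exact scaleRoots_aeval_eq_zero hα
  have hφ : eval₂ (Int.castRingHom (ZMod p)) (φ β) (P.scaleRoots P.leadingCoeff) = 0 := by
    have := congrArg φ hβ
    rwa [map_zero, aeval_def, hom_eval₂,
      RingHom.ext_int (φ.comp (algebraMap ℤ _)) (Int.castRingHom (ZMod p))] at this
  refine ⟨(P.leadingCoeff : ZMod p)⁻¹ * φ β, ?_⟩
  have hscale := P.scaleRoots_eval₂_mul (Int.castRingHom (ZMod p))
    ((P.leadingCoeff : ZMod p)⁻¹ * φ β) P.leadingCoeff
  rw [eq_intCast, mul_inv_cancel_left₀ ha, hφ] at hscale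
  rw [eval_map]
  exact (mul_eq_zero.mp hscale.symm).resolve_left (pow_ne_zero _ ha)

theorem exists_numberField_root_and_isPrimitiveRoot {P : ℤ[X]} (hP : P.natDegree ≠ 0) {Q : ℕ}
    (hQ : 0 < Q) : ∃ (K : Type) (_ : Field K) (_ : NumberField K),
      (∃ α : K, aeval α P = 0) ∧ ∃ ζ : K, IsPrimitiveRoot ζ Q := by
  let F : ℚ[X] := P.map (Int.castRingHom ℚ) * cyclotomic Q ℚ
  have hP0 : P.map (Int.castRingHom ℚ) ≠ 0 :=
    (Polynomial.map_ne_zero_iff (RingHom.injective_int _)).mpr (by rintro rfl; simp at hP)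
  have hF0 : F.map (algebraMap ℚ F.SplittingField) ≠ 0 :=
    Polynomial.map_ne_zero (mul_ne_zero hP0 (cyclotomic_ne_zero Q ℚ))
  have hroot {G : ℚ[X]} (hG : G ∣ F) (hdeg : G.degree ≠ 0) :
      ∃ z : F.SplittingField, (G.map (algebraMap ℚ F.SplittingField)).eval z = 0 :=
    Splits.exists_eval_eq_zero
      ((SplittingField.splits F).of_dvd hF0 (Polynomial.map_dvd _ hG)) (by rwa [degree_map])
  refine ⟨F.SplittingField, inferInstance,
    { to_charZero := inferInstance, to_finiteDimensional := inferInstance }, ?_, ?_⟩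
  · obtain ⟨α, hα⟩ := hroot (dvd_mul_right _ _) (by
      rw [degree_map_eq_of_injective (RingHom.injective_int _)]
      exact fun h => hP (natDegree_eq_of_degree_eq_some h))
    rw [map_map, eval_map] at hα
    exact ⟨α, by rwa [aeval_def, RingHom.ext_int (algebraMap ℤ _)]⟩
  · obtain ⟨ζ, hζ⟩ := hroot (dvd_mul_left _ _) (degree_cyclotomic_pos Q ℚ hQ).ne'
    rw [map_cyclotomic] at hζ
    exact ⟨ζ, (isRoot_cyclotomic_iff_charZero hQ).mp hζ⟩

end RootsModPrimes

-- The degree-one primes of a number field containing a root of `P` and the `Q`-th roots of unity.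
open NumberField in
theorem exists_finset_prime_root_and_dvd_sub_one {P : ℤ[X]} (hP : P.natDegree ≠ 0) {Q : ℕ}
    (hQ : 0 < Q) (m : ℕ) : ∃ c : ℝ, 0 < c ∧ ∃ x₀ : ℕ, ∀ x : ℕ, x₀ ≤ x → ∃ S : Finset ℕ,
      (∀ p ∈ S, p ≤ x ∧ p.Prime ∧ m < p ∧ Q ∣ p - 1 ∧
        ∃ t : ZMod p, (P.map (Int.castRingHom (ZMod p))).eval t = 0) ∧
      c * x / Real.log x ≤ S.card := by
  classical
  obtain ⟨K, _, _, ⟨α, hα⟩, ζ, hζ⟩ := exists_numberField_root_and_isPrimitiveRoot hP hQ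
  have hζ' : IsPrimitiveRoot (⟨ζ, hζ.isIntegral hQ⟩ : 𝓞 K) Q :=
    IsPrimitiveRoot.of_map_of_injective (f := algebraMap (𝓞 K) K) hζ RingOfIntegers.coe_injective
  obtain ⟨c, hc, x₀, hcount⟩ := exists_le_card_prime_absNorm (𝓞 K)
    (m + Q + P.leadingCoeff.natAbs)
  refine ⟨c, hc, x₀, fun x hx => ⟨_, fun p hp => ?_, hcount x hx⟩⟩
  obtain ⟨hpx, hprime, hlt, 𝔭, h𝔭⟩ := Finset.mem_filter.mp hp
  have : Fact p.Prime := ⟨hprime⟩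
  obtain ⟨φ⟩ := nonempty_ringHom_zmod_of_absNorm_eq h𝔭
  have hQp : (Q : ZMod p) ≠ 0 := by
    exact_mod_cast intCast_zmod_ne_zero_of_natAbs_lt (a := Q) (by lia) (by lia)
  have ha : (P.leadingCoeff : ZMod p) ≠ 0 :=
    intCast_zmod_ne_zero_of_natAbs_lt (leadingCoeff_ne_zero.2 (by rintro rfl; simp at hP)) (by lia)
  exact ⟨(Finset.mem_Icc.mp hpx).2, hprime, by lia, dvd_sub_one_of_isPrimitiveRoot φ hQp hζ',
    exists_eval_eq_zero_of_ringHom φ ha hα⟩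

/-! ### Twists with points everywhere locally -/

section LocalSolubility

theorem exists_mul_add_mul_derivative_eq_C {P : ℤ[X]}
    (hP : (P.map (Int.castRingHom ℚ)).Separable) :
    ∃ (m : ℤ) (A B : ℤ[X]), m ≠ 0 ∧ A * P + B * derivative P = C m := by
  obtain ⟨a, b, hab⟩ := hP
  obtain ⟨r, A, hr, hA⟩ := exists_map_eq_C_mul a
  obtain ⟨s, B, hs, hB⟩ := exists_map_eq_C_mul b
  refine ⟨r * s, C s * A, C r * B, mul_ne_zero hr hs, ?_⟩
  apply map_injective (Int.castRingHom ℚ) (RingHom.injective_int _)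
  rw [derivative_map] at hab
  rw [Polynomial.map_add, Polynomial.map_mul, Polynomial.map_mul, Polynomial.map_mul,
    Polynomial.map_mul, map_C, map_C, map_C, hA, hB, map_mul, C_mul]
  simp only [Int.coe_castRingHom]
  linear_combination C (r : ℚ) * C (s : ℚ) * hab

theorem separable_map_of_mul_add_mul_derivative_eq_C {R S : Type*} [CommRing R] [CommRing S]
    (φ : R →+* S) {P A B : R[X]} {m : R} (h : A * P + B * derivative P = C m)
    (hm : IsUnit (φ m)) : (P.map φ).Separable := by
  obtain ⟨u, hu⟩ := hm.exists_left_inv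
  refine ⟨C u * A.map φ, C u * B.map φ, ?_⟩
  have hmap := congrArg (Polynomial.map φ) h
  rw [Polynomial.map_add, Polynomial.map_mul, Polynomial.map_mul, map_C, ← derivative_map] at hmap
  rw [mul_assoc, mul_assoc, ← mul_add, hmap, ← C_mul, hu, C_1]

theorem exists_forall_separable_map_zmod {P : ℤ[X]}
    (hP : (P.map (Int.castRingHom ℚ)).Separable) : ∃ M : ℕ, ∀ p : ℕ, p.Prime → M < p →
      (P.map (Int.castRingHom (ZMod p))).Separable := by
  obtain ⟨m, A, B, hm, h⟩ := exists_mul_add_mul_derivative_eq_C hP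
  refine ⟨m.natAbs, fun p hp hlt => ?_⟩
  have : Fact p.Prime := ⟨hp⟩
  exact separable_map_of_mul_add_mul_derivative_eq_C _ h
    (intCast_zmod_ne_zero_of_natAbs_lt hm hlt).isUnit

theorem exists_squarefree_mul_eq_sq {a : ℤ} (ha : a ≠ 0) :
    ∃ d w : ℤ, d ≠ 0 ∧ w ≠ 0 ∧ Squarefree d.natAbs ∧ d * a = w ^ 2 := by
  obtain ⟨u, v, huv, hu⟩ := Nat.sq_mul_squarefree a.natAbs
  have hvu : (v : ℤ) ^ 2 * u = |a| := by
    rw [Int.abs_eq_natAbs, ← huv]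
    push_cast
    rfl
  have hvu0 : (v : ℤ) ^ 2 * u ≠ 0 := hvu ▸ abs_ne_zero.2 ha
  have hu0 : (u : ℤ) ≠ 0 := right_ne_zero_of_mul hvu0
  refine ⟨a.sign * u, u * v, mul_ne_zero (by simpa using ha) hu0,
    mul_ne_zero hu0 (by rintro h; simp [h] at hvu0), ?_, ?_⟩
  · rwa [Int.natAbs_mul, Int.natAbs_sign_of_ne_zero ha, one_mul, Int.natAbs_natCast]
  · linear_combination (u : ℤ) * Int.sign_mul_self_eq_abs a - u * hvu

/-- The twist by `d` of the curve `y ^ 2 = P` has points over every completion of `ℚ`, points at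
infinity being detected by the squareness of `d * P.leadingCoeff`. -/
def EverywhereLocallySoluble (P : ℤ[X]) (d : ℤ) : Prop :=
  (∀ (p : ℕ) [Fact p.Prime],
    (∃ t y : ℚ_[p], y ^ 2 = (d : ℚ_[p]) * aeval t P) ∨
    (∃ y : ℚ_[p], ((d * P.leadingCoeff : ℤ) : ℚ_[p]) = y ^ 2)) ∧
  ((∃ t y : ℝ, y ^ 2 = (d : ℝ) * aeval t P) ∨ 0 < d * P.leadingCoeff)

section Padic

variable {p : ℕ} [Fact p.Prime]

theorem exists_padic_eq_sq_of_dvd_sub_one {w m : ℤ} (h : (8 * p : ℤ) ∣ m - 1) :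
    ∃ y : ℚ_[p], ((w ^ 2 * m : ℤ) : ℚ_[p]) = y ^ 2 := by
  obtain ⟨r, hr⟩ := isSquare_intCast_padicInt_of_dvd_sub_one h
  have hr' : (m : ℚ_[p]) = r * r := by exact_mod_cast congrArg ((↑) : ℤ_[p] → ℚ_[p]) hr
  refine ⟨w * r, ?_⟩
  push_cast
  rw [hr']
  ring

theorem exists_padic_sq_eq_mul_aeval_of_separable {P : ℤ[X]} {d : ℤ}
    (hP : (P.map (Int.castRingHom (ZMod p))).Separable)
    (hN : 0 < (P.map (Int.castRingHom (ZMod p))).natDegree)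
    (hbig : 100 * (P.natDegree + 1) ^ 3 ≤ p) (hd : (d : ZMod p) ≠ 0) :
    ∃ z y : ℚ_[p], y ^ 2 = d * aeval z P := by
  have hbig' : 100 * ((P.map (Int.castRingHom (ZMod p))).natDegree + 1) ^ 3 ≤ p :=
    le_trans (by gcongr; exact natDegree_map_le) hbig
  obtain ⟨t, ht, hsq⟩ := exists_eval_ne_zero_and_isSquare_mul hP hN hbig' hd
  have hp : p ≠ 2 := by
    have := Nat.one_le_pow 3 (P.natDegree + 1) (by lia)
    lia
  exact exists_padic_sq_eq_mul_aeval hp (mul_ne_zero hd ht) hsq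

end Padic

/-- A bound `M` beyond which every prime is of good reduction for `P`, prime to `d`, and large
enough for the square values of `P` modulo it to be found by counting. -/
structure GoodReductionBound (P : ℤ[X]) (d : ℤ) (M : ℕ) : Prop where
  separable : ∀ p : ℕ, p.Prime → M < p → (P.map (Int.castRingHom (ZMod p))).Separable
  natDegree_le : 100 * (P.natDegree + 1) ^ 3 ≤ M
  leadingCoeff_le : P.leadingCoeff.natAbs ≤ M
  natAbs_le : d.natAbs ≤ M

theorem exists_goodReductionBound {P : ℤ[X]} (hP : (P.map (Int.castRingHom ℚ)).Separable)
    (d : ℤ) : ∃ M, GoodReductionBound P d M := by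
  obtain ⟨M, hM⟩ := exists_forall_separable_map_zmod hP
  exact ⟨M + 100 * (P.natDegree + 1) ^ 3 + P.leadingCoeff.natAbs + d.natAbs,
    fun p hp hlt => hM p hp (by lia), by lia, by lia, by lia⟩

theorem GoodReductionBound.everywhereLocallySoluble {P : ℤ[X]} {d w : ℤ} {M : ℕ}
    (hM : GoodReductionBound P d M) (hP : P.natDegree ≠ 0) (hd : d ≠ 0) (hw0 : w ≠ 0)
    (hw : d * P.leadingCoeff = w ^ 2) {ℓ : ℕ} (hℓ : ℓ.Prime) (hlt : M < ℓ)
    (hcong : 8 * M.factorial ∣ ℓ - 1)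
    (hroot : ∃ t : ZMod ℓ, (P.map (Int.castRingHom (ZMod ℓ))).eval t = 0) :
    EverywhereLocallySoluble P (d * ℓ) := by
  have hlc : d * ℓ * P.leadingCoeff = w ^ 2 * ℓ := by rw [← hw]; ring
  refine ⟨fun p hp => ?_, Or.inr ?_⟩
  · rcases le_or_gt p M with hpM | hpM
    · right
      rw [hlc]
      refine exists_padic_eq_sq_of_dvd_sub_one ?_
      have hdvd := (mul_dvd_mul_left 8 (Nat.dvd_factorial hp.out.pos hpM)).trans hcong
      rw [← Nat.cast_one, ← Nat.cast_sub hℓ.one_lt.le]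
      exact_mod_cast hdvd
    left
    rcases eq_or_ne p ℓ with rfl | hpℓ
    · obtain ⟨t, ht⟩ := hroot
      obtain ⟨z, hz⟩ := exists_padic_aeval_eq_zero (hM.separable p hℓ hlt) ht
      exact ⟨z, 0, by simp [hz]⟩
    · have hP0 : P.leadingCoeff ≠ 0 := leadingCoeff_ne_zero.2 (by rintro rfl; simp at hP)
      have hdeg := natDegree_map_of_leadingCoeff_ne_zero (Int.castRingHom (ZMod p))
        (intCast_zmod_ne_zero_of_natAbs_lt hP0 (hM.leadingCoeff_le.trans_lt hpM))
      refine exists_padic_sq_eq_mul_aeval_of_separable (hM.separable p hp.out hpM)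
        (hdeg ▸ Nat.pos_of_ne_zero hP) (hM.natDegree_le.trans hpM.le) ?_
      rw [Int.cast_mul, Int.cast_natCast]
      refine mul_ne_zero (intCast_zmod_ne_zero_of_natAbs_lt hd (hM.natAbs_le.trans_lt hpM)) ?_
      rwa [Ne, ZMod.natCast_eq_zero_iff, Nat.prime_dvd_prime_iff_eq hp.out hℓ]
  · rw [hlc]
    exact mul_pos (by positivity) (by exact_mod_cast hℓ.pos)

theorem sqfInt_mul_prime {d : ℤ} (hd : d ≠ 0) (hsq : Squarefree d.natAbs) {ℓ : ℕ}
    (hℓ : ℓ.Prime) (hlt : d.natAbs < ℓ) : SqfInt (d * ℓ) := by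
  have hcop : d.natAbs.Coprime ℓ :=
    (hℓ.coprime_iff_not_dvd.2 (Nat.not_dvd_of_pos_of_lt (Int.natAbs_pos.2 hd) hlt)).symm
  refine ⟨mul_ne_zero hd (by exact_mod_cast hℓ.ne_zero), fun h => ?_, fun p hp h => ?_⟩
  · have hone := congrArg Int.natAbs h
    rw [Int.natAbs_mul, Int.natAbs_natCast] at hone
    exact hℓ.one_lt.ne' (Nat.eq_one_of_mul_eq_one_left hone)
  · have hdvd := Int.natAbs_dvd_natAbs.2 h
    rw [Int.natAbs_mul, Int.natAbs_pow, Int.natAbs_natCast, Int.natAbs_natCast, sq] at hdvd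
    exact hp.one_lt.ne' (Nat.isUnit_iff.1
      ((Nat.squarefree_mul hcop).2 ⟨hsq, hℓ.prime.squarefree⟩ p hdvd))

theorem not_exists_rat_sq_mul_prime_eq_sq {w : ℤ} (hw : w ≠ 0) {ℓ : ℕ} (hℓ : ℓ.Prime) :
    ¬ ∃ y : ℚ, ((w ^ 2 * ℓ : ℤ) : ℚ) = y ^ 2 := by
  rintro ⟨y, hy⟩
  have hw' : (w : ℚ) ≠ 0 := by exact_mod_cast hw
  have hsq : IsSquare (ℓ : ℚ) := by
    refine ⟨y / w, ?_⟩
    push_cast at hy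
    field_simp
    linarith
  exact hℓ.prime.irreducible.not_isSquare (Rat.isSquare_natCast_iff.1 hsq)

theorem div_log_le_div_log_natDiv {k x : ℕ} (hk : 1 ≤ k) (hx : 2 * k ≤ x) :
    x / (2 * k) / Real.log x ≤ (x / k : ℕ) / Real.log (x / k : ℕ) := by
  have hquot : 2 ≤ x / k := (Nat.le_div_iff_mul_le hk).2 hx
  have hlog : 0 < Real.log (x / k : ℕ) := Real.log_pos (by exact_mod_cast hquot)
  have hlow : (x : ℝ) / (2 * k) ≤ (x / k : ℕ) := by
    have hlt := Nat.lt_mul_div_succ x hk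
    have hle : x ≤ x / k * (2 * k) := by nlinarith
    rw [div_le_iff₀ (by positivity)]
    exact_mod_cast hle
  have : 0 < x / k := by lia
  gcongr
  exact Nat.div_le_self _ _

-- `d` is the squarefree part of the leading coefficient, so that the twist by `d * ℓ` has points
-- at infinity exactly over the fields in which `ℓ` is a square.
theorem exists_finset_everywhereLocallySoluble {P : ℤ[X]}
    (hP : (P.map (Int.castRingHom ℚ)).Separable) (hN : P.natDegree ≠ 0) :
    ∃ d : ℤ, d ≠ 0 ∧ ∃ c : ℝ, 0 < c ∧ ∃ x₀ : ℕ, ∀ x : ℕ, x₀ ≤ x → ∃ S : Finset ℕ,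
      (∀ ℓ ∈ S, ℓ.Prime ∧ |d * ℓ| ≤ x ∧ SqfInt (d * ℓ) ∧ EverywhereLocallySoluble P (d * ℓ) ∧
        ¬ ∃ y : ℚ, ((d * ℓ * P.leadingCoeff : ℤ) : ℚ) = y ^ 2) ∧
      c * x / Real.log x ≤ S.card := by
  have hlc : P.leadingCoeff ≠ 0 := leadingCoeff_ne_zero.2 (by rintro rfl; simp at hN)
  obtain ⟨d, w, hd, hw0, hsq, hw⟩ := exists_squarefree_mul_eq_sq hlc
  obtain ⟨M, hM⟩ := exists_goodReductionBound hP d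
  obtain ⟨c, hc, x₀, hcount⟩ := exists_finset_prime_root_and_dvd_sub_one hN
    (Q := 8 * M.factorial) (by positivity) M
  have hk : 1 ≤ d.natAbs := Int.natAbs_pos.2 hd
  refine ⟨d, hd, c / (2 * d.natAbs), by positivity, (x₀ + 2) * d.natAbs, fun x hx => ?_⟩
  obtain ⟨S, hS, hcard⟩ := hcount (x / d.natAbs) ((Nat.le_div_iff_mul_le hk).2 (by nlinarith))
  refine ⟨S, fun ℓ hℓ => ?_, ?_⟩
  · obtain ⟨hle, hprime, hlt, hcong, hroot⟩ := hS ℓ hℓ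
    refine ⟨hprime, ?_, sqfInt_mul_prime hd hsq hprime (hM.natAbs_le.trans_lt hlt),
      hM.everywhereLocallySoluble hN hd hw0 hw hprime hlt hcong hroot, ?_⟩
    · rw [abs_mul, Int.abs_eq_natAbs, Nat.abs_cast, mul_comm]
      exact_mod_cast (Nat.le_div_iff_mul_le hk).1 hle
    · rw [mul_right_comm, hw]
      exact not_exists_rat_sq_mul_prime_eq_sq hw0 hprime
  · calc c / (2 * d.natAbs) * x / Real.log x
        = c * (x / (2 * d.natAbs) / Real.log x) := by ring
      _ ≤ c * ((x / d.natAbs : ℕ) / Real.log (x / d.natAbs : ℕ)) :=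
          mul_le_mul_of_nonneg_left (div_log_le_div_log_natDiv hk (by nlinarith)) hc.le
      _ ≤ S.card := by rwa [← mul_div_assoc]

end LocalSolubility

theorem exists_rpow_two_thirds_le_mul_div_log {ε : ℝ} (hε : 0 < ε) :
    ∃ x₀ : ℕ, ∀ x : ℕ, x₀ ≤ x → (x : ℝ) ^ (2 / 3 : ℝ) ≤ ε * x / Real.log x := by
  have hlittle := ((isLittleO_log_rpow_atTop (r := 1 / 3) (by norm_num)).bound hε)
  obtain ⟨x₀, hx₀⟩ := Filter.eventually_atTop.1 (tendsto_natCast_atTop_atTop.eventually hlittle)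
  refine ⟨max x₀ 2, fun x hx => ?_⟩
  have hx1 : 1 < (x : ℝ) := by exact_mod_cast (by lia : 1 < x)
  have hlog : 0 < Real.log x := Real.log_pos hx1
  have hbound := hx₀ x ((le_max_left _ _).trans hx)
  rw [Real.norm_of_nonneg hlog.le, Real.norm_of_nonneg (by positivity)] at hbound
  rw [le_div_iff₀ hlog]
  calc (x : ℝ) ^ (2 / 3 : ℝ) * Real.log x
      ≤ (x : ℝ) ^ (2 / 3 : ℝ) * (ε * (x : ℝ) ^ (1 / 3 : ℝ)) := by gcongr
    _ = ε * ((x : ℝ) ^ (2 / 3 : ℝ) * (x : ℝ) ^ (1 / 3 : ℝ)) := by ring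
    _ = ε * x := by
        rw [← Real.rpow_add (by linarith)]
        norm_num

theorem card_sub_card_filter_le_ncard {α β : Type*} {f : α → β} (hf : f.Injective)
    {S : Finset α} {r : α → Prop} [DecidablePred r] {T : Set β} (hT : T.Finite)
    (h : ∀ a ∈ S, ¬ r a → f a ∈ T) : (S.card : ℝ) - (S.filter r).card ≤ T.ncard := by
  classical
  rw [sub_le_iff_le_add', ← Finset.card_filter_add_card_filter_not (s := S) r, Nat.cast_add,
    add_le_add_iff_left, Nat.cast_le, ← Finset.card_image_of_injective _ hf,
    ← Set.ncard_coe_finset]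
  refine Set.ncard_le_ncard (fun b hb => ?_) hT
  obtain ⟨a, ha, rfl⟩ := Finset.mem_image.1 (Finset.mem_coe.1 hb)
  exact h a (Finset.mem_filter.1 ha).1 (Finset.mem_filter.1 ha).2

end HasseTwist

theorem stmt4 (habc : ABCConjecture) (P : Polynomial ℤ)
    (hsep : (P.map (Int.castRingHom ℚ)).Separable)
    (hdeg : 8 ≤ P.natDegree) (heven : Even P.natDegree)
    (hnoroot : ∀ t : ℚ, Polynomial.aeval t P ≠ 0) :
    ∃ C : ℝ, 0 < C ∧ ∃ x₀ : ℕ, ∀ x : ℕ, x₀ ≤ x →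
      C * x / Real.log x ≤
        ({d : ℤ | SqfInt d ∧ |d| ≤ (x : ℤ) ∧
          (∀ (p : ℕ) [Fact p.Prime],
            (∃ t y : ℚ_[p], y ^ 2 = (d : ℚ_[p]) * Polynomial.aeval t P) ∨
            (∃ y : ℚ_[p], ((d * P.leadingCoeff : ℤ) : ℚ_[p]) = y ^ 2)) ∧
          ((∃ t y : ℝ, y ^ 2 = (d : ℝ) * Polynomial.aeval t P) ∨
            0 < d * P.leadingCoeff) ∧
          (¬ ∃ t y : ℚ, y ^ 2 = (d : ℚ) * Polynomial.aeval t P) ∧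
          (¬ ∃ y : ℚ, ((d * P.leadingCoeff : ℤ) : ℚ) = y ^ 2)}.ncard : ℝ) := by
  obtain ⟨d, hd, c, hc, x₁, htwists⟩ :=
    HasseTwist.exists_finset_everywhereLocallySoluble hsep (by lia)
  obtain ⟨K, hK, hrat⟩ :=
    HasseTwist.exists_card_le_mul_rpow_of_rational_points habc hsep hdeg heven hnoroot hd
  obtain ⟨x₂, hsmall⟩ := HasseTwist.exists_rpow_two_thirds_le_mul_div_log
    (ε := c / (2 * K)) (by positivity)
  refine ⟨c / 2, by positivity, max x₁ x₂, fun x hx => ?_⟩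
  obtain ⟨S, hS, hcard⟩ := htwists x ((le_max_left _ _).trans hx)
  classical
  let HasRationalPoint (ℓ : ℕ) : Prop := ∃ t y : ℚ, y ^ 2 = ((d * ℓ : ℤ) : ℚ) * aeval t P
  have hfew := hrat x (S.filter HasRationalPoint) fun ℓ hℓ =>
    have ⟨hmem, hpt⟩ := Finset.mem_filter.1 hℓ
    ⟨(hS ℓ hmem).1, (hS ℓ hmem).2.1, hpt⟩
  have hhalf : K * (x : ℝ) ^ (2 / 3 : ℝ) ≤ c * x / Real.log x - c / 2 * x / Real.log x :=
    (mul_le_mul_of_nonneg_left (hsmall x ((le_max_right _ _).trans hx)) hK.le).trans_eq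
      (by field_simp; ring)
  refine le_trans (by linarith) (HasseTwist.card_sub_card_filter_le_ncard
    (f := fun ℓ : ℕ => d * (ℓ : ℤ)) (fun _ _ h => Nat.cast_injective (mul_left_cancel₀ hd h))
    (S := S) (r := HasRationalPoint)
    ((Set.finite_Icc (-(x : ℤ)) x).subset fun _ h => abs_le.1 h.2.1) fun ℓ hℓ hnot => ?_)
  obtain ⟨_, habs, hsqf, hlocal, hinfty⟩ := hS ℓ hℓ
  exact ⟨hsqf, habs, hlocal.1, hlocal.2, hnot, hinfty⟩
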